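/- arXiv:1708.01113 — 15 statements merged into one kernel-verified Lean document; each statement's English description precedes it below -/
import Mathlib

section
/- Let N be a set of n k-dimensional subspaces of F_q^v that pairwise intersect trivially and whose members together span F_q^v, and for each integer i let a_i denote the number of hyperplanes H of F_q^v that contain exactly i elements of N. Then: (1) the sum over i of a_i equals (q^v−1)/(q−1); (2) the sum over i of i·a_i equals n·(q^{v−k}−1)/(q−1); (3) the sum over i of i(i−1)·a_i equals n(n−1)·(q^{v−2k}−1)/(q−1). -/
open Classical in
theorem vsp_hyper_count {F : Type} [Field F] [Fintype F] (v : ℕ) (hv : 1 ≤ v)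
    (W : Submodule F (Fin v → F)) (d : ℕ) (hd : Module.finrank F W = d) :
    ((Finset.univ : Finset (Submodule F (Fin v → F))).filter
      (fun H : Submodule F (Fin v → F) => Module.finrank F H = v - 1 ∧ W ≤ H)).card
      = (Fintype.card F ^ (v - d) - 1) / (Fintype.card F - 1) := by
  have hq : 1 < Fintype.card F := Fintype.one_lt_card
  have : Fintype (Module.Dual F (Fin v → F)) :=
    @Fintype.ofFinite _ (Module.finite_of_finite F)
  have key : ∀ (X : Submodule F (Fin v → F)),
      ((Finset.univ : Finset (Module.Dual F (Fin v → F))).filter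
        (fun f => f ≠ 0 ∧ X ≤ LinearMap.ker f)).card
        = Fintype.card F ^ (v - Module.finrank F X) - 1 := by
    intro X
    have h1 : (Finset.univ : Finset (Module.Dual F (Fin v → F))).filter
        (fun f => f ≠ 0 ∧ X ≤ LinearMap.ker f)
        = ((Finset.univ : Finset (Module.Dual F (Fin v → F))).filter
          (fun f => f ∈ X.dualAnnihilator)).erase 0 := by
      ext f
      simp only [Finset.mem_filter, Finset.mem_univ, true_and, Finset.mem_erase,
        Submodule.mem_dualAnnihilator]
      rfl
    have h2 : ((Finset.univ : Finset (Module.Dual F (Fin v → F))).filter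
          (fun f => f ∈ X.dualAnnihilator)).card
        = Fintype.card F ^ (v - Module.finrank F X) := by
      rw [← Fintype.card_subtype]
      have h3 := Module.card_eq_pow_finrank (K := F) (V := X.dualAnnihilator)
      have h4 := Subspace.finrank_add_finrank_dualAnnihilator_eq X
      rw [Module.finrank_fin_fun] at h4
      rw [show v - Module.finrank F X = Module.finrank F X.dualAnnihilator by omega, ← h3]
    rw [h1, Finset.card_erase_of_mem (by simp), h2]
  have hcount := Finset.card_eq_sum_card_fiberwise
    (s := (Finset.univ : Finset (Module.Dual F (Fin v → F))).filter
        (fun f => f ≠ 0 ∧ W ≤ LinearMap.ker f))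
    (t := (Finset.univ : Finset (Submodule F (Fin v → F))).filter
      (fun H : Submodule F (Fin v → F) => Module.finrank F H = v - 1 ∧ W ≤ H))
    (f := fun f => LinearMap.ker f)
  have hker : ∀ f : Module.Dual F (Fin v → F), f ≠ 0 →
      Module.finrank F (LinearMap.ker f) = v - 1 := by
    intro f hf
    have := Module.Dual.finrank_ker_add_one_of_ne_zero hf
    rw [Module.finrank_fin_fun] at this
    omega
  have hc := hcount (by
    intro f hf
    simp only [Finset.coe_filter, Finset.mem_univ, true_and, Set.mem_ofPred_eq] at hf ⊢
    exact ⟨hker f hf.1, hf.2⟩)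
  rw [key W, Finset.sum_const_nat (m := Fintype.card F - 1)] at hc
  · rw [hd] at hc
    rw [hc, Nat.mul_div_cancel _ (by omega)]
  · intro H hH
    simp only [Finset.mem_filter, Finset.mem_univ, true_and] at hH
    have h5 := key H
    rw [hH.1, show v - (v - 1) = 1 by omega, pow_one] at h5
    rw [← h5]
    congr 1
    ext f
    simp only [Finset.mem_filter, Finset.mem_univ, true_and]
    constructor
    · rintro ⟨⟨h0, _⟩, rfl⟩
      exact ⟨h0, le_rfl⟩
    · rintro ⟨h0, h1⟩
      exact ⟨⟨h0, hH.2.trans h1⟩,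
        (Submodule.eq_of_le_of_finrank_eq h1 (by rw [hH.1, hker f h0])).symm⟩

/-- Standard double counting identities for a spanning set of `n` pairwise disjoint
`k`-subspaces of `F_q^v` and its incidences with hyperplanes. -/
theorem vector_space_partition_hyperplane_counts
    {F : Type} [Field F] [Fintype F] (q v k n : ℕ)
    (hq : q = Fintype.card F) (hk : 1 ≤ k) (hkv : k ≤ v)
    (N : Finset (Submodule F (Fin v → F))) (hn : N.card = n)
    (hdim : ∀ U ∈ N, Module.finrank F ↥U = k)
    (hdisj : ∀ U ∈ N, ∀ W ∈ N, U ≠ W → U ⊓ W = ⊥)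
    (hspan : sSup (↑N : Set (Submodule F (Fin v → F))) = ⊤)
    (a : ℕ → ℕ)
    (ha : ∀ i, a i = Set.ncard {H : Submodule F (Fin v → F) |
      Module.finrank F ↥H = v - 1 ∧
      Set.ncard {U : Submodule F (Fin v → F) | U ∈ N ∧ U ≤ H} = i}) :
    (∑ i ∈ Finset.range n, a i) = (q ^ v - 1) / (q - 1) ∧
    (∑ i ∈ Finset.range n, i * a i) = n * ((q ^ (v - k) - 1) / (q - 1)) ∧
    (∑ i ∈ Finset.range n, i * (i - 1) * a i) =
      n * (n - 1) * ((q ^ (v - 2 * k) - 1) / (q - 1)) := by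
  classical
  have hv : 1 ≤ v := hk.trans hkv
  set A : Finset (Submodule F (Fin v → F)) :=
    Finset.univ.filter (fun H => Module.finrank F H = v - 1) with hA
  set c : Submodule F (Fin v → F) → ℕ := fun H => (N.filter (fun U => U ≤ H)).card with hcdef
  have ha' : ∀ i, a i = (A.filter (fun H => c H = i)).card := by
    intro i
    rw [ha i, ← Set.ncard_coe_finset]
    congr 1
    ext H
    have : {U : Submodule F (Fin v → F) | U ∈ N ∧ U ≤ H} = ↑(N.filter (fun U => U ≤ H)) := by
      ext U; simp
    rw [Set.mem_ofPred_eq, this, Set.ncard_coe_finset]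
    simp [hA, hcdef]
  have hlt : ∀ H ∈ A, c H ∈ Finset.range n := by
    intro H hH
    rw [Finset.mem_range, ← hn]
    refine Finset.card_lt_card ?_
    rw [Finset.filter_ssubset]
    by_contra hcon
    push Not at hcon
    have h1 : (⊤ : Submodule F (Fin v → F)) ≤ H := by
      rw [← hspan]
      exact sSup_le (fun U hU => hcon U hU)
    have h2 : H = ⊤ := top_le_iff.mp h1
    have h3 : Module.finrank F H = v - 1 := by simpa [hA] using hH
    rw [h2, finrank_top, Module.finrank_fin_fun] at h3
    omega
  have hsum : ∀ g : ℕ → ℕ, ∑ i ∈ Finset.range n, g i * a i = ∑ H ∈ A, g (c H) := by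
    intro g
    rw [← Finset.sum_fiberwise_of_maps_to hlt]
    refine Finset.sum_congr rfl fun i _ => ?_
    rw [ha' i, mul_comm, ← smul_eq_mul, ← Finset.sum_const]
    refine Finset.sum_congr rfl fun H hH => ?_
    rw [(Finset.mem_filter.mp hH).2]
  have hcnt : ∀ (W : Submodule F (Fin v → F)) (d : ℕ), Module.finrank F W = d →
      (A.filter (fun H => W ≤ H)).card = (q ^ (v - d) - 1) / (q - 1) := by
    intro W d hd
    rw [hq, ← vsp_hyper_count v hv W d hd, hA, Finset.filter_filter]
  refine ⟨?_, ?_, ?_⟩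
  · have h := hsum (fun _ => 1)
    simp only [one_mul] at h
    rw [h, ← Finset.card_eq_sum_ones]
    have := hcnt ⊥ 0 (finrank_bot _ _)
    simpa using this
  · have h := hsum (fun i => i)
    rw [h]
    have h2 := Finset.sum_card_bipartiteAbove_eq_sum_card_bipartiteBelow
      (s := N) (t := A) (fun U H => U ≤ H)
    simp only [Finset.bipartiteAbove, Finset.bipartiteBelow] at h2
    rw [← h2, Finset.sum_const_nat (m := (q ^ (v - k) - 1) / (q - 1)), hn]
    intro U hU
    exact hcnt U k (hdim U hU)
  · have h := hsum (fun i => i * (i - 1))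
    rw [h]
    have h2 := Finset.sum_card_bipartiteAbove_eq_sum_card_bipartiteBelow
      (s := N.offDiag) (t := A) (fun P H => P.1 ⊔ P.2 ≤ H)
    simp only [Finset.bipartiteAbove, Finset.bipartiteBelow] at h2
    have h3 : ∀ H ∈ A, c H * (c H - 1) = (N.offDiag.filter (fun P => P.1 ⊔ P.2 ≤ H)).card := by
      intro H _
      rw [Nat.mul_sub_one, hcdef, ← Finset.offDiag_card]
      congr 1
      ext P
      simp only [Finset.mem_offDiag, Finset.mem_filter, sup_le_iff]
      tauto
    rw [Finset.sum_congr rfl h3, ← h2,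
      Finset.sum_const_nat (m := (q ^ (v - 2 * k) - 1) / (q - 1)), Finset.offDiag_card, hn,
      Nat.mul_sub_one]
    rintro ⟨U, W⟩ hP
    rw [Finset.mem_offDiag] at hP
    obtain ⟨hU, hW, hne⟩ := hP
    refine hcnt (U ⊔ W) (2 * k) ?_
    have h4 := Submodule.finrank_sup_add_finrank_inf_eq U W
    rw [hdisj U hU W hW hne, finrank_bot, hdim U hU, hdim W hW] at h4
    omega
end

section
/- Let N be a set of n k-dimensional subspaces of F_q^v that pairwise intersect trivially and whose members together span F_q^v, let a_i denote the number of hyperplanes H of F_q^v containing exactly i elements of N, and for each integer i with 2k ≤ i ≤ 3k let b_i denote the number of ordered triples (B_1,B_2,B_3) of pairwise distinct elements of N whose span ⟨B_1,B_2,B_3⟩ has dimension i. Then: (1) the sum over i of i(i−1)(i−2)·a_i equals the sum over i from 2k to 3k of b_i·(q^{v−i}−1)/(q−1); and (2) the sum over i from 2k to 3k of b_i equals n(n−1)(n−2). -/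
open Classical in
theorem aux_triples {α : Type*} (S : Finset α) :
    ((S ×ˢ S ×ˢ S).filter (fun t => t.1 ≠ t.2.1 ∧ t.1 ≠ t.2.2 ∧ t.2.1 ≠ t.2.2)).card
      = S.card * (S.card - 1) * (S.card - 2) := by
  rw [Finset.card_filter, Finset.sum_product]
  simp_rw [Finset.sum_product]
  have h : ∀ x ∈ S, (∑ y ∈ S, ∑ z ∈ S, if (x ≠ y ∧ x ≠ z ∧ y ≠ z) then 1 else 0)
      = (S.card - 1) * (S.card - 2) := by
    intro x hx
    have h2 : ∀ y ∈ S, (∑ z ∈ S, if (x ≠ y ∧ x ≠ z ∧ y ≠ z) then 1 else 0)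
        = if y ∈ S.erase x then (S.card - 2) else 0 := by
      intro y hy
      rw [← Finset.card_filter]
      split_ifs with hxy
      · have hne := (Finset.mem_erase.mp hxy).1
        have : S.filter (fun z => x ≠ y ∧ x ≠ z ∧ y ≠ z) = (S.erase x).erase y := by
          ext z
          simp only [Finset.mem_filter, Finset.mem_erase]
          constructor
          · rintro ⟨a, b, c, d⟩
            exact ⟨d.symm, c.symm, a⟩
          · rintro ⟨a, b, c⟩
            exact ⟨c, hne.symm, b.symm, a.symm⟩
        rw [this, Finset.card_erase_of_mem hxy, Finset.card_erase_of_mem hx]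
        omega
      · rw [Finset.card_eq_zero, Finset.filter_eq_empty_iff]
        rintro z hz ⟨a, -⟩
        exact hxy (Finset.mem_erase.mpr ⟨a.symm, hy⟩)
    rw [Finset.sum_congr rfl h2, ← Finset.sum_filter, Finset.sum_const]
    have : S.filter (fun y => y ∈ S.erase x) = S.erase x := by
      ext y; simp
    rw [this, Finset.card_erase_of_mem hx, smul_eq_mul]
  rw [Finset.sum_congr rfl h, Finset.sum_const, smul_eq_mul, mul_assoc]

theorem aux_ann_card {F : Type} [Field F] [Fintype F] (v : ℕ) (W : Submodule F (Fin v → F)) :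
    Nat.card W.dualAnnihilator = Fintype.card F ^ (v - Module.finrank F W) := by
  have h := Subspace.finrank_add_finrank_dualAnnihilator_eq W
  rw [Module.finrank_fin_fun] at h
  rw [Module.natCard_eq_pow_finrank (K := F), Nat.card_eq_fintype_card]
  congr 1
  omega

open Classical in
theorem aux_hyper {F : Type} [Field F] [Fintype F] (v : ℕ) (hv : 1 ≤ v)
    [Fintype (Submodule F (Fin v → F))]
    (W : Submodule F (Fin v → F)) :
    (Finset.univ.filter (fun H : Submodule F (Fin v → F) =>
      Module.finrank F H = v - 1 ∧ W ≤ H)).card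
      = (Fintype.card F ^ (v - Module.finrank F W) - 1) / (Fintype.card F - 1) := by
  have hq : 1 < Fintype.card F := Fintype.one_lt_card
  symm
  apply Nat.div_eq_of_eq_mul_left (by omega)
  have : Finite (Module.Dual F (Fin v → F)) := Module.finite_of_finite F
  let _ := Fintype.ofFinite (Module.Dual F (Fin v → F))
  have key : ∀ U : Submodule F (Fin v → F),
      (Finset.univ.filter (fun f : Module.Dual F (Fin v → F) =>
        f ∈ U.dualAnnihilator ∧ f ≠ 0)).card
        = Fintype.card F ^ (v - Module.finrank F U) - 1 := by
    intro U
    have : (Finset.univ.filter (fun f : Module.Dual F (Fin v → F) =>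
        f ∈ U.dualAnnihilator ∧ f ≠ 0)) = (Finset.univ.filter
          (fun f : Module.Dual F (Fin v → F) => f ∈ U.dualAnnihilator)).erase 0 := by
      ext f; simp [and_comm]
    rw [this, Finset.card_erase_of_mem (by simp), ← aux_ann_card, Nat.card_eq_fintype_card,
      Fintype.card_subtype]
  have hker : ∀ f : Module.Dual F (Fin v → F), f ≠ 0 →
      Module.finrank F (LinearMap.ker f) = v - 1 := by
    intro f hf
    have := Module.Dual.finrank_ker_add_one_of_ne_zero hf
    rw [Module.finrank_fin_fun] at this
    omega
  have hann : ∀ (U : Submodule F (Fin v → F)) (f : Module.Dual F (Fin v → F)),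
      f ∈ U.dualAnnihilator ↔ U ≤ LinearMap.ker f := by
    intro U f
    rw [Submodule.mem_dualAnnihilator]
    rfl
  rw [← key W]
  rw [Finset.card_eq_sum_card_fiberwise (f := fun f => LinearMap.ker f)
    (t := Finset.univ.filter (fun H : Submodule F (Fin v → F) =>
      Module.finrank F H = v - 1 ∧ W ≤ H))]
  · rw [Finset.sum_const_nat (m := Fintype.card F - 1)]
    intro H hH
    simp only [Finset.mem_filter, Finset.mem_univ, true_and] at hH
    have h1 := key H
    rw [hH.1, show v - (v - 1) = 1 by omega, pow_one] at h1
    rw [← h1]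
    congr 1
    ext f
    simp only [Finset.mem_filter, Finset.mem_univ, true_and, hann]
    constructor
    · rintro ⟨⟨a, b⟩, rfl⟩
      exact ⟨le_rfl, b⟩
    · rintro ⟨a, b⟩
      have : H = LinearMap.ker f := Submodule.eq_of_le_of_finrank_eq a (by rw [hH.1, hker f b])
      exact ⟨⟨hH.2.trans a, b⟩, this.symm⟩
  · intro f hf
    simp only [Finset.coe_filter, Finset.mem_univ, true_and, Set.mem_ofPred_eq, hann] at hf ⊢
    exact ⟨hker f hf.2, hf.1⟩


/-- Double counting of tuples `(B₁,B₂,B₃,H)` for a spanning set of `n` pairwise disjoint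
`k`-subspaces of `F_q^v`, where `b i` counts ordered triples of pairwise distinct elements
whose span has dimension `i`. -/
theorem vector_space_partition_triple_counts
    {F : Type} [Field F] [Fintype F] (q v k n : ℕ)
    (hq : q = Fintype.card F) (hk : 1 ≤ k) (hkv : k ≤ v)
    (N : Finset (Submodule F (Fin v → F))) (hn : N.card = n)
    (hdim : ∀ U ∈ N, Module.finrank F ↥U = k)
    (hdisj : ∀ U ∈ N, ∀ W ∈ N, U ≠ W → U ⊓ W = ⊥)
    (hspan : sSup (↑N : Set (Submodule F (Fin v → F))) = ⊤)
    (a : ℕ → ℕ)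
    (ha : ∀ i, a i = Set.ncard {H : Submodule F (Fin v → F) |
      Module.finrank F ↥H = v - 1 ∧
      Set.ncard {U : Submodule F (Fin v → F) | U ∈ N ∧ U ≤ H} = i})
    (b : ℕ → ℕ)
    (hb : ∀ i, b i = Set.ncard {t : Submodule F (Fin v → F) × Submodule F (Fin v → F) ×
        Submodule F (Fin v → F) |
      t.1 ∈ N ∧ t.2.1 ∈ N ∧ t.2.2 ∈ N ∧
      t.1 ≠ t.2.1 ∧ t.1 ≠ t.2.2 ∧ t.2.1 ≠ t.2.2 ∧
      Module.finrank F ↥(t.1 ⊔ t.2.1 ⊔ t.2.2) = i}) :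
    (∑ i ∈ Finset.range n, i * (i - 1) * (i - 2) * a i) =
      (∑ i ∈ Finset.Icc (2 * k) (3 * k), b i * ((q ^ (v - i) - 1) / (q - 1))) ∧
    (∑ i ∈ Finset.Icc (2 * k) (3 * k), b i) = n * (n - 1) * (n - 2) := by
  classical
  have hv : 1 ≤ v := hk.trans hkv
  have : Finite (Submodule F (Fin v → F)) := inferInstance
  let _ := Fintype.ofFinite (Submodule F (Fin v → F))
  set T := (N ×ˢ N ×ˢ N).filter (fun t => t.1 ≠ t.2.1 ∧ t.1 ≠ t.2.2 ∧ t.2.1 ≠ t.2.2) with hT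
  let d : Submodule F (Fin v → F) × Submodule F (Fin v → F) × Submodule F (Fin v → F) → ℕ :=
    fun t => Module.finrank F ↥(t.1 ⊔ t.2.1 ⊔ t.2.2)
  have hb' : ∀ i, b i = (T.filter (fun t => d t = i)).card := by
    intro i
    rw [hb, ← Set.ncard_coe_finset]
    congr 1
    ext t
    simp only [hT, d, Finset.coe_filter, Finset.mem_filter, Finset.mem_product, Set.mem_ofPred_eq]
    tauto
  have hmaps : ∀ t ∈ T, d t ∈ Finset.Icc (2 * k) (3 * k) := by
    rintro ⟨x, y, z⟩ ht
    simp only [hT, Finset.mem_filter, Finset.mem_product] at ht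
    obtain ⟨⟨hx, hy, hz⟩, hxy, -, -⟩ := ht
    have h1 := Submodule.finrank_sup_add_finrank_inf_eq x y
    rw [hdisj x hx y hy hxy, finrank_bot, hdim x hx, hdim y hy] at h1
    have h2 := Submodule.finrank_sup_add_finrank_inf_eq (x ⊔ y) z
    rw [hdim z hz] at h2
    have h3 : Module.finrank F ↥(x ⊔ y) ≤ Module.finrank F ↥(x ⊔ y ⊔ z) :=
      Submodule.finrank_mono le_sup_left
    rw [Finset.mem_Icc]
    simp only [d]
    omega
  constructor
  · let HH := Finset.univ.filter (fun H : Submodule F (Fin v → F) => Module.finrank F H = v - 1)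
    let m : Submodule F (Fin v → F) → ℕ := fun H => (N.filter (fun U => U ≤ H)).card
    have ha' : ∀ i, a i = (HH.filter (fun H => m H = i)).card := by
      intro i
      rw [ha, ← Set.ncard_coe_finset]
      congr 1
      ext H
      have : Set.ncard {U : Submodule F (Fin v → F) | U ∈ N ∧ U ≤ H} = m H := by
        simp only [m]
        rw [← Set.ncard_coe_finset, Finset.coe_filter]
      simp only [HH, this, Finset.coe_filter, Finset.mem_filter, Finset.mem_univ, true_and,
        Set.mem_ofPred_eq]
    have hm : ∀ H ∈ HH, m H ∈ Finset.range n := by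
      intro H hH
      simp only [HH, Finset.mem_filter, Finset.mem_univ, true_and] at hH
      rw [Finset.mem_range, ← hn]
      apply Finset.card_lt_card
      rw [Finset.filter_ssubset]
      by_contra hcon
      push Not at hcon
      have : (⊤ : Submodule F (Fin v → F)) ≤ H := by
        rw [← hspan]
        exact sSup_le (fun U hU => hcon U hU)
      rw [top_le_iff] at this
      rw [this, finrank_top, Module.finrank_fin_fun] at hH
      omega
    have hL : (∑ i ∈ Finset.range n, i * (i - 1) * (i - 2) * a i)
        = ∑ H ∈ HH, m H * (m H - 1) * (m H - 2) := by
      rw [← Finset.sum_fiberwise_of_maps_to hm]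
      refine Finset.sum_congr rfl (fun i _ => ?_)
      rw [ha', mul_comm, ← smul_eq_mul, ← Finset.sum_const]
      refine Finset.sum_congr rfl (fun H hH => ?_)
      rw [(Finset.mem_filter.mp hH).2]
    have hR : (∑ i ∈ Finset.Icc (2 * k) (3 * k), b i * ((q ^ (v - i) - 1) / (q - 1)))
        = ∑ t ∈ T, (q ^ (v - d t) - 1) / (q - 1) := by
      rw [← Finset.sum_fiberwise_of_maps_to hmaps]
      refine Finset.sum_congr rfl (fun i _ => ?_)
      rw [hb', ← smul_eq_mul, ← Finset.sum_const]
      refine Finset.sum_congr rfl (fun H hH => ?_)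
      rw [(Finset.mem_filter.mp hH).2]
    rw [hL, hR]
    have e1 : ∀ H ∈ HH, m H * (m H - 1) * (m H - 2)
        = (T.filter (fun t => t.1 ⊔ t.2.1 ⊔ t.2.2 ≤ H)).card := by
      intro H _
      simp only [m]
      rw [← aux_triples]
      congr 1
      ext t
      simp only [hT, Finset.mem_filter, Finset.mem_product, sup_le_iff]
      tauto
    have e2 : ∀ t ∈ T, (q ^ (v - d t) - 1) / (q - 1)
        = (HH.filter (fun H => t.1 ⊔ t.2.1 ⊔ t.2.2 ≤ H)).card := by
      intro t _
      rw [hq, ← aux_hyper v hv, Finset.filter_filter]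
    rw [Finset.sum_congr rfl e1, Finset.sum_congr rfl e2]
    exact Finset.sum_card_bipartiteAbove_eq_sum_card_bipartiteBelow
      (fun (H : Submodule F (Fin v → F)) (t : Submodule F (Fin v → F) ×
        Submodule F (Fin v → F) × Submodule F (Fin v → F)) => t.1 ⊔ t.2.1 ⊔ t.2.2 ≤ H)
  · rw [Finset.sum_congr rfl (fun i _ => hb' i), ← Finset.card_eq_sum_card_fiberwise hmaps, ← hn,
      ← aux_triples, hT]
    congr
end

section
/- Let N be a set of k-dimensional subspaces of F_q^v that pairwise intersect trivially and whose members together span F_q^v, let a_i denote the number of hyperplanes of F_q^v containing exactly i elements of N, and suppose there is a positive integer r such that a_i = 0 for all i ≠ r, and that k < v. Then there exists an integer s ≥ 2 with v = s·k, the set N partitions F_q^v (i.e., every nonzero vector of F_q^v lies in exactly one element of N, so N is a k-spread), and r = (q^{v−k}−1)/(q^k−1). -/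
lemma aux_annih_card {F : Type} [Field F] [Fintype F] (q v : ℕ)
    (hq : q = Fintype.card F) (W : Submodule F (Fin v → F)) :
    Nat.card W.dualAnnihilator = q ^ (v - Module.finrank F W) := by
  rw [Module.natCard_eq_pow_finrank (K := F), Nat.card_eq_fintype_card, ← hq]
  congr 1
  have h := Subspace.finrank_add_finrank_dualAnnihilator_eq W
  simp only [Module.finrank_fin_fun] at h
  omega

open Classical in
lemma aux_count {F : Type} [Field F] [Fintype F] (q v r : ℕ)
    (hq : q = Fintype.card F)
    (N : Finset (Submodule F (Fin v → F)))
    (h : ∀ φ : Module.Dual F (Fin v → F), φ ≠ 0 →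
      (N.filter (fun U => U ≤ LinearMap.ker φ)).card = r)
    (W : Submodule F (Fin v → F)) :
    N.card + r * (q ^ (v - Module.finrank F W) - 1)
      = ∑ U ∈ N, q ^ (v - Module.finrank F ↥(U ⊔ W)) := by
  have : Finite (Module.Dual F (Fin v → F)) := Module.finite_of_finite F
  let _ : Fintype (Module.Dual F (Fin v → F)) := Fintype.ofFinite _
  have hc : ∀ W : Submodule F (Fin v → F),
      (Finset.univ.filter (fun φ : Module.Dual F (Fin v → F) => φ ∈ W.dualAnnihilator)).card
        = q ^ (v - Module.finrank F W) := by
    intro W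
    rw [← aux_annih_card q v hq W, ← Fintype.card_subtype, ← Nat.card_eq_fintype_card]
  have e : ∀ (U : Submodule F (Fin v → F)) (φ : Module.Dual F (Fin v → F)),
      U ≤ LinearMap.ker φ ↔ φ ∈ U.dualAnnihilator := by
    intro U φ
    rw [Submodule.mem_dualAnnihilator]
    rfl
  set S := Finset.univ.filter (fun φ : Module.Dual F (Fin v → F) => φ ∈ W.dualAnnihilator) with hS
  have h0 : (0 : Module.Dual F (Fin v → F)) ∈ S := by simp [hS]
  have key : ∑ φ ∈ S, (N.filter (fun U => U ≤ LinearMap.ker φ)).card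
      = ∑ U ∈ N, (S.filter (fun φ => U ≤ LinearMap.ker φ)).card :=
    Finset.sum_card_bipartiteAbove_eq_sum_card_bipartiteBelow
      (fun (φ : Module.Dual F (Fin v → F)) U => U ≤ LinearMap.ker φ)
  have hL : ∑ φ ∈ S, (N.filter (fun U => U ≤ LinearMap.ker φ)).card
      = N.card + r * (q ^ (v - Module.finrank F W) - 1) := by
    rw [← Finset.add_sum_erase S _ h0]
    congr 1
    · simp
    · rw [Finset.sum_congr rfl (fun φ hφ => h φ (Finset.ne_of_mem_erase hφ))]
      rw [Finset.sum_const, Finset.card_erase_of_mem h0, hc W, smul_eq_mul, mul_comm]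
  rw [← hL, key]
  refine Finset.sum_congr rfl fun U _ => ?_
  rw [← hc, hS, Finset.filter_filter]
  congr 1
  ext φ
  simp only [Finset.mem_filter, Finset.mem_univ, true_and]
  rw [Submodule.dualAnnihilator_sup_eq, Submodule.mem_inf, e, and_comm]

/-- If every hyperplane of `F_q^v` contains exactly `r > 0` elements of a spanning set `N`
of pairwise disjoint `k`-subspaces (with `k < v`), then `v = s·k` for some `s ≥ 2`,
`N` is a `k`-spread of `F_q^v`, and `r = (q^{v-k}-1)/(q^k-1)`. -/
theorem one_hyperplane_type_implies_spread
    {F : Type} [Field F] [Fintype F] (q v k r : ℕ)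
    (hq : q = Fintype.card F) (hk : 1 ≤ k) (hkv : k < v) (hr : 0 < r)
    (N : Finset (Submodule F (Fin v → F)))
    (hdim : ∀ U ∈ N, Module.finrank F ↥U = k)
    (hdisj : ∀ U ∈ N, ∀ W ∈ N, U ≠ W → U ⊓ W = ⊥)
    (hspan : sSup (↑N : Set (Submodule F (Fin v → F))) = ⊤)
    (a : ℕ → ℕ)
    (ha : ∀ i, a i = Set.ncard {H : Submodule F (Fin v → F) |
      Module.finrank F ↥H = v - 1 ∧
      Set.ncard {U : Submodule F (Fin v → F) | U ∈ N ∧ U ≤ H} = i})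
    (ha0 : ∀ i, i ≠ r → a i = 0) :
    ∃ s : ℕ, 2 ≤ s ∧ v = s * k ∧
      (∀ x : Fin v → F, x ≠ 0 →
        ∃! U : Submodule F (Fin v → F), U ∈ N ∧ x ∈ U) ∧
      r = (q ^ (v - k) - 1) / (q ^ k - 1) := by
  classical
  have hq2 : 2 ≤ q := by rw [hq]; exact Fintype.one_lt_card
  have hN : N.Nonempty := by
    rw [Finset.nonempty_iff_ne_empty]
    rintro rfl
    rw [Finset.coe_empty, sSup_empty] at hspan
    have h1 : Module.finrank F (⊥ : Submodule F (Fin v → F))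
        = Module.finrank F (⊤ : Submodule F (Fin v → F)) := by rw [hspan]
    rw [finrank_bot, finrank_top, Module.finrank_fin_fun] at h1
    omega
  -- every hyperplane has exactly `r` members
  have h : ∀ φ : Module.Dual F (Fin v → F), φ ≠ 0 →
      (N.filter (fun U => U ≤ LinearMap.ker φ)).card = r := by
    intro φ hφ
    by_contra hne
    have h1 := ha0 _ hne
    rw [ha, Set.ncard_eq_zero (Set.toFinite _)] at h1
    have h2 : LinearMap.ker φ ∈ (∅ : Set (Submodule F (Fin v → F))) := by
      rw [← h1]
      refine ⟨?_, ?_⟩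
      · have := Module.Dual.finrank_ker_add_one_of_ne_zero hφ
        rw [Module.finrank_fin_fun] at this
        omega
      · rw [← Set.ncard_coe_finset]
        congr 1
        ext U
        simp
    exact h2
  have hcount := aux_count q v r hq N h
  set n := N.card with hn
  have hnpos : 0 < n := Finset.card_pos.mpr hN
  have h0 := hcount ⊥
  simp only [finrank_bot, Nat.sub_zero] at h0
  rw [Finset.sum_congr rfl (fun U hU => by rw [sup_bot_eq, hdim U hU]), Finset.sum_const, smul_eq_mul,
    ← hn] at h0
  -- weights
  have hw : ∀ x : Fin v → F, x ≠ 0 →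
      n + r * (q ^ (v - 1) - 1) = (N.filter (fun U => x ∈ U)).card * (q ^ (v - k) - q ^ (v - k - 1))
        + n * q ^ (v - k - 1) := by
    intro x hx
    have h1 := hcount (Submodule.span F {x})
    rw [finrank_span_singleton hx] at h1
    rw [h1]
    have hle : q ^ (v - k - 1) ≤ q ^ (v - k) := Nat.pow_le_pow_right (by omega) (by omega)
    have : ∀ U ∈ N, q ^ (v - Module.finrank F ↥(U ⊔ Submodule.span F {x}))
        = (if x ∈ U then (q ^ (v - k) - q ^ (v - k - 1)) else 0) + q ^ (v - k - 1) := by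
      intro U hU
      split_ifs with hxU
      · have : U ⊔ Submodule.span F {x} = U := by
          rw [sup_eq_left, Submodule.span_singleton_le_iff_mem]; exact hxU
        rw [this, hdim U hU]
        omega
      · have h2 := Submodule.finrank_sup_add_finrank_inf_eq U (Submodule.span F {x})
        have h3 : U ⊓ Submodule.span F {x} = ⊥ := by
          rw [← disjoint_iff]
          exact (Submodule.disjoint_span_singleton_of_notMem hxU)
        rw [h3, finrank_bot, hdim U hU, finrank_span_singleton hx] at h2
        rw [zero_add]
        congr 1
        omega
    rw [Finset.sum_congr rfl this, Finset.sum_add_distrib, Finset.sum_const, smul_eq_mul,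
      ← Finset.sum_filter, Finset.sum_const, smul_eq_mul]
  have hlt : 0 < q ^ (v - k) - q ^ (v - k - 1) := by
    have : q ^ (v - k - 1) < q ^ (v - k) := Nat.pow_lt_pow_right (by omega) (by omega)
    omega
  have huniq : ∀ x : Fin v → F, x ≠ 0 → ∀ U ∈ N, ∀ W ∈ N, x ∈ U → x ∈ W → U = W := by
    intro x hx U hU W hW hxU hxW
    by_contra hne
    have h1 := hdisj U hU W hW hne
    have : x ∈ U ⊓ W := ⟨hxU, hxW⟩
    rw [h1] at this
    exact hx (by simpa using this)
  have hone : ∀ x : Fin v → F, x ≠ 0 → (N.filter (fun U => x ∈ U)).card = 1 := by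
    obtain ⟨U, hU⟩ := hN
    have hUne : U ≠ ⊥ := by
      rintro rfl
      have := hdim _ hU
      simp at this
      omega
    obtain ⟨y, hyU, hy⟩ := Submodule.exists_mem_ne_zero_of_ne_bot hUne
    intro x hx
    have h1 := hw x hx
    rw [hw y hy] at h1
    have h2 := Nat.eq_of_mul_eq_mul_right hlt (Nat.add_right_cancel h1)
    rw [← h2, Finset.card_eq_one]
    refine ⟨U, ?_⟩
    ext W
    simp only [Finset.mem_filter, Finset.mem_singleton]
    constructor
    · rintro ⟨hW, hyW⟩
      exact huniq y hy W hW U hU hyW hyU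
    · rintro rfl
      exact ⟨hU, hyU⟩
  have hspread : n * (q ^ k - 1) = q ^ v - 1 := by
    have key : ∑ x ∈ (Finset.univ.erase (0 : Fin v → F)), (N.filter (fun U => x ∈ U)).card
        = ∑ U ∈ N, ((Finset.univ.erase (0 : Fin v → F)).filter (fun x => x ∈ U)).card :=
      Finset.sum_card_bipartiteAbove_eq_sum_card_bipartiteBelow
        (fun (x : Fin v → F) U => x ∈ U)
    rw [Finset.sum_congr rfl (fun x hx => hone x (Finset.ne_of_mem_erase hx)),
      Finset.sum_const, smul_eq_mul, mul_one, Finset.card_erase_of_mem (Finset.mem_univ _),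
      Finset.card_univ] at key
    have h2 : ∀ U ∈ N, ((Finset.univ.erase (0 : Fin v → F)).filter (fun x => x ∈ U)).card
        = q ^ k - 1 := by
      intro U hU
      rw [Finset.filter_erase, Finset.card_erase_of_mem (by simp), ← Fintype.card_subtype,
        ← Nat.card_eq_fintype_card]
      congr 1
      have := Module.natCard_eq_pow_finrank (K := F) (V := U)
      rw [hdim U hU, Nat.card_eq_fintype_card (α := F), ← hq] at this
      exact this
    rw [Finset.sum_congr rfl h2, Finset.sum_const, smul_eq_mul, ← hn] at key
    rw [← key]
    simp [hq]
  have hqk : 0 < q ^ k - 1 := by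
    have : 1 < q ^ k := Nat.one_lt_pow (by omega) (by omega)
    omega
  have hdvd : k ∣ v := by
    have h1 : q ^ k - 1 ∣ q ^ v - 1 := ⟨n, by rw [← hspread, mul_comm]⟩
    have h2 := Nat.pow_sub_one_gcd_pow_sub_one q k v
    rw [Nat.gcd_eq_left h1] at h2
    have h3 : 1 ≤ q ^ k := Nat.one_le_pow _ _ (by omega)
    have h4 : 1 ≤ q ^ (k.gcd v) := Nat.one_le_pow _ _ (by omega)
    have h5 : q ^ k = q ^ (k.gcd v) := by omega
    have h6 := Nat.pow_right_injective hq2 h5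
    rw [h6]
    exact Nat.gcd_dvd_right k v
  obtain ⟨s, hs⟩ := hdvd
  refine ⟨s, ?_, by rw [hs, mul_comm], ?_, ?_⟩
  · by_contra hlt2
    have : s ≤ 1 := by omega
    have : k * s ≤ k * 1 := Nat.mul_le_mul_left k this
    omega
  · intro x hx
    have h1 := hone x hx
    rw [Finset.card_eq_one] at h1
    obtain ⟨U, hU⟩ := h1
    have hU' : U ∈ N.filter (fun U => x ∈ U) := by rw [hU]; simp
    rw [Finset.mem_filter] at hU'
    exact ⟨U, hU', fun W hW => huniq x hx W hW.1 U hU'.1 hW.2 hU'.2⟩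
  · rw [← hspread] at h0
    have h1 : n * q ^ (v - k) = n * (1 + r * (q ^ k - 1)) := by rw [← h0]; ring
    have h2 := Nat.eq_of_mul_eq_mul_left hnpos h1
    rw [h2, Nat.add_sub_cancel_left, Nat.mul_div_cancel _ hqk]
end

section
/- Let P be a vector space partition of F_q^v of type d_l^{u_l}⋯d_2^{u_2}d_1^{u_1}, where u_1, u_2 > 0 and d_l > ⋯ > d_2 > d_1 ≥ 1, and let N be the set of d_1-dimensional members of P. Then for every hyperplane H of F_q^v one has #N ≡ #{U ∈ N : U ⊆ H} (mod q^{d_2−d_1}). -/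
theorem aux_card {F W : Type*} [Field F] [Fintype F] [AddCommGroup W] [Module F W]
    [Module.Finite F W] (g : W →ₗ[F] F) (hg : g ≠ 0) :
    Nat.card {x : W // g x = 1} = Fintype.card F ^ (Module.finrank F W - 1) := by
  have hs : Function.Surjective g := LinearMap.surjective hg
  obtain ⟨w, hw⟩ := hs 1
  have e : {x : W // g x = 1} ≃ LinearMap.ker g :=
    { toFun := fun x => ⟨x.1 - w, by simp [hw, x.2]⟩
      invFun := fun x => ⟨x.1 + w, by simp [hw]⟩
      left_inv := fun x => by simp
      right_inv := fun x => by simp }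
  rw [Nat.card_congr e, Module.natCard_eq_pow_finrank (K := F), Nat.card_eq_fintype_card]
  congr 1
  have h1 := LinearMap.finrank_range_add_finrank_ker g
  have h2 : Module.finrank F (LinearMap.range g) = 1 := by
    rw [LinearMap.range_eq_top.2 hs]; simp
  omega

theorem aux_card_sub {F V : Type*} [Field F] [Fintype F] [AddCommGroup V] [Module F V]
    [Module.Finite F V] [Fintype V] [DecidableEq F] (f : V →ₗ[F] F) (U : Submodule F V)
    [DecidablePred (fun x => x ∈ U ∧ f x = 1)] (hU : ¬ U ≤ LinearMap.ker f) :
    (Finset.univ.filter (fun x => x ∈ U ∧ f x = 1)).card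
      = Fintype.card F ^ (Module.finrank F U - 1) := by
  have hg : f.domRestrict U ≠ 0 := by
    intro h
    apply hU
    intro x hx
    have := LinearMap.congr_fun h ⟨x, hx⟩
    simpa using this
  rw [← aux_card (f.domRestrict U) hg, ← Fintype.card_subtype, ← Nat.card_eq_fintype_card]
  exact Nat.card_congr
    { toFun := fun x => ⟨⟨x.1, x.2.1⟩, by simpa using x.2.2⟩
      invFun := fun x => ⟨x.1.1, x.1.2, by simpa using x.2⟩
      left_inv := fun x => rfl
      right_inv := fun x => rfl }

/-- For a vector space partition of type `d_l^{u_l}⋯d_2^{u_2}d_1^{u_1}` of `F_q^v`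
(with `u_1,u_2 > 0` and `d_l > ⋯ > d_2 > d_1 ≥ 1`), the number of `d_1`-dimensional
members contained in any hyperplane is congruent to their total number modulo
`q^{d_2-d_1}`.  Here `d 0 = d_1`, `d 1 = d_2`, etc. -/
theorem tail_divisible_mod_hyperplane
    {F : Type} [Field F] [Fintype F] (q v l : ℕ)
    (hq : q = Fintype.card F) (hl : 2 ≤ l)
    (d u : Fin l → ℕ) (hd : StrictMono d) (hd1 : 1 ≤ d ⟨0, by omega⟩)
    (hu1 : 0 < u ⟨0, by omega⟩) (hu2 : 0 < u ⟨1, by omega⟩)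
    (P : Finset (Submodule F (Fin v → F)))
    (hpart : ∀ x : Fin v → F, x ≠ 0 →
      ∃! U : Submodule F (Fin v → F), U ∈ P ∧ x ∈ U)
    (htype : ∀ U ∈ P, ∃ i : Fin l, Module.finrank F ↥U = d i)
    (hcount : ∀ i : Fin l, u i = Set.ncard
      {U : Submodule F (Fin v → F) | U ∈ P ∧ Module.finrank F ↥U = d i}) :
    ∀ H : Submodule F (Fin v → F), Module.finrank F ↥H = v - 1 →
      u ⟨0, by omega⟩ ≡
        Set.ncard {U : Submodule F (Fin v → F) |
          (U ∈ P ∧ Module.finrank F ↥U = d ⟨0, by omega⟩) ∧ U ≤ H}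
        [MOD q ^ (d ⟨1, by omega⟩ - d ⟨0, by omega⟩)] := by
  classical
  intro H hH
  have hq0 : 0 < q := by rw [hq]; exact Fintype.card_pos
  have h01 : d ⟨0, by omega⟩ < d ⟨1, by omega⟩ := hd (by simp)
  have hv : d ⟨1, by omega⟩ ≤ v := by
    rw [hcount] at hu2
    obtain ⟨U, hU, hU2⟩ := (Set.ncard_pos (Set.toFinite _)).1 hu2
    rw [← hU2]
    simpa using Submodule.finrank_le U
  have hlt : H < ⊤ := by
    rw [lt_top_iff_ne_top]
    rintro rfl
    simp at hH
    omega
  obtain ⟨f, hf, hHf⟩ := Submodule.exists_le_ker_of_lt_top H hlt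
  have hk : H = LinearMap.ker f := by
    apply Submodule.eq_of_le_of_finrank_eq hHf
    have h1 := LinearMap.finrank_range_add_finrank_ker f
    have h2 : Module.finrank F (LinearMap.range f) = 1 := by
      rw [LinearMap.range_eq_top.2 (LinearMap.surjective hf)]; simp
    simp at h1
    omega
  subst hk
  generalize hA : d ⟨0, by omega⟩ = a at *
  generalize hB : d ⟨1, by omega⟩ = b at *
  have hmin : ∀ U ∈ P, Module.finrank F U ≠ a → b ≤ Module.finrank F U := by
    intro U hU hne
    obtain ⟨i, hi⟩ := htype U hU
    rw [hi, ← hB]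
    apply hd.monotone
    rw [Fin.le_def]
    by_contra hc
    apply hne
    rw [hi, ← hA]
    congr 1
    ext
    simp at hc ⊢
    omega
  have htot : (Finset.univ.filter (fun x : Fin v → F => f x = 1)).card = q ^ (v - 1) := by
    rw [← Fintype.card_subtype, ← Nat.card_eq_fintype_card, aux_card f hf, hq]
    simp
  have hsum : (Finset.univ.filter (fun x : Fin v → F => f x = 1)).card
      = ∑ U ∈ P, (Finset.univ.filter (fun x : Fin v → F => x ∈ U ∧ f x = 1)).card := by
    rw [← Finset.card_biUnion]
    · congr 1
      ext x
      simp only [Finset.mem_filter, Finset.mem_univ, true_and, Finset.mem_biUnion]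
      constructor
      · intro hx
        obtain ⟨U, ⟨hU, hxU⟩, -⟩ := hpart x (by rintro rfl; simp at hx)
        exact ⟨U, hU, hxU, hx⟩
      · rintro ⟨U, -, -, hx⟩
        exact hx
    · intro U hU W hW hne
      rw [Function.onFun_apply, Finset.disjoint_left]
      intro x hx hx'
      simp only [Finset.mem_filter, Finset.mem_univ, true_and] at hx hx'
      exact hne ((hpart x (by rintro rfl; simp at hx)).unique ⟨hU, hx.1⟩ ⟨hW, hx'.1⟩)
  set N := P.filter (fun U : Submodule F (Fin v → F) => Module.finrank F U = a) with hN
  have e1 : u ⟨0, by omega⟩ = N.card := by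
    rw [hcount, hA, ← Set.ncard_coe_finset]
    congr 1
    ext U; simp [hN]
  have e2 : Set.ncard {U : Submodule F (Fin v → F) |
          (U ∈ P ∧ Module.finrank F ↥U = a) ∧ U ≤ LinearMap.ker f}
      = (N.filter (fun U : Submodule F (Fin v → F) => U ≤ LinearMap.ker f)).card := by
    rw [← Set.ncard_coe_finset]
    congr 1
    ext U; simp [hN]
  have e3 := Finset.card_filter_add_card_filter_not (s := N) (fun U : Submodule F (Fin v → F) => U ≤ LinearMap.ker f)
  have hz : ∀ U : Submodule F (Fin v → F), U ≤ LinearMap.ker f →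
      (Finset.univ.filter (fun x : Fin v → F => x ∈ U ∧ f x = 1)).card = 0 := by
    intro U hU
    rw [Finset.card_eq_zero, Finset.filter_eq_empty_iff]
    rintro x - ⟨hx, hx1⟩
    have := hU hx
    rw [LinearMap.mem_ker, hx1] at this
    exact one_ne_zero this
  rw [htot, ← Finset.sum_filter_add_sum_filter_not P (fun U : Submodule F (Fin v → F) => Module.finrank F U = a), ← hN,
    ← Finset.sum_filter_add_sum_filter_not N (fun U : Submodule F (Fin v → F) => U ≤ LinearMap.ker f),
    Finset.sum_eq_zero (s := N.filter (fun U : Submodule F (Fin v → F) => U ≤ LinearMap.ker f))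
      (fun U hU => hz U (Finset.mem_filter.1 hU).2), zero_add] at hsum
  have s1 : ∑ U ∈ N.filter (fun U : Submodule F (Fin v → F) => ¬ U ≤ LinearMap.ker f),
      (Finset.univ.filter (fun x : Fin v → F => x ∈ U ∧ f x = 1)).card
      = (N.filter (fun U : Submodule F (Fin v → F) => ¬ U ≤ LinearMap.ker f)).card * q ^ (a - 1) := by
    apply Finset.sum_const_nat
    intro U hU
    rw [Finset.mem_filter, hN, Finset.mem_filter] at hU
    rw [aux_card_sub f U hU.2, hU.1.2, hq]
  have s2 : q ^ (b - 1) ∣ ∑ U ∈ P.filter (fun U : Submodule F (Fin v → F) => ¬ Module.finrank F U = a),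
      (Finset.univ.filter (fun x : Fin v → F => x ∈ U ∧ f x = 1)).card := by
    apply Finset.dvd_sum
    intro U hU
    rw [Finset.mem_filter] at hU
    by_cases hUk : U ≤ LinearMap.ker f
    · rw [hz U hUk]; exact dvd_zero _
    · rw [aux_card_sub f U hUk, ← hq]
      have := hmin U hU.1 hU.2
      exact pow_dvd_pow q (by omega)
  rw [s1] at hsum
  have s3 : q ^ (b - 1) ∣ (N.filter (fun U : Submodule F (Fin v → F) => ¬ U ≤ LinearMap.ker f)).card * q ^ (a - 1) := by
    rw [← Nat.dvd_add_left s2, ← hsum]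
    exact pow_dvd_pow q (by omega)
  have s4 : q ^ (b - a) ∣ (N.filter (fun U : Submodule F (Fin v → F) => ¬ U ≤ LinearMap.ker f)).card := by
    rw [show b - 1 = (b - a) + (a - 1) by omega, pow_add] at s3
    exact Nat.dvd_of_mul_dvd_mul_right (pow_pos hq0 _) s3
  rw [e1, e2, ← e3]
  exact (Nat.modEq_zero_iff_dvd.2 s4).add_left _
end

section
/- Let N be a q^r-divisible set of n k-dimensional subspaces of F_q^v whose members together span F_q^v, and let m be any integer. Then, with u = q^k and Δ = q^r, the rational-number inequality τ(n, Δ, u, m) · q^{v−2k−2r} − m(m−1) ≥ 0 holds, where τ(n, Δ, u, m) := Δ²u²m(m−1) − n(2m−1)u(u−1)Δ + n(u−1)(n(u−1)+1). -/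
open scoped Classical in
theorem dqc_card {F : Type} [Field F] [Fintype F] {v : ℕ} [Fintype (Module.Dual F (Fin v → F))]
    (U : Submodule F (Fin v → F)) :
    ∑ f : Module.Dual F (Fin v → F), (if U ≤ LinearMap.ker f then (1 : ℚ) else 0)
      = (Fintype.card F : ℚ) ^ v / (Fintype.card F : ℚ) ^ (Module.finrank F U) := by
  have h0 : (Fintype.card F : ℚ) ≠ 0 := by exact_mod_cast Fintype.card_ne_zero
  have h1 := Subspace.finrank_add_finrank_dualAnnihilator_eq U
  rw [Module.finrank_fin_fun] at h1
  have h2 := Module.card_eq_pow_finrank (K := F) (V := U.dualAnnihilator)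
  rw [Finset.sum_boole, eq_div_iff (pow_ne_zero _ h0),
    show (Fintype.card F : ℚ) ^ v = (Fintype.card F : ℚ) ^ (Module.finrank F U +
      Module.finrank F U.dualAnnihilator) from by rw [h1], pow_add, mul_comm]
  congr 1
  rw [← Nat.cast_pow, ← h2, Fintype.card_subtype]
  congr 2
  ext f
  simp only [Finset.mem_filter, Finset.mem_univ, true_and, Submodule.mem_dualAnnihilator]
  rfl

/-- Quadratic criterion: for a spanning `q^r`-divisible set `N` of `n` `k`-subspaces of
`F_q^v` and any integer `m`, with `u = q^k`, `Δ = q^r`, one has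
`τ(n,Δ,u,m)·q^{v-2k-2r} - m(m-1) ≥ 0`, where
`τ(n,Δ,u,m) = Δ²u²m(m-1) - n(2m-1)u(u-1)Δ + n(u-1)(n(u-1)+1)`. -/
theorem divisible_set_quadratic_criterion
    {F : Type} [Field F] [Fintype F] (q v k r n : ℕ)
    (hq : q = Fintype.card F) (hk : 1 ≤ k) (hr : 1 ≤ r)
    (N : Finset (Submodule F (Fin v → F))) (hn : N.card = n)
    (hdim : ∀ U ∈ N, Module.finrank F ↥U = k)
    (hdisj : ∀ U ∈ N, ∀ W ∈ N, U ≠ W → U ⊓ W = ⊥)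
    (hspan : sSup (↑N : Set (Submodule F (Fin v → F))) = ⊤)
    (hdiv : ∀ H : Submodule F (Fin v → F), Module.finrank F ↥H = v - 1 →
      n ≡ Set.ncard {U : Submodule F (Fin v → F) | U ∈ N ∧ U ≤ H} [MOD q ^ r])
    (m : ℤ) :
    (((q : ℚ) ^ r) ^ 2 * ((q : ℚ) ^ k) ^ 2 * (m : ℚ) * ((m : ℚ) - 1)
        - (n : ℚ) * (2 * (m : ℚ) - 1) * (q : ℚ) ^ k * ((q : ℚ) ^ k - 1) * (q : ℚ) ^ r
        + (n : ℚ) * ((q : ℚ) ^ k - 1) * ((n : ℚ) * ((q : ℚ) ^ k - 1) + 1))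
      * (q : ℚ) ^ ((v : ℤ) - 2 * (k : ℤ) - 2 * (r : ℤ))
      - (m : ℚ) * ((m : ℚ) - 1) ≥ 0 := by
  classical
  let V := Fin v → F
  haveI : Finite (Module.Dual F V) := Module.finite_of_finite F
  haveI : Fintype (Module.Dual F V) := Fintype.ofFinite _
  have hqpos : (q : ℚ) ≠ 0 := by
    rw [hq]; exact_mod_cast Fintype.card_ne_zero
  let e : Submodule F V → Module.Dual F V → ℚ := fun U f => if U ≤ LinearMap.ker f then 1 else 0
  let c : Module.Dual F V → ℚ := fun f => ∑ U ∈ N, e U f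
  have S0 : ∑ f : Module.Dual F V, (1 : ℚ) = (q : ℚ) ^ v := by
    have := dqc_card (F := F) (v := v) ⊥
    simpa [hq] using this
  have S1 : ∑ f, c f = n * ((q : ℚ) ^ v / (q : ℚ) ^ k) := by
    simp only [c]
    rw [Finset.sum_comm, Finset.sum_congr rfl (g := fun _ => (q : ℚ) ^ v / (q : ℚ) ^ k)]
    · simp [hn]
    · intro U hU
      have := dqc_card U
      rw [hdim U hU, ← hq] at this
      exact this
  have S2 : ∑ f, c f ^ 2 = n * ((q : ℚ) ^ v / (q : ℚ) ^ k)
      + n * (n - 1) * ((q : ℚ) ^ v / (q : ℚ) ^ (2 * k)) := by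
    have hUW : ∀ U ∈ N, ∀ W ∈ N, ∑ f, e U f * e W f =
        (q : ℚ) ^ v / (q : ℚ) ^ (2 * k) +
          if U = W then ((q : ℚ) ^ v / (q : ℚ) ^ k - (q : ℚ) ^ v / (q : ℚ) ^ (2 * k)) else 0 := by
      intro U hU W hW
      have h := dqc_card (U ⊔ W)
      have h' : ∑ f, e U f * e W f = (q : ℚ) ^ v / (q : ℚ) ^ (Module.finrank F ↥(U ⊔ W)) := by
        rw [hq, ← h]
        refine Finset.sum_congr rfl fun f _ => ?_
        simp only [e, sup_le_iff]
        by_cases h1 : U ≤ LinearMap.ker f <;> by_cases h2 : W ≤ LinearMap.ker f <;> simp [h1, h2]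
      rw [h']
      split_ifs with hE
      · subst hE
        rw [sup_idem, hdim U hU]; ring
      · have h3 := Submodule.finrank_sup_add_finrank_inf_eq U W
        rw [hdisj U hU W hW hE, hdim U hU, hdim W hW, finrank_bot] at h3
        rw [show Module.finrank F ↥(U ⊔ W) = 2 * k by omega, add_zero]
    have : ∀ f, c f ^ 2 = ∑ U ∈ N, ∑ W ∈ N, e U f * e W f := by
      intro f
      simp only [c]
      rw [sq, Finset.sum_mul_sum]
    simp only [this]
    rw [Finset.sum_comm]
    have : ∀ U ∈ N, ∑ f, ∑ W ∈ N, e U f * e W f =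
        n * ((q : ℚ) ^ v / (q : ℚ) ^ (2 * k)) +
          ((q : ℚ) ^ v / (q : ℚ) ^ k - (q : ℚ) ^ v / (q : ℚ) ^ (2 * k)) := by
      intro U hU
      rw [Finset.sum_comm, Finset.sum_congr rfl (hUW U hU), Finset.sum_add_distrib,
        Finset.sum_ite_eq, if_pos hU]
      simp [hn]
    rw [Finset.sum_congr rfl this]
    simp only [Finset.sum_const, hn, nsmul_eq_mul]
    ring
  have hΔ : (q : ℚ) ^ r ≠ 0 := pow_ne_zero _ hqpos
  let j : Module.Dual F V → ℚ := fun f => (n - c f) / (q : ℚ) ^ r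
  have hc : ∀ f, c f = ((N.filter fun U => U ≤ LinearMap.ker f).card : ℚ) := by
    intro f
    simp only [c, e]
    rw [Finset.sum_boole]
  have hj : ∀ f, f ≠ 0 → 0 ≤ (j f - m) * (j f - m + 1) := by
    intro f hf
    have h1 : Module.finrank F (LinearMap.ker f) = v - 1 := by
      have := Module.Dual.finrank_ker_add_one_of_ne_zero hf
      rw [Module.finrank_fin_fun] at this
      omega
    have h2 := hdiv _ h1
    have h3 : {U : Submodule F (Fin v → F) | U ∈ N ∧ U ≤ LinearMap.ker f} =
        ↑(N.filter fun U => U ≤ LinearMap.ker f) := by ext; simp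
    rw [h3, Set.ncard_coe_finset] at h2
    obtain ⟨z, hz⟩ := (Nat.modEq_iff_dvd.mp h2.symm)
    have h4 : j f = z := by
      simp only [j]
      rw [hc, div_eq_iff hΔ, mul_comm]
      have := congrArg (Int.cast : ℤ → ℚ) hz
      push_cast at this
      exact this
    rw [h4]
    have h5 : 0 ≤ (z - m) * (z - m + 1) := by
      rcases le_or_gt 0 (z - m) with h | h
      · positivity
      · nlinarith
    exact_mod_cast h5
  have hj0 : j 0 = 0 := by
    have : c 0 = n := by rw [hc]; simp [hn]
    simp [j, this]
  have hsum : (m : ℚ) * (m - 1) ≤ ∑ f, (j f - m) * (j f - m + 1) := by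
    rw [← Finset.add_sum_erase _ _ (Finset.mem_univ (0 : Module.Dual F V)), hj0]
    have : 0 ≤ ∑ f ∈ Finset.univ.erase (0 : Module.Dual F V), (j f - m) * (j f - m + 1) :=
      Finset.sum_nonneg fun f hf => hj f (Finset.ne_of_mem_erase hf)
    linarith
  have hexp : ∑ f, (j f - m) * (j f - m + 1) =
      (1 / ((q : ℚ) ^ r) ^ 2) * ∑ f, c f ^ 2
      + (-2 * n / ((q : ℚ) ^ r) ^ 2 + (2 * m - 1) / (q : ℚ) ^ r) * ∑ f, c f
      + (n ^ 2 / ((q : ℚ) ^ r) ^ 2 - (2 * m - 1) * n / (q : ℚ) ^ r + m * (m - 1)) *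
        ∑ f : Module.Dual F V, (1 : ℚ) := by
    rw [Finset.mul_sum, Finset.mul_sum, Finset.mul_sum, ← Finset.sum_add_distrib,
      ← Finset.sum_add_distrib]
    refine Finset.sum_congr rfl fun f _ => ?_
    simp only [j]
    field_simp
    ring
  rw [hexp, S0, S1, S2] at hsum
  have hz : (q : ℚ) ^ ((v : ℤ) - 2 * (k : ℤ) - 2 * (r : ℤ)) =
      (q : ℚ) ^ v / ((q : ℚ) ^ k) ^ 2 / ((q : ℚ) ^ r) ^ 2 := by
    rw [zpow_sub₀ hqpos, zpow_sub₀ hqpos, zpow_natCast, ← pow_mul, ← pow_mul, mul_comm k 2,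
      mul_comm r 2]
    norm_cast
  rw [hz]
  rw [pow_mul' (q : ℚ) 2 k] at hsum
  have hu : (q : ℚ) ^ k ≠ 0 := pow_ne_zero _ hqpos
  generalize (q : ℚ) ^ k = u at *
  generalize (q : ℚ) ^ r = d at *
  generalize (q : ℚ) ^ v = w at *
  refine sub_nonneg.mpr (hsum.trans_eq ?_)
  field_simp
  ring
end

section
/- Let N be a q-divisible set of k-dimensional subspaces of F_q^v whose members together span F_q^v, and suppose #N = q^k + 1. Then v = 2k and N partitions F_q^v, i.e., every nonzero vector of F_q^{2k} is contained in exactly one element of N (so N is a k-spread of F_q^{2k}). -/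
open Classical in
lemma aux_card_ann {F : Type} [Field F] [Fintype F] (v d : ℕ)
    [Fintype (Module.Dual F (Fin v → F))]
    (U : Submodule F (Fin v → F)) (hU : Module.finrank F U = d) :
    (Finset.univ.filter (fun f : Module.Dual F (Fin v → F) => U ≤ LinearMap.ker f)).card
      = Fintype.card F ^ (v - d) := by
  have h1 : (Finset.univ.filter (fun f : Module.Dual F (Fin v → F) => U ≤ LinearMap.ker f)).card
      = Nat.card U.dualAnnihilator := by
    rw [← Fintype.card_subtype, ← Nat.card_eq_fintype_card]
    apply Nat.card_congr
    apply Equiv.subtypeEquivRight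
    intro f
    rw [Submodule.mem_dualAnnihilator]
    rfl
  have h2 := Subspace.finrank_add_finrank_dualAnnihilator_eq U
  rw [h1, Module.natCard_eq_pow_finrank (K := F), Nat.card_eq_fintype_card]
  congr 1
  simp at h2
  omega

/-- A spanning `q`-divisible set of `k`-subspaces of `F_q^v` of cardinality `q^k + 1`
satisfies `v = 2k` and partitions `F_q^{2k}`, i.e. it is a `k`-spread. -/
theorem q_divisible_card_qk_add_one_is_spread
    {F : Type} [Field F] [Fintype F] (q v k : ℕ)
    (hq : q = Fintype.card F) (hk : 1 ≤ k)
    (N : Finset (Submodule F (Fin v → F))) (hcard : N.card = q ^ k + 1)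
    (hdim : ∀ U ∈ N, Module.finrank F ↥U = k)
    (hdisj : ∀ U ∈ N, ∀ W ∈ N, U ≠ W → U ⊓ W = ⊥)
    (hspan : sSup (↑N : Set (Submodule F (Fin v → F))) = ⊤)
    (hdiv : ∀ H : Submodule F (Fin v → F), Module.finrank F ↥H = v - 1 →
      N.card ≡ Set.ncard {U : Submodule F (Fin v → F) | U ∈ N ∧ U ≤ H} [MOD q]) :
    v = 2 * k ∧
    ∀ x : Fin v → F, x ≠ 0 → ∃! U : Submodule F (Fin v → F), U ∈ N ∧ x ∈ U := by
  classical
  have hq2 : 2 ≤ q := by rw [hq]; exact Fintype.one_lt_card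
  haveI : Finite (Module.Dual F (Fin v → F)) := Module.finite_of_finite F
  letI : Fintype (Module.Dual F (Fin v → F)) := Fintype.ofFinite _
  have hsup : ∀ U ∈ N, ∀ W ∈ N, U ≠ W →
      Module.finrank F (U ⊔ W : Submodule F (Fin v → F)) = 2 * k := by
    intro U hU W hW hne
    have := Submodule.finrank_sup_add_finrank_inf_eq U W
    rw [hdisj U hU W hW hne, hdim U hU, hdim W hW, finrank_bot] at this
    omega
  have hv : 2 * k ≤ v := by
    have : 1 < N.card := by rw [hcard]; have := Nat.pow_pos (n := k) (show 0 < q by omega); omega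
    obtain ⟨U, hU, W, hW, hne⟩ := Finset.one_lt_card.1 this
    rw [← hsup U hU W hW hne]
    simpa using Submodule.finrank_le (U ⊔ W)
  obtain ⟨w, rfl⟩ := Nat.exists_eq_add_of_le hv
  set a : Module.Dual F (Fin (2 * k + w) → F) → ℤ :=
    fun f => ∑ U ∈ N, if U ≤ LinearMap.ker f then (1 : ℤ) else 0 with ha
  have ha' : ∀ f, a f = ((N.filter (fun U => U ≤ LinearMap.ker f)).card : ℤ) := by
    intro f; simp [ha]
  have han : ∀ f, a f ≤ (q : ℤ) ^ k + 1 := by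
    intro f
    rw [ha']
    have := Finset.card_filter_le N (fun U => U ≤ LinearMap.ker f)
    rw [hcard] at this
    exact_mod_cast this
  have ha1 : ∀ f, 1 ≤ a f := by
    intro f
    rw [ha']
    by_cases hf : f = 0
    · subst hf; simp [hcard]
    · have hr : Module.finrank F (LinearMap.ker f) = 2 * k + w - 1 := by
        have := Module.Dual.finrank_ker_add_one_of_ne_zero hf
        simp at this
        omega
      have h := hdiv _ hr
      have e : Set.ncard {U : Submodule F (Fin (2 * k + w) → F) | U ∈ N ∧ U ≤ LinearMap.ker f}
          = (N.filter (fun U => U ≤ LinearMap.ker f)).card := by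
        rw [← Set.ncard_coe_finset]; congr 1; ext; simp
      rw [e, hcard] at h
      by_contra hlt
      have h0 : (N.filter (fun U => U ≤ LinearMap.ker f)).card = 0 := by omega
      rw [h0] at h
      have hd : q ∣ q ^ k + 1 := (Nat.modEq_zero_iff_dvd).1 h
      have : q ∣ 1 := (Nat.dvd_add_right (dvd_pow_self q (by omega))).1 hd
      have := Nat.le_of_dvd one_pos this
      omega
  have hane : ∀ f, a f = (q : ℤ) ^ k + 1 → f = 0 := by
    intro f h
    rw [ha'] at h
    have h2 : (N.filter (fun U => U ≤ LinearMap.ker f)).card = N.card := by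
      rw [hcard]; exact_mod_cast h
    have h3 := Finset.card_filter_eq_iff.1 h2
    have : (⊤ : Submodule F (Fin (2 * k + w) → F)) ≤ LinearMap.ker f := by
      rw [← hspan]; exact sSup_le h3
    exact LinearMap.ker_eq_top.1 (top_le_iff.1 this)
  have ha0 : a 0 = (q : ℤ) ^ k + 1 := by simp [ha, hcard]
  have hS0 : (∑ _f : Module.Dual F (Fin (2 * k + w) → F), (1 : ℤ)) = (q : ℤ) ^ (2 * k + w) := by
    have := aux_card_ann (F := F) (2 * k + w) 0 ⊥ (finrank_bot _ _)
    simp at this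
    simp [this, hq]
  have hS1 : ∑ f, a f = ((q : ℤ) ^ k + 1) * (q : ℤ) ^ (k + w) := by
    rw [ha, Finset.sum_comm]
    rw [Finset.sum_congr rfl (g := fun _ => (q : ℤ) ^ (k + w))]
    · simp [hcard]
    · intro U hU
      have := aux_card_ann _ _ U (hdim U hU)
      rw [show 2 * k + w - k = k + w by omega] at this
      rw [Finset.sum_boole, this, hq]; simp
  have hS2 : ∑ f, a f * a f = ((q : ℤ) ^ k + 1) * ((q : ℤ) ^ (k + w) + q ^ k * q ^ w) := by
    have e : ∀ f, a f * a f = ∑ U ∈ N, ∑ W ∈ N,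
        if U ⊔ W ≤ LinearMap.ker f then (1 : ℤ) else 0 := by
      intro f
      simp only [ha]
      rw [Finset.sum_mul_sum]
      refine Finset.sum_congr rfl fun U _ => Finset.sum_congr rfl fun W _ => ?_
      by_cases h1 : U ≤ LinearMap.ker f <;> by_cases h2 : W ≤ LinearMap.ker f <;>
        simp [h1, h2]
    simp only [e]
    rw [Finset.sum_comm]
    rw [Finset.sum_congr rfl (g := fun _ => (q : ℤ) ^ (k + w) + q ^ k * q ^ w)]
    · simp [hcard]
    · intro U hU
      rw [Finset.sum_comm, ← Finset.add_sum_erase _ _ hU]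
      congr 1
      · have := aux_card_ann _ _ U (hdim U hU)
        rw [show 2 * k + w - k = k + w by omega] at this
        rw [sup_idem, Finset.sum_boole, this, hq]; simp
      · rw [Finset.sum_congr rfl (g := fun _ => (q : ℤ) ^ w)]
        · simp [Finset.card_erase_of_mem hU, hcard]
        · intro W hW
          have hW' := Finset.mem_erase.1 hW
          have := aux_card_ann _ _ _ (hsup U hU W hW'.2 hW'.1.symm)
          rw [show 2 * k + w - 2 * k = w by omega] at this
          rw [Finset.sum_boole, this, hq]; simp
  have hsum : ∑ f, (a f - 1) * ((q : ℤ) ^ k + 1 - a f) = 0 := by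
    have : ∀ f, (a f - 1) * ((q : ℤ) ^ k + 1 - a f) =
        ((q : ℤ) ^ k + 2) * a f - a f * a f - ((q : ℤ) ^ k + 1) * 1 := by intro f; ring
    simp only [this]
    rw [Finset.sum_sub_distrib, Finset.sum_sub_distrib, ← Finset.mul_sum, ← Finset.mul_sum,
      hS0, hS1, hS2]
    ring
  have hall := (Finset.sum_eq_zero_iff_of_nonneg (fun f _ =>
    mul_nonneg (sub_nonneg.2 (ha1 f)) (sub_nonneg.2 (han f)))).1 hsum
  have hone : ∀ f, f ≠ 0 → a f = 1 := by
    intro f hf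
    rcases mul_eq_zero.1 (hall f (Finset.mem_univ _)) with h | h
    · omega
    · exact absurd (hane f (by omega)) hf
  have hS3 : ∑ f, (a f - 1) = (q : ℤ) ^ k := by
    rw [Finset.sum_eq_single 0]
    · rw [ha0]; ring
    · intro f _ hf; rw [hone f hf]; ring
    · simp
  rw [Finset.sum_sub_distrib, hS0, hS1] at hS3
  have hw : w = 0 := by
    have h4 : (q : ℤ) ^ (k + w) = q ^ k := by
      have : ((q : ℤ) ^ k + 1) * (q : ℤ) ^ (k + w) - q ^ (2 * k + w) = q ^ (k + w) := by ring
      rw [← this, hS3]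
    have h5 : q ^ (k + w) = q ^ k := by exact_mod_cast h4
    have := Nat.pow_right_injective hq2 h5
    omega
  subst hw
  refine ⟨rfl, ?_⟩
  have huniq : ∀ x : Fin (2 * k + 0) → F, x ≠ 0 → ∀ U ∈ N, ∀ W ∈ N, x ∈ U → x ∈ W → U = W := by
    intro x hx U hU W hW hxU hxW
    by_contra hne
    have : x ∈ U ⊓ W := ⟨hxU, hxW⟩
    rw [hdisj U hU W hW hne] at this
    exact hx (by simpa using this)
  set B := fun U : Submodule F (Fin (2 * k + 0) → F) =>
    (Finset.univ.filter (fun x => x ∈ U)).erase 0 with hB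
  have hBc : ∀ U ∈ N, (B U).card = q ^ k - 1 := by
    intro U hU
    rw [hB]
    rw [Finset.card_erase_of_mem (by simp), ← Fintype.card_subtype]
    congr 1
    have := Module.card_eq_pow_finrank (K := F) (V := U)
    rw [hdim U hU] at this
    rw [hq, ← this]
  have hun : (N.biUnion B) = Finset.univ.erase 0 := by
    apply Finset.eq_of_subset_of_card_le
    · intro x; simp [hB]; tauto
    · rw [Finset.card_biUnion, Finset.sum_congr rfl hBc, Finset.card_erase_of_mem (by simp)]
      · simp [hcard, ← hq]
        obtain ⟨m, hm⟩ : ∃ m, q ^ k = m + 1 :=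
          ⟨q ^ k - 1, by have := Nat.pow_pos (n := k) (show 0 < q by omega); omega⟩
        rw [mul_comm 2 k, pow_mul, hm]
        simp
        nlinarith
      · intro U hU W hW hne
        rw [Function.onFun, Finset.disjoint_left]
        intro x hxU hxW
        simp [hB] at hxU hxW
        exact hne (huniq x hxU.1 U hU W hW hxU.2 hxW.2)
  intro x hx
  have : x ∈ N.biUnion B := by rw [hun]; simp [hx]
  obtain ⟨U, hU, hxU⟩ := Finset.mem_biUnion.1 this
  simp [hB] at hxU
  exact ⟨U, ⟨hU, hxU.2⟩, fun W hW => huniq x hx W hW.1 U hU hW.2 hxU.2⟩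
end

section
/- Let N be a q^r-divisible set of n k-dimensional subspaces of F_q^v. Then n does not lie in the half-open real interval [1, (q^{k+r}−1)/(q^k−1)). Moreover, for every integer m with 2 ≤ m ≤ ⌊q^{k+r}/4 + 1/2 + 1/(4q^{k+r})⌋, setting Δ = q^r, u = q^k and ω = (Δu − 2m)² + (2Δu + 1 − 4m²), the cardinality n does not lie in the closed integer interval [⌈(Δum − (Δu+1)/2 − √ω/2)/(u−1)⌉, ⌊(Δum − (Δu+1)/2 + √ω/2)/(u−1)⌋]. -/
open Real

lemma aux_card_s7 {F : Type} [Field F] [Fintype F] {v : ℕ} (A : Submodule F (Fin v → F)) (d : ℕ)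
    (hA : Module.finrank F ↥A = d) :
    Fintype.card F ^ d * Nat.card {f : Module.Dual F (Fin v → F) // A ≤ LinearMap.ker f}
      = Fintype.card F ^ v := by
  have h1 := Subspace.finrank_add_finrank_dualAnnihilator_eq A
  have h2 : Nat.card {f : Module.Dual F (Fin v → F) // A ≤ LinearMap.ker f}
      = Nat.card A.dualAnnihilator := by
    apply Nat.card_congr
    apply Equiv.subtypeEquivRight
    intro f
    rw [Submodule.mem_dualAnnihilator]
    rfl
  rw [h2, Module.natCard_eq_pow_finrank (K := F), Nat.card_eq_fintype_card, ← pow_add, ← hA, h1]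
  simp

open Classical in
lemma aux_sum {F : Type} [Field F] [Fintype F] {v : ℕ} [Fintype (Module.Dual F (Fin v → F))]
    (A : Submodule F (Fin v → F)) (d : ℕ)
    (hA : Module.finrank F ↥A = d) :
    (Fintype.card F : ℝ) ^ d * ∑ f : Module.Dual F (Fin v → F),
      (if A ≤ LinearMap.ker f then (1 : ℝ) else 0) = (Fintype.card F : ℝ) ^ v := by
  rw [← Nat.cast_pow, ← Nat.cast_pow, ← aux_card_s7 A d hA, Finset.sum_boole]
  rw [Nat.card_eq_fintype_card, Fintype.card_subtype]
  push_cast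
  rfl

lemma aux_main
    {F : Type} [Field F] [Fintype F] (q v k r n : ℕ)
    (hq : q = Fintype.card F) 
    (N : Finset (Submodule F (Fin v → F))) (hn : N.card = n)
    (hdim : ∀ U ∈ N, Module.finrank F ↥U = k)
    (hdisj : ∀ U ∈ N, ∀ W ∈ N, U ≠ W → U ⊓ W = ⊥)
    (hdiv : ∀ H : Submodule F (Fin v → F), Module.finrank F ↥H = v - 1 →
      n ≡ Set.ncard {U : Submodule F (Fin v → F) | U ∈ N ∧ U ≤ H} [MOD q ^ r]) (m : ℤ) :
    ((q:ℝ)^r * (q:ℝ)^k)^2 * ((m:ℝ) * (m - 1)) ≤ (q:ℝ)^v *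
      ((n * ((q:ℝ)^k - 1))^2 + n * ((q:ℝ)^k - 1)
        - (2 * m - 1) * ((q:ℝ)^r * (q:ℝ)^k) * (n * ((q:ℝ)^k - 1))
        + m * (m - 1) * ((q:ℝ)^r * (q:ℝ)^k)^2) := by
  classical
  haveI : Finite (Module.Dual F (Fin v → F)) := Module.finite_of_finite F
  letI : Fintype (Module.Dual F (Fin v → F)) := Fintype.ofFinite _
  set c : Module.Dual F (Fin v → F) → ℝ := fun f =>
    ∑ U ∈ N, (if U ≤ LinearMap.ker f then (1 : ℝ) else 0) with hc
  have hS0 : ∑ f : Module.Dual F (Fin v → F), (1 : ℝ) = (q:ℝ)^v := by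
    have := aux_sum (⊥ : Submodule F (Fin v → F)) 0 (by simp)
    simpa [hq] using this
  have hS1 : (q:ℝ)^k * ∑ f, c f = n * (q:ℝ)^v := by
    simp only [hc]
    rw [Finset.sum_comm, Finset.mul_sum, ← hn, ← nsmul_eq_mul]
    apply Finset.sum_eq_card_nsmul
    intro U hU
    rw [hq]
    exact aux_sum U k (hdim U hU)
  have hS2 : ((q:ℝ)^k)^2 * ∑ f, c f ^ 2 = n * (q:ℝ)^k * (q:ℝ)^v + n * (n - 1) * (q:ℝ)^v := by
    have hinner : ∀ U ∈ N, ∀ W ∈ N, ((q:ℝ)^k)^2 * ∑ f : Module.Dual F (Fin v → F),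
        ((if U ≤ LinearMap.ker f then (1 : ℝ) else 0) * (if W ≤ LinearMap.ker f then (1 : ℝ) else 0))
        = (q:ℝ)^v + if U = W then ((q:ℝ)^k - 1) * (q:ℝ)^v else 0 := by
      intro U hU W hW
      have e : ∀ f : Module.Dual F (Fin v → F), 
        ((if U ≤ LinearMap.ker f then (1 : ℝ) else 0) * (if W ≤ LinearMap.ker f then (1 : ℝ) else 0))
         = if U ⊔ W ≤ LinearMap.ker f then (1 : ℝ) else 0 := by
        intro f
        by_cases h1 : U ≤ LinearMap.ker f <;> by_cases h2 : W ≤ LinearMap.ker f <;>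
          simp [h1, h2]
      simp only [e]
      by_cases h : U = W
      · subst h
        have := aux_sum U k (hdim U hU)
        rw [← hq] at this
        simp only [sup_idem, if_true]
        rw [pow_two, mul_assoc, this]; ring
      · have h2 := Submodule.finrank_sup_add_finrank_inf_eq U W
        rw [hdisj U hU W hW h, finrank_bot, hdim U hU, hdim W hW] at h2
        have := aux_sum (U ⊔ W) (k + k) h2
        rw [← hq] at this
        rw [if_neg h, add_zero, ← this]; ring
    have : ∑ f, c f ^ 2 = ∑ U ∈ N, ∑ W ∈ N, ∑ f : Module.Dual F (Fin v → F),
        ((if U ≤ LinearMap.ker f then (1 : ℝ) else 0) *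
          (if W ≤ LinearMap.ker f then (1 : ℝ) else 0)) := by
      simp only [hc, pow_two, Finset.sum_mul_sum]
      rw [Finset.sum_comm]
      apply Finset.sum_congr rfl
      intro U _
      rw [Finset.sum_comm]
    rw [this, Finset.mul_sum]
    have h3 : ∀ U ∈ N, ((q:ℝ)^k)^2 * (∑ W ∈ N, ∑ f : Module.Dual F (Fin v → F),
        ((if U ≤ LinearMap.ker f then (1 : ℝ) else 0) *
          (if W ≤ LinearMap.ker f then (1 : ℝ) else 0)))
          = n * (q:ℝ)^v + ((q:ℝ)^k - 1) * (q:ℝ)^v := by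
      intro U hU
      rw [Finset.mul_sum, Finset.sum_congr rfl (hinner U hU), Finset.sum_add_distrib,
        Finset.sum_ite_eq, if_pos hU, Finset.sum_const, hn, nsmul_eq_mul]
    rw [Finset.sum_congr rfl h3, Finset.sum_const, hn, nsmul_eq_mul]
    ring
  have hy : ∀ f : Module.Dual F (Fin v → F), ∃ y : ℤ, (n : ℝ) - c f = (q:ℝ)^r * y := by
    intro f
    by_cases hf : f = 0
    · refine ⟨0, ?_⟩
      simp [hc, hf, hn]
    · have hfr : Module.finrank F ↥(LinearMap.ker f) = v - 1 := by
        have := Module.Dual.finrank_ker_add_one_of_ne_zero hf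
        simp at this
        omega
      have h := hdiv _ hfr
      have hcf : c f = (Set.ncard {U : Submodule F (Fin v → F) | U ∈ N ∧ U ≤ LinearMap.ker f} : ℝ) := by
        simp only [hc]
        rw [Finset.sum_boole, ← Set.ncard_coe_finset, Finset.coe_filter]
      obtain ⟨y, hy⟩ := (Nat.modEq_iff_dvd.mp h.symm)
      refine ⟨y, ?_⟩
      rw [hcf]
      exact_mod_cast hy
  choose y hy using hy
  have hnonneg : ∀ j : ℤ, 0 ≤ ((j:ℝ) - m) * (j - m + 1) := by
    intro j
    have : 0 ≤ (j - m) * (j - m + 1) := by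
      rcases le_or_gt 0 (j - m) with h | h
      · positivity
      · exact mul_nonneg_of_nonpos_of_nonpos h.le (by omega)
    exact_mod_cast this
  have hy0 : ((q:ℝ)^r) * y 0 = 0 := by
    rw [← hy]; simp [hc, hn]
  have hterm : ∀ f, (n - c f - (q:ℝ)^r * m) * (n - c f - (q:ℝ)^r * (m - 1))
      = ((q:ℝ)^r)^2 * (((y f:ℝ) - m) * (y f - m + 1)) := by
    intro f; rw [hy]; ring
  have hle : ((q:ℝ)^r)^2 * (m * (m - 1)) ≤
      ∑ f, (n - c f - (q:ℝ)^r * m) * (n - c f - (q:ℝ)^r * (m - 1)) := by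
    refine le_trans (le_of_eq ?_) (Finset.single_le_sum (f := fun f =>
      (n - c f - (q:ℝ)^r * m) * (n - c f - (q:ℝ)^r * (m - 1))) ?_ (Finset.mem_univ 0))
    · rw [hy, hy0]; ring
    · intro f _
      rw [hterm]
      exact mul_nonneg (sq_nonneg _) (hnonneg _)
  have hexp : ∑ f, (n - c f - (q:ℝ)^r * m) * (n - c f - (q:ℝ)^r * (m - 1))
      = (n - (q:ℝ)^r * m) * (n - (q:ℝ)^r * (m - 1)) * ∑ f : Module.Dual F (Fin v → F), (1:ℝ)
       - (2 * n - (q:ℝ)^r * (2 * m - 1)) * ∑ f, c f + ∑ f, c f ^ 2 := by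
    rw [Finset.mul_sum, Finset.mul_sum, ← Finset.sum_sub_distrib, ← Finset.sum_add_distrib]
    apply Finset.sum_congr rfl
    intro f _
    ring
  rw [hexp, hS0] at hle
  have := mul_le_mul_of_nonneg_left hle (sq_nonneg ((q:ℝ)^k))
  linear_combination this + hS2 - (q:ℝ)^k * (2 * n - (q:ℝ)^r * (2 * m - 1)) * hS1

/-- Excluded intervals of cardinalities for `q^r`-divisible sets of `k`-subspaces:
`n ∉ [1, (q^{k+r}-1)/(q^k-1))` and, for every integer `m` with
`2 ≤ m ≤ ⌊q^{k+r}/4 + 1/2 + 1/(4q^{k+r})⌋`, setting `Δ = q^r`, `u = q^k` and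
`ω = (Δu - 2m)² + (2Δu + 1 - 4m²)`, the cardinality `n` does not lie in
`[⌈(Δum - (Δu+1)/2 - √ω/2)/(u-1)⌉, ⌊(Δum - (Δu+1)/2 + √ω/2)/(u-1)⌋]`. -/
theorem divisible_set_excluded_cardinalities
    {F : Type} [Field F] [Fintype F] (q v k r n : ℕ)
    (hq : q = Fintype.card F) (hk : 1 ≤ k) (hr : 1 ≤ r)
    (N : Finset (Submodule F (Fin v → F))) (hn : N.card = n)
    (hdim : ∀ U ∈ N, Module.finrank F ↥U = k)
    (hdisj : ∀ U ∈ N, ∀ W ∈ N, U ≠ W → U ⊓ W = ⊥)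
    (hdiv : ∀ H : Submodule F (Fin v → F), Module.finrank F ↥H = v - 1 →
      n ≡ Set.ncard {U : Submodule F (Fin v → F) | U ∈ N ∧ U ≤ H} [MOD q ^ r]) :
    (¬ ((1 : ℝ) ≤ (n : ℝ) ∧
        (n : ℝ) < ((q : ℝ) ^ (k + r) - 1) / ((q : ℝ) ^ k - 1))) ∧
    (∀ m : ℤ, 2 ≤ m →
      m ≤ ⌊(q : ℝ) ^ (k + r) / 4 + 1 / 2 + 1 / (4 * (q : ℝ) ^ (k + r))⌋ →
      ¬ (⌈((q : ℝ) ^ r * (q : ℝ) ^ k * (m : ℝ)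
              - ((q : ℝ) ^ r * (q : ℝ) ^ k + 1) / 2
              - Real.sqrt (((q : ℝ) ^ r * (q : ℝ) ^ k - 2 * (m : ℝ)) ^ 2
                  + (2 * ((q : ℝ) ^ r * (q : ℝ) ^ k) + 1 - 4 * (m : ℝ) ^ 2)) / 2)
            / ((q : ℝ) ^ k - 1)⌉ ≤ (n : ℤ) ∧
         (n : ℤ) ≤ ⌊((q : ℝ) ^ r * (q : ℝ) ^ k * (m : ℝ)
              - ((q : ℝ) ^ r * (q : ℝ) ^ k + 1) / 2
              + Real.sqrt (((q : ℝ) ^ r * (q : ℝ) ^ k - 2 * (m : ℝ)) ^ 2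
                  + (2 * ((q : ℝ) ^ r * (q : ℝ) ^ k) + 1 - 4 * (m : ℝ) ^ 2)) / 2)
            / ((q : ℝ) ^ k - 1)⌋)) := by
  have hmain := aux_main q v k r n hq N hn hdim hdisj hdiv
  have hq2 : 1 < q := by rw [hq]; exact Fintype.one_lt_card
  have hqR : (1:ℝ) < q := by exact_mod_cast hq2
  have hu : (1:ℝ) < (q:ℝ)^k := one_lt_pow₀ hqR (by omega)
  have hD : (0:ℝ) < (q:ℝ)^r * (q:ℝ)^k := by positivity
  have hV : (0:ℝ) < (q:ℝ)^v := by positivity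
  have hu1 : (0:ℝ) < (q:ℝ)^k - 1 := by linarith
  rw [pow_add, mul_comm ((q:ℝ)^k) ((q:ℝ)^r)]
  set D := (q:ℝ)^r * (q:ℝ)^k with hDdef
  set u := (q:ℝ)^k with hudef
  set z := (n:ℝ) * (u - 1) with hz
  refine ⟨?_, ?_⟩
  · rintro ⟨h1, h2⟩
    rw [lt_div_iff₀ hu1] at h2
    have h := hmain 1
    have hz0 : 0 < z := by rw [hz]; positivity
    have hneg : z * (z + 1 - D) < 0 := mul_neg_of_pos_of_neg hz0 (by linarith)
    have h3 := mul_neg_of_pos_of_neg hV hneg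
    push_cast at h
    linarith [h, h3]
  · rintro m hm hm2 ⟨h1, h2⟩
    rw [Int.le_floor] at hm2 h2
    rw [Int.ceil_le] at h1
    have hmR : (2:ℝ) ≤ m := by exact_mod_cast hm
    push_cast at h1 h2
    rw [div_le_iff₀ hu1] at h1
    rw [le_div_iff₀ hu1] at h2
    have hw : 0 ≤ (D - 2 * (m:ℝ)) ^ 2 + (2 * D + 1 - 4 * (m:ℝ) ^ 2) := by
      have := mul_le_mul_of_nonneg_left hm2 (by positivity : 0 ≤ 4 * D)
      have e : 4 * D * (D / 4 + 1 / 2 + 1 / (4 * D)) = D ^ 2 + 2 * D + 1 := by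
        field_simp
        ring
      rw [e] at this
      linarith
    have hs := Real.sq_sqrt hw
    set s := Real.sqrt ((D - 2 * (m:ℝ)) ^ 2 + (2 * D + 1 - 4 * (m:ℝ) ^ 2)) with hsdef
    have h := hmain m
    have hle : (z - (D * m - (D + 1) / 2 - s / 2)) * (z - (D * m - (D + 1) / 2 + s / 2)) ≤ 0 :=
      mul_nonpos_of_nonneg_of_nonpos (by linarith) (by linarith)
    have heq : (z - (D * m - (D + 1) / 2 - s / 2)) * (z - (D * m - (D + 1) / 2 + s / 2))
        = z ^ 2 + z - (2 * m - 1) * D * z + m * (m - 1) * D ^ 2 := by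
      linear_combination (-1 / 4) * hs
    rw [heq] at hle
    have h3 := mul_nonpos_of_nonneg_of_nonpos hV.le hle
    have h4 : 0 < D ^ 2 * ((m:ℝ) * (m - 1)) := by
      have : (0:ℝ) < m - 1 := by linarith
      positivity
    linarith
end

section
/- Let N be a nonempty q^r-divisible set of n k-dimensional subspaces of F_q^v, where r = a·k + b with integers a ≥ 1 and 0 < b < k. Then n ≥ (q^{(a+2)k}−1)/(q^k−1). -/
lemma aux_numeric (Q T s P A D u l n e : ℤ) (hs : 2 ≤ s) (hT : 2 ≤ T) (hQ : Q = s * T)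
    (hP : Q ≤ P) (hD : D = s * P) (hA : (Q - 1) * A = Q * P - 1) (hAP : P ≤ A)
    (hu : 0 ≤ u) (hn : n = u + l * D) (he : n = e + Q * u) (he1 : 1 ≤ e)
    (hq : e * (Q * D - e) ≤ n * (Q - 1)) : Q * A + 1 ≤ n := by
  by_contra hlt
  have hlt : n ≤ Q * A := by omega
  have hQ4 : 4 ≤ Q := by nlinarith
  have hD2 : 2 * P ≤ D := by nlinarith
  have hQu : 0 ≤ Q * u := by positivity
  have hA2 : A + 1 ≤ 2 * P := by
    by_contra h
    have h1 : 2 * P ≤ A := by omega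
    nlinarith
  have heQ : e < Q := by
    by_contra h
    have h : Q ≤ e := by omega
    have h1 : 2 * (Q * P) ≤ Q * D := by nlinarith
    have h2 : Q * (A + 1) ≤ Q * (2 * P) := by gcongr
    have h3 : 0 ≤ (e - Q) * (Q * D - e - Q) := mul_nonneg (by omega) (by linarith)
    have h4 : n * (Q - 1) ≤ Q * A * (Q - 1) := by
      apply mul_le_mul_of_nonneg_right hlt; omega
    have h5 : Q * A * (Q - 1) = Q * (Q * P - 1) := by rw [← hA]; ring
    have h6 : Q * (2 * (Q * P)) ≤ Q * (Q * D) := by gcongr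
    have h7 : Q * Q ≤ Q * (Q * P) := by nlinarith
    nlinarith
  have hl : e ≤ l := by
    by_contra h
    have h : l ≤ e - 1 := by omega
    have h1 : (Q - 1) * u = l * D - e := by linarith
    have h2 : e * (Q * D + 1 - e) ≤ Q * (l * D) := by
      have : n * (Q - 1) = e * (Q - 1) + Q * (l * D - e) := by rw [← h1, he]; ring
      nlinarith
    have h3 : l * (Q * D) ≤ (e - 1) * (Q * D) := by
      apply mul_le_mul_of_nonneg_right h; nlinarith
    have h4 : Q * D ≤ e * (e - 1) := by nlinarith
    have h5 : e * (e - 1) ≤ Q * Q := by nlinarith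
    nlinarith
  have huA : u < A := by
    by_contra h
    have : Q * A ≤ Q * u := by apply mul_le_mul_of_nonneg_left <;> omega
    omega
  obtain ⟨j, hj⟩ : ∃ j, j = l * A - T * u := ⟨_, rfl⟩
  have h1 : (Q - 1) * u = l * D - e := by linarith
  have hTD : Q * P = D * T := by rw [hQ, hD]; ring
  have hju : j * D = e * A - u := by
    rw [hj]
    linear_combination (-A) * h1 + u * hA + u * hTD
  have hjl : (Q - 1) * j = e * T - l := by
    have hD0 : D ≠ 0 := by nlinarith
    apply mul_right_cancel₀ hD0
    linear_combination (Q - 1) * hju + e * hA - h1 + e * hTD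
  have hpos : (e - 1) * A + 1 ≤ j * D := by rw [hju]; linarith
  have hj1 : 1 ≤ j := by
    by_contra h
    have h : j ≤ 0 := by omega
    have : 0 ≤ (e - 1) * A := mul_nonneg (by omega) (by omega)
    nlinarith
  have hesj : s * j < e := by
    by_contra h
    have h : e ≤ s * j := by omega
    have : e * (T - 1) ≤ s * j * (T - 1) := mul_le_mul_of_nonneg_right h (by omega)
    have h9 : 2 * j ≤ s * j := mul_le_mul_of_nonneg_right hs (by omega)
    have h10 : (Q - 1) * j = s * j * T - j := by rw [hQ]; ring
    linarith
  have h8 : s * j * P ≤ (e - 1) * A := by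
    apply mul_le_mul (by omega) hAP (by omega) (by omega)
  have h11 : s * j * P = j * D := by rw [hD]; ring
  linarith

open Classical in
lemma aux_count_s8 {F : Type} [Field F] [Fintype F] (v m : ℕ)
    [Fintype (Module.Dual F (Fin v → F))] (U : Submodule F (Fin v → F))
    (hU : Module.finrank F U = m) :
    (Fintype.card F) ^ m * (Finset.univ.filter
      (fun f : Module.Dual F (Fin v → F) => U ≤ LinearMap.ker f)).card
      = (Fintype.card F) ^ v := by
  have h1 : (Finset.univ.filter
      (fun f : Module.Dual F (Fin v → F) => U ≤ LinearMap.ker f)).card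
      = Nat.card U.dualAnnihilator := by
    rw [← Fintype.card_subtype, ← Nat.card_eq_fintype_card]
    apply Nat.card_congr
    apply Equiv.subtypeEquivRight
    intro f
    rw [Submodule.mem_dualAnnihilator]
    rfl
  have h2 := Subspace.finrank_add_finrank_dualAnnihilator_eq U
  rw [h1, Module.natCard_eq_pow_finrank (K := F), Nat.card_eq_fintype_card, ← pow_add, ← hU, h2]
  simp

/-- If `N` is a nonempty `q^r`-divisible set of `n` `k`-subspaces of `F_q^v`, where
`r = a·k + b` with `a ≥ 1` and `0 < b < k`, then `n ≥ (q^{(a+2)k}-1)/(q^k-1)`. -/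
theorem divisible_set_lower_bound_non_divisible_case
    {F : Type} [Field F] [Fintype F] (q v k r n a b : ℕ)
    (hq : q = Fintype.card F) (hk : 1 ≤ k) (hr : 1 ≤ r)
    (ha : 1 ≤ a) (hb0 : 0 < b) (hbk : b < k) (hrab : r = a * k + b)
    (N : Finset (Submodule F (Fin v → F))) (hn : N.card = n) (hne : N.Nonempty)
    (hdim : ∀ U ∈ N, Module.finrank F ↥U = k)
    (hdisj : ∀ U ∈ N, ∀ W ∈ N, U ≠ W → U ⊓ W = ⊥)
    (hdiv : ∀ H : Submodule F (Fin v → F), Module.finrank F ↥H = v - 1 →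
      n ≡ Set.ncard {U : Submodule F (Fin v → F) | U ∈ N ∧ U ≤ H} [MOD q ^ r]) :
    (q ^ ((a + 2) * k) - 1) / (q ^ k - 1) ≤ n := by
  classical
  set D := Module.Dual F (Fin v → F) with hDdef
  haveI : Finite D := Module.finite_of_finite F
  letI : Fintype D := Fintype.ofFinite D
  have hq2 : 2 ≤ q := by rw [hq]; exact Fintype.one_lt_card
  let x : D → ℕ := fun f => (N.filter (fun U => U ≤ LinearMap.ker f)).card
  have hx0 : x 0 = n := by simp [x, hn]
  have hxmod : ∀ f, n ≡ x f [MOD q ^ r] := by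
    intro f
    by_cases hf : f = 0
    · rw [hf, hx0]
    · have h := hdiv (LinearMap.ker f) (by
        have h1 := Module.Dual.finrank_ker_add_one_of_ne_zero hf
        simp at h1
        omega)
      have h2 : {U : Submodule F (Fin v → F) | U ∈ N ∧ U ≤ LinearMap.ker f}
        = ((N.filter (fun U => U ≤ LinearMap.ker f) : Finset _) : Set _) := by
        ext; simp
      rwa [h2, Set.ncard_coe_finset] at h
  set M := (Fintype.card F) ^ v with hM
  have hMD : Fintype.card D = M := by
    rw [Module.card_eq_pow_finrank (K := F)]
    simp [D, M]
  have hM0 : 0 < M := by positivity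
  have hxi : ∀ f, x f = ∑ U ∈ N, if U ≤ LinearMap.ker f then 1 else 0 := by
    intro f; simp [x]
  set Q := q ^ k with hQ
  have hsum1 : Q * ∑ f, x f = n * M := by
    simp_rw [hxi]
    rw [Finset.sum_comm, Finset.mul_sum, ← hn, ← smul_eq_mul (a := N.card), ← Finset.sum_const]
    refine Finset.sum_congr rfl fun U hU => ?_
    rw [← Finset.card_filter, hQ, hq]
    exact aux_count_s8 v k U (hdim U hU)
  have hpair : ∀ U ∈ N, ∀ W ∈ N, Q ^ 2 * (∑ f : D, if U ≤ LinearMap.ker f ∧ W ≤ LinearMap.ker f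
      then 1 else 0) = (if U = W then Q * M else M) := by
    intro U hU W hW
    rw [← Finset.card_filter]
    split_ifs with h
    · subst h
      simp only [and_self]
      rw [pow_two, mul_assoc]
      congr 1
      rw [hQ, hq]
      exact aux_count_s8 v k U (hdim U hU)
    · simp_rw [← sup_le_iff]
      rw [hQ, hq, ← pow_mul]
      apply aux_count_s8
      have h1 := Submodule.finrank_sup_add_finrank_inf_eq U W
      rw [hdisj U hU W hW h, hdim U hU, hdim W hW] at h1
      simp at h1
      omega
  have hsum2 : Q ^ 2 * ∑ f, x f ^ 2 + n * M = n * (Q * M) + n * n * M := by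
    have h1 : ∀ f, x f ^ 2 = ∑ U ∈ N, ∑ W ∈ N,
        if U ≤ LinearMap.ker f ∧ W ≤ LinearMap.ker f then 1 else 0 := by
      intro f
      rw [hxi, pow_two, Finset.sum_mul_sum]
      refine Finset.sum_congr rfl fun U _ => Finset.sum_congr rfl fun W _ => ?_
      split_ifs <;> simp_all
    have h2 : Q ^ 2 * ∑ f, x f ^ 2 = ∑ U ∈ N, ∑ W ∈ N, (if U = W then Q * M else M) := by
      simp_rw [h1]
      rw [Finset.sum_comm, Finset.mul_sum]
      refine Finset.sum_congr rfl fun U hU => ?_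
      rw [Finset.sum_comm, Finset.mul_sum]
      exact Finset.sum_congr rfl fun W hW => hpair U hU W hW
    have h3 : ∀ U ∈ N, (∑ W ∈ N, (if U = W then Q * M else M)) + M = Q * M + n * M := by
      intro U hU
      rw [← Finset.add_sum_erase _ _ hU, if_pos rfl]
      rw [Finset.sum_congr rfl (g := fun _ => M)
        (fun W hW => if_neg (Finset.ne_of_mem_erase hW).symm)]
      rw [Finset.sum_const, smul_eq_mul, add_assoc, ← Nat.succ_mul,
        Nat.succ_eq_add_one, Finset.card_erase_add_one hU, hn]
    have h4 := Finset.sum_congr rfl h3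
    rw [Finset.sum_add_distrib, ← h2] at h4
    simp only [Finset.sum_const, hn, smul_eq_mul] at h4
    rw [h4]; ring
  have hn1 : 1 ≤ n := by rw [← hn]; exact hne.card_pos
  set Δ := q ^ r with hΔ
  set u := n % Δ with hu
  have hux : ∀ f, ∃ t, x f = u + t * Δ := by
    intro f
    refine ⟨x f / Δ, ?_⟩
    have : u = x f % Δ := hxmod f
    rw [this, mul_comm]
    exact (Nat.mod_add_div _ _).symm
  have hux' : ∀ f, u ≤ x f := fun f => by obtain ⟨t, ht⟩ := hux f; omega
  have hQ2 : 2 ≤ Q := by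
    calc 2 ≤ q := hq2
      _ = q ^ 1 := (pow_one q).symm
      _ ≤ q ^ k := Nat.pow_le_pow_right (by omega) hk
  have hconst : ∑ _f : D, u = u * M := by
    rw [Finset.sum_const, Finset.card_univ, hMD, smul_eq_mul, mul_comm]
  have hle : Q * u ≤ n := by
    have h : ∑ _f : D, u ≤ ∑ f, x f := Finset.sum_le_sum fun f _ => hux' f
    rw [hconst] at h
    have h1 : Q * (u * M) ≤ n * M := by rw [← hsum1]; gcongr
    rw [← mul_assoc] at h1
    exact Nat.le_of_mul_le_mul_right h1 hM0
  have hun : u < n := by nlinarith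
  have hlt : Q * u < n := by
    have h : ∑ _f : D, u < ∑ f, x f :=
      Finset.sum_lt_sum (fun f _ => hux' f) ⟨0, Finset.mem_univ _, by rw [hx0]; exact hun⟩
    rw [hconst] at h
    have h1 : Q * (u * M) < n * M := by
      rw [← hsum1]; exact Nat.mul_lt_mul_of_pos_left h (by omega)
    rw [← mul_assoc] at h1
    exact Nat.lt_of_mul_lt_mul_right h1
  have hquad : (0:ℤ) ≤ ∑ f, ((x f : ℤ) - u) * ((x f : ℤ) - u - Δ) := by
    apply Finset.sum_nonneg
    intro f _
    obtain ⟨t, ht⟩ := hux f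
    rw [ht]
    push_cast
    rcases Nat.eq_zero_or_pos t with rfl | h
    · simp
    · have : (1:ℤ) ≤ t := by exact_mod_cast h
      have hd : (0:ℤ) ≤ Δ := by positivity
      have e1 : ((u:ℤ) + t * Δ - u) * (u + t * Δ - u - Δ) = t * (t - 1) * (Δ * Δ) := by ring
      rw [e1]
      exact mul_nonneg (mul_nonneg (by omega) (by omega)) (mul_nonneg hd hd)
  have hquad2 : ((n:ℤ) - Q * u) * (Q * Δ - (n - Q * u)) ≤ n * (Q - 1) := by
    have e1 : ∑ f, ((x f : ℤ) - u) * ((x f : ℤ) - u - Δ)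
        = ∑ f, (x f : ℤ) ^ 2 - (2 * u + Δ) * ∑ f, (x f : ℤ) + M * (u * (u + Δ)) := by
      have : ∀ f, ((x f : ℤ) - u) * ((x f : ℤ) - u - Δ)
        = (x f : ℤ) ^ 2 - (2 * u + Δ) * (x f : ℤ) + u * (u + Δ) := fun f => by ring
      simp_rw [this]
      rw [Finset.sum_add_distrib, Finset.sum_sub_distrib, ← Finset.mul_sum, Finset.sum_const,
        Finset.card_univ, hMD, nsmul_eq_mul]
    rw [e1] at hquad
    have s1 : (Q:ℤ) * ∑ f, (x f : ℤ) = n * M := by exact_mod_cast hsum1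
    have s2 : (Q:ℤ) ^ 2 * ∑ f, (x f : ℤ) ^ 2 + n * M = n * (Q * M) + n * n * M := by
      exact_mod_cast hsum2
    have h1 := mul_nonneg (sq_nonneg (Q:ℤ)) hquad
    have hM' : (0:ℤ) < M := by exact_mod_cast hM0
    have h2 : (Q:ℤ) ^ 2 * (∑ f, (x f : ℤ) ^ 2 - (2 * u + Δ) * ∑ f, (x f : ℤ) + M * (u * (u + Δ)))
      = (n * (Q - 1) - ((n:ℤ) - Q * u) * (Q * Δ - (n - Q * u))) * M := by
      linear_combination s2 - Q * (2 * u + Δ) * s1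
    rw [h2] at h1
    have := nonneg_of_mul_nonneg_left h1 hM'
    linarith
  have hQ1 : (1:ℤ) ≤ Q := by exact_mod_cast (by omega : 1 ≤ Q)
  have hgeom : ((Q:ℤ) - 1) * (∑ i ∈ Finset.range (a + 1), (Q:ℤ) ^ i) = Q * Q ^ a - 1 := by
    rw [mul_geom_sum, pow_succ']
  have hmain := aux_numeric (Q:ℤ) ((q:ℤ) ^ (k - b)) ((q:ℤ) ^ b) ((Q:ℤ) ^ a)
    (∑ i ∈ Finset.range (a + 1), (Q:ℤ) ^ i) Δ u ((n / Δ : ℕ) : ℤ) n (n - Q * u)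
    (by exact_mod_cast hq2.trans (Nat.le_self_pow (by omega) q))
    (by exact_mod_cast hq2.trans (Nat.le_self_pow (by omega) q))
    (by rw [← pow_add, hQ]; push_cast; congr 1; omega)
    (le_self_pow₀ hQ1 (by omega))
    (by rw [hΔ, hQ, hrab]; push_cast; rw [← pow_mul, ← pow_add]; congr 1; ring)
    hgeom
    (Finset.single_le_sum (f := fun i => (Q:ℤ) ^ i) (fun i _ => by positivity)
      (Finset.mem_range.2 (Nat.lt_succ_self a)))
    (by positivity)
    (by rw [hu]; exact_mod_cast (by rw [mul_comm]; exact (Nat.mod_add_div n Δ).symm))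
    (by ring)
    (by have : ((Q * u : ℕ) : ℤ) < n := by exact_mod_cast hlt
        push_cast at this; omega)
    hquad2
  apply Nat.div_le_of_le_mul
  have hpw : q ^ ((a + 2) * k) = Q ^ (a + 2) := by rw [hQ, ← pow_mul, mul_comm]
  rw [hpw]
  have h1 : 1 ≤ Q ^ (a + 2) := Nat.one_le_pow _ _ (by omega)
  zify [h1, (by omega : 1 ≤ Q)]
  have h2 := mul_le_mul_of_nonneg_left hmain (by omega : (0:ℤ) ≤ Q - 1)
  have h3 : ((Q:ℤ) - 1) * (Q * (∑ i ∈ Finset.range (a + 1), (Q:ℤ) ^ i) + 1) = Q ^ (a + 2) - 1 := by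
    linear_combination Q * hgeom
  linarith
end

section
/- Let N be a nonempty q^r-divisible set of n k-dimensional subspaces of F_q^v, where r ≥ 1. Then n ≥ q^k + 1. -/
open Classical in
theorem aux_annih_card_s9 {F : Type} [Field F] [Fintype F] (v : ℕ) [Fintype (Module.Dual F (Fin v → F))]
    (U : Submodule F (Fin v → F)) :
    (Finset.univ.filter fun f : Module.Dual F (Fin v → F) => U ≤ LinearMap.ker f).card
      * Fintype.card F ^ Module.finrank F U = Fintype.card F ^ v := by
  have h1 : (Finset.univ.filter fun f : Module.Dual F (Fin v → F) => U ≤ LinearMap.ker f).card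
      = Nat.card U.dualAnnihilator := by
    rw [Nat.card_eq_fintype_card, Fintype.card_subtype]
    congr 1
    ext f
    simp only [Finset.mem_filter, Finset.mem_univ, true_and, Submodule.mem_dualAnnihilator]
    rfl
  have h2 := Subspace.finrank_add_finrank_dualAnnihilator_eq U
  rw [Module.finrank_fin_fun] at h2
  rw [h1, Module.natCard_eq_pow_finrank (K := F), Nat.card_eq_fintype_card, ← pow_add, add_comm, h2]

/-- A nonempty `q^r`-divisible set of `n` `k`-subspaces of `F_q^v` satisfies `n ≥ q^k + 1`. -/
theorem divisible_set_card_lower_bound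
    {F : Type} [Field F] [Fintype F] (q v k r n : ℕ)
    (hq : q = Fintype.card F) (hk : 1 ≤ k) (hr : 1 ≤ r)
    (N : Finset (Submodule F (Fin v → F))) (hn : N.card = n) (hne : N.Nonempty)
    (hdim : ∀ U ∈ N, Module.finrank F ↥U = k)
    (hdisj : ∀ U ∈ N, ∀ W ∈ N, U ≠ W → U ⊓ W = ⊥)
    (hdiv : ∀ H : Submodule F (Fin v → F), Module.finrank F ↥H = v - 1 →
      n ≡ Set.ncard {U : Submodule F (Fin v → F) | U ∈ N ∧ U ≤ H} [MOD q ^ r]) :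
    q ^ k + 1 ≤ n := by
  classical
  by_contra hlt
  have hnk : n ≤ q ^ k := by omega
  have : Finite (Module.Dual F (Fin v → F)) := Module.finite_of_finite F
  let _ : Fintype (Module.Dual F (Fin v → F)) := Fintype.ofFinite _
  have hq2 : 2 ≤ q := by rw [hq]; exact Fintype.one_lt_card
  have hqk : q ≤ q ^ k := Nat.le_self_pow (by omega) q
  obtain ⟨U0, hU0⟩ := hne
  have hnpos : 1 ≤ n := by rw [← hn]; exact Finset.card_pos.2 ⟨U0, hU0⟩
  set i : Module.Dual F (Fin v → F) → ℕ := fun f => (N.filter fun U => U ≤ LinearMap.ker f).card with hi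
  have hi0 : i 0 = n := by simp [hi, hn]
  have hmod : ∀ f ≠ 0, n ≡ i f [MOD q] := by
    intro f hf
    have h := Module.Dual.finrank_ker_add_one_of_ne_zero (f := f) hf
    rw [Module.finrank_fin_fun] at h
    have h2 := hdiv (LinearMap.ker f) (by omega)
    have h3 : Set.ncard {U : Submodule F (Fin v → F) | U ∈ N ∧ U ≤ LinearMap.ker f} = i f := by
      show _ = (N.filter fun U => U ≤ LinearMap.ker f).card
      rw [← Set.ncard_coe_finset]
      congr 1
      ext U
      simp
    rw [h3] at h2
    exact h2.of_dvd (dvd_pow_self q (by omega))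
  -- double counting over a set S of functionals
  have hdc : ∀ S : Finset (Module.Dual F (Fin v → F)),
      ∑ f ∈ S, i f = ∑ U ∈ N, (S.filter fun f => U ≤ LinearMap.ker f).card := by
    intro S
    simp only [hi, Finset.card_filter]
    exact Finset.sum_comm
  have hcard : ∀ U ∈ N, (Finset.univ.filter fun f : Module.Dual F (Fin v → F) =>
      U ≤ LinearMap.ker f).card * q ^ k = q ^ v := by
    intro U hU
    have := aux_annih_card_s9 v U
    rwa [hdim U hU, ← hq] at this
  have hqkpos : 0 < q ^ k := by positivity
  have hcardV : (Finset.univ : Finset (Module.Dual F (Fin v → F))).card = q ^ v := by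
    have := aux_annih_card_s9 (F := F) v ⊥
    simpa [← hq] using this
  set S := Finset.univ.filter fun f : Module.Dual F (Fin v → F) => U0 ≤ LinearMap.ker f with hS
  have hA : S.card * q ^ k = q ^ v := hcard U0 hU0
  have h0S : (0 : Module.Dual F (Fin v → F)) ∈ S := by simp [hS]
  have hsame : ∀ U ∈ N, (Finset.univ.filter fun f : Module.Dual F (Fin v → F) =>
      U ≤ LinearMap.ker f).card = S.card := by
    intro U hU
    exact Nat.eq_of_mul_eq_mul_right hqkpos ((hcard U hU).trans hA.symm)
  -- step 1
  have hdvd : q ∣ n := by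
    by_contra hnd
    have hpos : ∀ f ≠ 0, 1 ≤ i f := by
      intro f hf
      by_contra h
      have h0 : i f = 0 := by omega
      have := hmod f hf
      rw [h0] at this
      exact hnd ((Nat.modEq_zero_iff_dvd).1 this)
    have hsum : ∑ f, i f = n * S.card := by
      rw [hdc, Finset.sum_congr rfl hsame, Finset.sum_const, hn, smul_eq_mul]
    have hge : (q ^ v - 1) + n ≤ ∑ f, i f := by
      rw [← Finset.sum_erase_add _ _ (Finset.mem_univ 0), hi0, ← hcardV,
        ← Finset.card_erase_of_mem (Finset.mem_univ 0)]
      gcongr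
      rw [Finset.card_eq_sum_ones]
      exact Finset.sum_le_sum fun f hf => hpos f (Finset.ne_of_mem_erase hf)
    rw [hsum] at hge
    have hSpos : 0 < S.card := Finset.card_pos.2 ⟨0, h0S⟩
    have h1 : n * S.card ≤ q ^ v := by rw [← hA, mul_comm]; gcongr
    have hn1 : n = 1 := by omega
    subst hn1
    have h2 : q ^ v ≤ S.card := by omega
    nlinarith
  -- step 2
  have hn2 : q ≤ n := Nat.le_of_dvd hnpos hdvd
  have hge : ∀ f ∈ S, q ≤ i f := by
    intro f hf
    have hp : 0 < i f := Finset.card_pos.2 ⟨U0, by simpa [hU0, hS] using hf⟩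
    by_cases h0 : f = 0
    · rw [h0, hi0]; exact hn2
    · exact Nat.le_of_dvd hp (((hmod f h0).dvd_iff dvd_rfl).1 hdvd)
  have hlow : q * (S.card - 1) + n ≤ ∑ f ∈ S, i f := by
    rw [← Finset.sum_erase_add _ _ h0S, hi0, ← Finset.card_erase_of_mem h0S]
    gcongr
    rw [mul_comm, ← smul_eq_mul]
    exact Finset.card_nsmul_le_sum _ _ _ fun f hf => hge f (Finset.mem_of_mem_erase hf)
  have hB : ∀ U ∈ N.erase U0, (S.filter fun f => U ≤ LinearMap.ker f).card * q ^ k = S.card := by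
    intro U hU
    have hUN := Finset.mem_of_mem_erase hU
    have h1 : (S.filter fun f => U ≤ LinearMap.ker f) =
        Finset.univ.filter fun f : Module.Dual F (Fin v → F) => (U0 ⊔ U) ≤ LinearMap.ker f := by
      rw [hS, Finset.filter_filter]
      simp only [sup_le_iff]
    have h2 := aux_annih_card_s9 v (U0 ⊔ U)
    have h3 := Submodule.finrank_sup_add_finrank_inf_eq U0 U
    rw [hdisj U0 hU0 U hUN (Finset.ne_of_mem_erase hU).symm, finrank_bot, hdim _ hU0,
      hdim _ hUN, add_zero] at h3
    rw [h3, ← hq, ← h1, pow_add, ← mul_assoc, ← hA] at h2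
    exact Nat.eq_of_mul_eq_mul_right hqkpos h2
  have hup : (∑ f ∈ S, i f) * q ^ k = S.card * q ^ k + (n - 1) * S.card := by
    rw [hdc, ← Finset.sum_erase_add _ _ hU0, add_mul, Finset.sum_mul, Finset.sum_congr rfl hB,
      Finset.sum_const, Finset.card_erase_of_mem hU0, hn, smul_eq_mul, add_comm]
    congr 3
    rw [Finset.filter_true_of_mem]
    intro f hf
    simpa [hS] using hf
  have hSpos : 0 < S.card := Finset.card_pos.2 ⟨0, h0S⟩
  obtain ⟨a, ha⟩ : ∃ a, S.card = a + 1 := ⟨S.card - 1, by omega⟩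
  obtain ⟨m, rfl⟩ : ∃ m, n = m + 1 := ⟨n - 1, by omega⟩
  have hlow' : 2 * S.card ≤ ∑ f ∈ S, i f := by
    refine le_trans ?_ hlow
    rw [ha, Nat.add_sub_cancel]
    nlinarith
  have h5 : 2 * S.card * q ^ k ≤ (∑ f ∈ S, i f) * q ^ k := Nat.mul_le_mul_right _ hlow'
  rw [hup, Nat.add_sub_cancel] at h5
  nlinarith
end

section
/- Let N be a nonempty q^r-divisible set of n k-dimensional subspaces of F_q^v with r ≥ k. If k divides r, then n ≥ (q^{k+r}−1)/(q^k−1); if k does not divide r, then writing r = a·k + b with integers a ≥ 1 and 0 < b < k, one has n ≥ (q^{(a+2)k}−1)/(q^k−1). -/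
set_option maxHeartbeats 1000000 in
theorem aux_arith (x y p s X n a' : ℤ) (hs : 2 ≤ s) (hp : 2 ≤ p) (hsp : s * p = x)
    (hxy : x ≤ y) (hy : y - 1 = (x - 1) * a') (hn : 1 ≤ n) (hX : X = n * (x - 1))
    (hA : ∀ m : ℤ, 0 ≤ (X - m * (y * p * x)) * (X - (m - 1) * (y * p * x)) + X)
    (hB : ∀ m : ℤ, n < (m + 1) * (y * p) → X ≤ m * (y * p * x)) :
    y * x * x - 1 ≤ X := by
  by_contra hcon
  push Not at hcon
  have hx4 : 4 ≤ x := by nlinarith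
  have hQpos : 0 < y * p := by nlinarith
  obtain ⟨m, hm⟩ : ∃ m, m = n / (y * p) := ⟨_, rfl⟩
  have hm1 : m * (y * p) ≤ n := by rw [hm]; exact Int.ediv_mul_le _ hQpos.ne'
  have hm2 : n < (m + 1) * (y * p) := by rw [hm]; exact Int.lt_ediv_add_one_mul_self _ hQpos
  have hXm := hB m hm2
  have hAm := hA m
  clear hA hB
  have hXpos : 0 < X := by rw [hX]; exact mul_pos (by linarith) (by linarith)
  have hRpos : 0 < y * p * x := by nlinarith
  have hmpos : 1 ≤ m := by
    by_contra h
    have : m ≤ 0 := by linarith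
    nlinarith
  obtain ⟨e, he⟩ : ∃ e, e = m * (y * p * x) - X := ⟨_, rfl⟩
  have he0 : 0 ≤ e := by linarith
  have hXge : m * (y * p) * (x - 1) ≤ X := by
    rw [hX]; exact mul_le_mul_of_nonneg_right hm1 (by linarith)
  have hyx : 0 < y * x := by nlinarith
  have hyxp : 2 * (y * x) ≤ y * p * x := by nlinarith
  have hms : m ≤ s := by
    by_contra h
    have h1 : s + 1 ≤ m := by linarith
    have h2 : (s + 1) * (y * p) * (x - 1) ≤ X := by
      refine le_trans ?_ hXge
      exact mul_le_mul_of_nonneg_right (mul_le_mul_of_nonneg_right h1 hQpos.le) (by linarith)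
    have h3 : (s + 1) * (y * p) * (x - 1) = y * x * x + y * p * x - y * x - y * p := by
      rw [← hsp]; ring
    have h4 : p ≤ x := by nlinarith
    have h5 : y * p ≤ y * x := mul_le_mul_of_nonneg_left h4 (by linarith)
    linarith
  have heQ : e ≤ y * x := by
    have h1 : e ≤ m * (y * p) := by rw [he]; linarith
    have h2 : m * (y * p) ≤ s * (y * p) := mul_le_mul_of_nonneg_right hms hQpos.le
    have h3 : s * (y * p) = y * x := by rw [← hsp]; ring
    linarith
  have hq : e * (y * p * x - e) ≤ m * (y * p * x) - e := by
    have hXe : X = m * (y * p * x) - e := by linarith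
    rw [hXe] at hAm
    nlinarith
  have hR8 : 8 * (s * s) ≤ y * p * x := by
    have h1 : x * p * x ≤ y * p * x := by
      apply mul_le_mul_of_nonneg_right _ (by linarith)
      exact mul_le_mul_of_nonneg_right hxy (by linarith)
    have h2 : x * p * x = (s * s) * (p * p * p) := by rw [← hsp]; ring
    have h3 : 8 ≤ p * p * p := by nlinarith
    have h4 : 0 ≤ s * s := by nlinarith
    nlinarith
  generalize hR : y * p * x = R at *
  have he2 : e ≤ 2 * m := by
    by_contra h
    have h1 : 2 * m + 1 ≤ e := by linarith
    have h2 : R ≤ 2 * (R - e) := by linarith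
    have h3 : e * R ≤ e * (2 * (R - e)) := mul_le_mul_of_nonneg_left h2 he0
    have h4 : (2 * m + 1) * R ≤ e * R := mul_le_mul_of_nonneg_right h1 hRpos.le
    have h5 : e * (2 * (R - e)) = 2 * (e * (R - e)) := by ring
    have h6 : (2 * m + 1) * R = 2 * (m * R) + R := by ring
    linarith
  have hem : e ≤ m := by
    by_contra h
    have h1 : m + 1 ≤ e := by linarith
    have h2 : (m + 1) * R ≤ e * R := mul_le_mul_of_nonneg_right h1 hRpos.le
    have h3 : e * e ≤ (2 * m) * (2 * m) := mul_le_mul he2 he2 he0 (by linarith)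
    have h4 : m * m ≤ s * s := mul_le_mul hms hms (by linarith) (by linarith)
    have h5 : e * (R - e) = e * R - e * e := by ring
    have h6 : (m + 1) * R = m * R + R := by ring
    have h7 : (2 * m) * (2 * m) = 4 * (m * m) := by ring
    have h8 : 0 ≤ s * s := mul_self_nonneg s
    linarith
  have hdvd : (x - 1) ∣ (m * p - e) := by
    refine ⟨n - m * p * (a' * x + 1), ?_⟩
    have h1 : m * R - e = n * (x - 1) := by rw [← hX]; linarith
    have h2 : R = p * (((x - 1) * a' + 1) * x) := by rw [← hR, ← hy]; ring
    rw [h2] at h1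
    linear_combination h1
  have hge : x - 1 ≤ m * p - e := by
    apply Int.le_of_dvd _ hdvd
    nlinarith
  rcases lt_or_eq_of_le hms with h | h
  · have : m * p ≤ (s - 1) * p := mul_le_mul_of_nonneg_right (by linarith) (by linarith)
    nlinarith
  · subst h
    have h1 : m * R = y * x * x := by rw [← hR, ← hsp]; ring
    linarith

open Classical in
theorem aux_count_s10 {F : Type} [Field F] [Fintype F] (v k Q : ℕ)
    (N : Finset (Submodule F (Fin v → F))) (hkv : k ≤ v)
    (hdim : ∀ U ∈ N, Module.finrank F ↥U = k)
    (hdisj : ∀ U ∈ N, ∀ W ∈ N, U ≠ W → U ⊓ W = ⊥)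
    (hdiv : ∀ H : Submodule F (Fin v → F), Module.finrank F ↥H = v - 1 →
      N.card ≡ Set.ncard {U : Submodule F (Fin v → F) | U ∈ N ∧ U ≤ H} [MOD Q])
    (x n X : ℤ) (hx : x = (Fintype.card F : ℤ) ^ k) (hn : n = N.card) (hX : X = n * (x - 1)) :
    (∀ m : ℤ, 0 ≤ (X - m * (Q * x)) * (X - (m - 1) * (Q * x)) + X) ∧
    (∀ m : ℤ, n < (m + 1) * Q → X ≤ m * (Q * x)) := by
  have : Finite (Module.Dual F (Fin v → F)) := Module.finite_of_finite F
  have : Fintype (Module.Dual F (Fin v → F)) := Fintype.ofFinite _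
  let V := Fin v → F
  let T : ℤ := Fintype.card (Module.Dual F V)
  have hTpos : 0 < T := by
    have : 0 < Fintype.card (Module.Dual F V) := Fintype.card_pos
    exact Int.natCast_pos.mpr this
  have hcard : ∀ (W : Submodule F V) , (Fintype.card F : ℤ) ^ (Module.finrank F W) *
      (∑ f : Module.Dual F V, if W ≤ LinearMap.ker f then (1:ℤ) else 0) = T := by
    intro W
    have h1 : (∑ f : Module.Dual F V, if W ≤ LinearMap.ker f then (1:ℤ) else 0)
        = Nat.card W.dualAnnihilator := by
      rw [Finset.sum_boole, Nat.card_eq_fintype_card, Fintype.card_subtype]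
      norm_cast
      congr 1
      ext f
      simp [Submodule.mem_dualAnnihilator, SetLike.le_def]
    have h2 := Subspace.finrank_add_finrank_dualAnnihilator_eq W
    rw [h1, Module.natCard_eq_pow_finrank (K := F) (V := W.dualAnnihilator), Nat.card_eq_fintype_card]
    push_cast
    rw [← pow_add, h2]
    have h3 := Module.natCard_eq_pow_finrank (K := F) (V := Module.Dual F V)
    rw [Subspace.dual_finrank_eq, Nat.card_eq_fintype_card, Nat.card_eq_fintype_card] at h3
    simp only [T]
    rw [h3]; push_cast; rfl
  let c : Submodule F V → Module.Dual F V → ℤ := fun U f => if U ≤ LinearMap.ker f then 1 else 0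
  let h : Module.Dual F V → ℤ := fun f => ∑ U ∈ N, c U f
  have hS1 : x * ∑ f, h f = n * T := by
    simp only [h]
    rw [Finset.sum_comm, Finset.mul_sum, hn, ← nsmul_eq_mul]
    apply Finset.sum_eq_card_nsmul
    intro U hU
    rw [hx, ← hdim U hU]
    exact hcard U
  have hS2 : x * x * ∑ f, h f * h f = n * x * T + n * (n - 1) * T := by
    have e1 : ∀ f, h f * h f = ∑ U ∈ N, ∑ W ∈ N, c U f * c W f := by
      intro f; simp only [h]; rw [Finset.sum_mul_sum]
    simp only [e1]
    rw [Finset.sum_comm, Finset.mul_sum]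
    have e2 : ∀ U ∈ N, x * x * ∑ f, ∑ W ∈ N, c U f * c W f = x * T + (n - 1) * T := by
      intro U hU
      rw [Finset.sum_comm, ← Finset.add_sum_erase _ _ hU, mul_add]
      congr 1
      · have : ∀ f, c U f * c U f = c U f := by intro f; simp only [c]; split_ifs <;> simp
        simp only [this]
        rw [mul_assoc]
        congr 1
        rw [hx, ← hdim U hU]
        exact hcard U
      · rw [Finset.mul_sum]
        have : (n - 1 : ℤ) = ((N.erase U).card : ℤ) := by
          rw [Finset.card_erase_of_mem hU, hn, Nat.cast_sub (Finset.card_pos.mpr ⟨U, hU⟩)]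
          simp
        rw [this, ← nsmul_eq_mul]
        apply Finset.sum_eq_card_nsmul
        intro W hW
        have hWN := Finset.mem_of_mem_erase hW
        have hne := (Finset.ne_of_mem_erase hW).symm
        have hd := Submodule.finrank_sup_add_finrank_inf_eq U W
        rw [hdisj U hU W hWN hne, finrank_bot, add_zero, hdim U hU, hdim W hWN] at hd
        rw [← hcard (U ⊔ W), hd, hx, pow_add]
        congr 1
        apply Finset.sum_congr rfl
        intro f _
        simp only [c, sup_le_iff]
        by_cases h1 : U ≤ LinearMap.ker f <;> by_cases h2 : W ≤ LinearMap.ker f <;> simp [h1, h2]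
    rw [Finset.sum_congr rfl e2, Finset.sum_const, nsmul_eq_mul, ← hn]
    ring
  have hhn : ∀ f, h f = ((N.filter (fun U => U ≤ LinearMap.ker f)).card : ℤ) := by
    intro f; simp only [h, c]; rw [Finset.sum_boole]
  have hQ : ∀ f, (Q : ℤ) ∣ n - h f := by
    intro f
    by_cases hf : f = 0
    · subst hf
      rw [hhn]; simp [hn]
    · have h1 : Module.finrank F (LinearMap.ker f) = v - 1 := by
        have := Module.Dual.finrank_ker_add_one_of_ne_zero hf
        rw [Module.finrank_fin_fun] at this
        omega
      have h2 := hdiv _ h1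
      have h3 : {U : Submodule F (Fin v → F) | U ∈ N ∧ U ≤ LinearMap.ker f} =
          ((N.filter (fun U => U ≤ LinearMap.ker f) : Finset _) : Set _) := by
        ext U; simp
      rw [h3, Set.ncard_coe_finset] at h2
      rw [hhn, hn]
      exact (Nat.modEq_iff_dvd.mp h2.symm)
  have hh0 : ∀ f, 0 ≤ h f := by intro f; rw [hhn]; positivity
  have hxpos : 0 < x := by
    rw [hx]; have : 0 < Fintype.card F := Fintype.card_pos
    positivity
  have hsum1 : ∑ _f : Module.Dual F V, (1:ℤ) = T := by simp [T]
  constructor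
  · intro m
    have key : 0 ≤ ∑ f, (n - h f - m * Q) * (n - h f - (m - 1) * Q) := by
      apply Finset.sum_nonneg
      intro f _
      obtain ⟨j, hj⟩ := hQ f
      rw [hj]
      have : ((Q:ℤ) * j - m * Q) * (Q * j - (m - 1) * Q) = Q * Q * ((j - m) * (j - m + 1)) := by ring
      rw [this]
      apply mul_nonneg (by positivity)
      rcases le_or_gt 0 (j - m) with h | h
      · exact mul_nonneg h (by linarith)
      · exact mul_nonneg_of_nonpos_of_nonpos h.le (by linarith)
    have e : ∑ f, (n - h f - m * Q) * (n - h f - (m - 1) * Q) =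
        (n - m * Q) * (n - (m - 1) * Q) * T - (2 * n - (2 * m - 1) * Q) * ∑ f, h f + ∑ f, h f * h f := by
      rw [← hsum1, Finset.mul_sum, Finset.mul_sum, ← Finset.sum_sub_distrib, ← Finset.sum_add_distrib]
      apply Finset.sum_congr rfl
      intro f _
      ring
    rw [e] at key
    have key2 := mul_nonneg (mul_pos hxpos hxpos).le key
    have e3 : x * x * ((n - m * Q) * (n - (m - 1) * Q) * T - (2 * n - (2 * m - 1) * Q) * ∑ f, h f + ∑ f, h f * h f)
      = T * ((X - m * (Q * x)) * (X - (m - 1) * (Q * x)) + X) := by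
      rw [hX]
      linear_combination hS2 - x * (2 * n - (2 * m - 1) * Q) * hS1
    rw [e3] at key2
    exact nonneg_of_mul_nonneg_right key2 hTpos
  · intro m hm
    have key : ∑ f, (n - h f) ≤ ∑ _f : Module.Dual F V, m * Q := by
      apply Finset.sum_le_sum
      intro f _
      obtain ⟨j, hj⟩ := hQ f
      rw [hj, mul_comm]
      apply mul_le_mul_of_nonneg_right _ (by positivity)
      by_contra hc
      have h1 : m + 1 ≤ j := by linarith
      have h2 : (m + 1) * (Q:ℤ) ≤ j * Q := mul_le_mul_of_nonneg_right h1 (by positivity)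
      have := hh0 f
      linarith
    have e : ∑ f, (n - h f) = n * T - ∑ f, h f := by
      rw [← hsum1, Finset.mul_sum, ← Finset.sum_sub_distrib]; simp
    have e' : ∑ _f : Module.Dual F V, m * (Q:ℤ) = m * Q * T := by
      rw [← hsum1, Finset.mul_sum]; simp
    rw [e, e'] at key
    have key2 := mul_le_mul_of_nonneg_left key hxpos.le
    have : T * X ≤ T * (m * (Q * x)) := by
      rw [hX]; linarith
    exact le_of_mul_le_mul_left this hTpos


/-- For a nonempty `q^r`-divisible set of `n` `k`-subspaces of `F_q^v` with `r ≥ k`: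
if `k ∣ r` then `n ≥ (q^{k+r}-1)/(q^k-1)`; if `k ∤ r`, writing `r = a·k + b` with
`a ≥ 1` and `0 < b < k`, then `n ≥ (q^{(a+2)k}-1)/(q^k-1)`. -/
theorem divisible_set_card_lower_bound_large_r
    {F : Type} [Field F] [Fintype F] (q v k r n : ℕ)
    (hq : q = Fintype.card F) (hk : 1 ≤ k) (hr : 1 ≤ r) (hrk : k ≤ r)
    (N : Finset (Submodule F (Fin v → F))) (hn : N.card = n) (hne : N.Nonempty)
    (hdim : ∀ U ∈ N, Module.finrank F ↥U = k)
    (hdisj : ∀ U ∈ N, ∀ W ∈ N, U ≠ W → U ⊓ W = ⊥)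
    (hdiv : ∀ H : Submodule F (Fin v → F), Module.finrank F ↥H = v - 1 →
      n ≡ Set.ncard {U : Submodule F (Fin v → F) | U ∈ N ∧ U ≤ H} [MOD q ^ r]) :
    (k ∣ r → (q ^ (k + r) - 1) / (q ^ k - 1) ≤ n) ∧
    (¬ k ∣ r → ∀ a b : ℕ, 1 ≤ a → 0 < b → b < k → r = a * k + b →
      (q ^ ((a + 2) * k) - 1) / (q ^ k - 1) ≤ n) := by
  subst hn
  subst hq
  have hkv : k ≤ v := by
    obtain ⟨U, hU⟩ := hne
    have h1 := Submodule.finrank_le U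
    rw [hdim U hU, Module.finrank_fin_fun] at h1
    exact h1
  have hq2 : 2 ≤ Fintype.card F := Fintype.one_lt_card
  generalize hqq : Fintype.card F = q at *
  obtain ⟨hA, hB⟩ := aux_count_s10 v k (q ^ r) N hkv hdim hdisj hdiv ((q:ℤ) ^ k) N.card
    (N.card * ((q:ℤ) ^ k - 1)) (by rw [hqq]) rfl rfl
  have hn1 : 1 ≤ N.card := Finset.card_pos.mpr hne
  have hx2 : 2 ≤ q ^ k := le_trans hq2 (Nat.le_self_pow (by omega) q)
  have conv : ∀ t : ℕ, (q:ℤ) ^ t - 1 ≤ N.card * ((q:ℤ) ^ k - 1) →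
      (q ^ t - 1) / (q ^ k - 1) ≤ N.card := by
    intro t ht
    apply Nat.div_le_of_le_mul
    have h1 : 1 ≤ q ^ t := Nat.one_le_pow _ _ (by omega)
    zify [h1, (by omega : 1 ≤ q ^ k)]
    linarith
  constructor
  · intro _
    apply conv
    have h1 := hA 1
    have hXpos : (0:ℤ) < N.card * ((q:ℤ) ^ k - 1) := by
      have : (2:ℤ) ≤ (q:ℤ) ^ k := by exact_mod_cast hx2
      exact mul_pos (by exact_mod_cast hn1) (by linarith)
    generalize (N.card * ((q:ℤ) ^ k - 1) : ℤ) = X at *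
    push_cast at h1
    have h2 : (q:ℤ) ^ r * q ^ k = q ^ (k + r) := by ring
    rw [h2] at h1
    have h3 : 0 ≤ X * (X - (q:ℤ) ^ (k + r) + 1) := by linarith
    have := nonneg_of_mul_nonneg_right h3 hXpos
    linarith
  · intro _ a b ha hb hbk hrab
    apply conv
    have hxy : (q:ℤ) ^ k ≤ q ^ (a * k) := by
      exact_mod_cast Nat.pow_le_pow_right (by omega) (Nat.le_mul_of_pos_left k ha)
    obtain ⟨a', ha'⟩ : ((q:ℤ) ^ k - 1) ∣ (q ^ (a * k) - 1) := by
      rw [mul_comm, pow_mul]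
      simpa using sub_dvd_pow_sub_pow ((q:ℤ) ^ k) 1 a
    have hQ : ((q ^ r : ℕ) : ℤ) = (q:ℤ) ^ (a * k) * q ^ b := by
      rw [hrab]; push_cast; ring
    rw [hQ] at hA hB
    have hs : 2 ≤ q ^ (k - b) := le_trans hq2 (Nat.le_self_pow (by omega) q)
    have hp : 2 ≤ q ^ b := le_trans hq2 (Nat.le_self_pow (by omega) q)
    have := aux_arith ((q:ℤ) ^ k) (q ^ (a * k)) (q ^ b) (q ^ (k - b)) _ N.card a'
      (by exact_mod_cast hs) (by exact_mod_cast hp)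
      (by rw [← pow_add]; congr 1; omega) hxy ha' (by exact_mod_cast hn1) rfl hA hB
    refine le_trans (le_of_eq ?_) this
    rw [← pow_add, ← pow_add]
    congr 2
    ring
end

section
/- Let N be a nonempty q^r-divisible set of n k-dimensional subspaces of F_q^v such that q^r divides n, and suppose r < k. Then n ≥ q^{k+r} − q^k + q^r. -/
open Classical in
theorem ann_count_aux {F : Type} [Field F] [Fintype F] (v : ℕ)
    [Fintype (Module.Dual F (Fin v → F))] (U : Submodule F (Fin v → F)) (k : ℕ)
    (hU : Module.finrank F ↥U = k) :
    (Finset.univ.filter (fun φ : Module.Dual F (Fin v → F) => U ≤ LinearMap.ker φ)).card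
      = Fintype.card F ^ (v - k) := by
  have h1 := Subspace.finrank_add_finrank_dualAnnihilator_eq U
  rw [Module.finrank_fin_fun, hU] at h1
  have h2 : Module.finrank F U.dualAnnihilator = v - k := by omega
  rw [← h2, ← Nat.card_eq_fintype_card, ← Module.natCard_eq_pow_finrank (K := F) (V := U.dualAnnihilator),
    ← Fintype.card_subtype, ← Nat.card_eq_fintype_card]
  refine Nat.card_congr (Equiv.subtypeEquivRight fun φ => ?_)
  rw [Submodule.mem_dualAnnihilator]
  exact Iff.rfl

/-- A nonempty `q^r`-divisible set of `n` `k`-subspaces of `F_q^v` with `q^r ∣ n` and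
`r < k` satisfies `n ≥ q^{k+r} - q^k + q^r`. -/
theorem divisible_set_card_lower_bound_dvd_small_r
    {F : Type} [Field F] [Fintype F] (q v k r n : ℕ)
    (hq : q = Fintype.card F) (hk : 1 ≤ k) (hr : 1 ≤ r) (hrk : r < k)
    (N : Finset (Submodule F (Fin v → F))) (hn : N.card = n) (hne : N.Nonempty)
    (hdvd : q ^ r ∣ n)
    (hdim : ∀ U ∈ N, Module.finrank F ↥U = k)
    (hdisj : ∀ U ∈ N, ∀ W ∈ N, U ≠ W → U ⊓ W = ⊥)
    (hdiv : ∀ H : Submodule F (Fin v → F), Module.finrank F ↥H = v - 1 →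
      n ≡ Set.ncard {U : Submodule F (Fin v → F) | U ∈ N ∧ U ≤ H} [MOD q ^ r]) :
    q ^ (k + r) - q ^ k + q ^ r ≤ n := by
  classical
  have : Finite (Module.Dual F (Fin v → F)) := Module.finite_of_finite F
  have : Fintype (Module.Dual F (Fin v → F)) := Fintype.ofFinite _
  have hq2 : 2 ≤ q := by rw [hq]; exact Fintype.one_lt_card
  have hnpos : 0 < n := by rw [← hn]; exact hne.card_pos
  have htn : q ^ r ≤ n := Nat.le_of_dvd hnpos hdvd
  have hsup : ∀ U ∈ N, ∀ W ∈ N, U ≠ W → Module.finrank F ↥(U ⊔ W) = 2 * k := by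
    intro U hU W hW hne
    have h := Submodule.finrank_sup_add_finrank_inf_eq U W
    rw [hdisj U hU W hW hne, finrank_bot, hdim U hU, hdim W hW] at h
    omega
  have hv : 2 * k ≤ v := by
    have h1 : 1 < N.card := by
      have : q ^ 1 ≤ q ^ r := Nat.pow_le_pow_right (by omega) hr
      rw [pow_one] at this
      omega
    obtain ⟨U, hU, W, hW, hne⟩ := Finset.one_lt_card.1 h1
    have h := Submodule.finrank_le (U ⊔ W)
    rw [hsup U hU W hW hne, Module.finrank_fin_fun] at h
    exact h
  set a : Module.Dual F (Fin v → F) → ℕ :=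
    fun φ => (N.filter (fun U => U ≤ LinearMap.ker φ)).card with ha
  have ha0 : a 0 = n := by
    simp [ha, hn]
  have hadvd : ∀ φ, q ^ r ∣ a φ := by
    intro φ
    by_cases h0 : φ = 0
    · rw [h0, ha0]; exact hdvd
    · have hf : Module.finrank F ↥(LinearMap.ker φ) = v - 1 := by
        have := Module.Dual.finrank_ker_add_one_of_ne_zero h0
        rw [Module.finrank_fin_fun] at this
        omega
      have h := hdiv _ hf
      have e : Set.ncard {U : Submodule F (Fin v → F) | U ∈ N ∧ U ≤ LinearMap.ker φ} = a φ := by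
        simp only [ha]
        rw [← Set.ncard_coe_finset]
        congr 1
        ext U; simp
      rw [e] at h
      exact (h.dvd_iff dvd_rfl).1 hdvd
  have hS1 : ∑ φ, a φ = n * q ^ (v - k) := by
    simp only [ha, Finset.card_filter]
    rw [Finset.sum_comm]
    simp only [← Finset.card_filter]
    rw [Finset.sum_congr rfl (fun U hU => ann_count_aux v U k (hdim U hU))]
    simp [hn, hq]
  have hS2 : ∑ φ, a φ * a φ = n * q ^ (v - k) + n * (n - 1) * q ^ (v - 2 * k) := by
    have e1 : ∀ φ, a φ * a φ = ∑ U ∈ N, ∑ W ∈ N, if U ⊔ W ≤ LinearMap.ker φ then 1 else 0 := by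
      intro φ
      simp only [ha, Finset.card_filter]
      rw [Finset.sum_mul_sum]
      refine Finset.sum_congr rfl fun U _ => Finset.sum_congr rfl fun W _ => ?_
      simp only [sup_le_iff]
      by_cases h1 : U ≤ LinearMap.ker φ <;> by_cases h2 : W ≤ LinearMap.ker φ <;> simp [h1, h2]
    simp only [e1]
    rw [Finset.sum_comm]
    have e2 : ∀ U ∈ N, (∑ φ : Module.Dual F (Fin v → F), ∑ W ∈ N,
        if U ⊔ W ≤ LinearMap.ker φ then 1 else 0)
        = q ^ (v - k) + (n - 1) * q ^ (v - 2 * k) := by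
      intro U hU
      rw [Finset.sum_comm]
      simp only [← Finset.card_filter]
      rw [← Finset.add_sum_erase _ _ hU]
      congr 1
      · rw [sup_idem, ann_count_aux v U k (hdim U hU), hq]
      · rw [Finset.sum_congr rfl (fun W hW => ann_count_aux v (U ⊔ W) (2 * k)
          (hsup U hU W (Finset.mem_of_mem_erase hW) (Finset.ne_of_mem_erase hW).symm))]
        simp [Finset.card_erase_of_mem hU, hn, hq]
    rw [Finset.sum_congr rfl e2]
    simp [hn]; ring
  have hpt : ∀ φ, (0 : ℤ) ≤ (a φ : ℤ) * a φ - q ^ r * a φ := by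
    intro φ
    rcases Nat.eq_zero_or_pos (a φ) with h | h
    · simp [h]
    · have h1 : ((q ^ r : ℕ) : ℤ) ≤ a φ := by exact_mod_cast Nat.le_of_dvd h (hadvd φ)
      push_cast at h1
      nlinarith
  have hsum : (0 : ℤ) ≤ ∑ φ, ((a φ : ℤ) * a φ - q ^ r * a φ) :=
    Finset.sum_nonneg fun φ _ => hpt φ
  rw [Finset.sum_sub_distrib, ← Finset.mul_sum] at hsum
  have hS1' : ∑ φ, (a φ : ℤ) = n * q ^ (v - k) := by exact_mod_cast hS1
  have hS2' : ∑ φ, (a φ : ℤ) * a φ = n * q ^ (v - k) + n * (n - 1) * q ^ (v - 2 * k) := by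
    have : ((n - 1 : ℕ) : ℤ) = n - 1 := by push_cast [Nat.cast_sub hnpos]; ring
    rw [← this]
    exact_mod_cast hS2
  rw [hS1', hS2'] at hsum
  have hvk : v - k = k + (v - 2 * k) := by omega
  rw [hvk, pow_add] at hsum
  have hP : (0 : ℤ) < (n : ℤ) * q ^ (v - 2 * k) := by positivity
  have hfin : (0 : ℤ) ≤ (q : ℤ) ^ k + (n - 1) - q ^ r * q ^ k := by
    by_contra hc
    push Not at hc
    nlinarith [mul_neg_of_pos_of_neg hP hc]
  have hlow : q ^ (k + r) + 1 ≤ n + q ^ k := by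
    rw [pow_add]
    zify
    nlinarith
  -- divisibility
  obtain ⟨c, rfl⟩ := hdvd
  obtain ⟨d, rfl⟩ : ∃ d, k = r + d := ⟨k - r, by omega⟩
  have e1 : q ^ (r + d + r) = q ^ r * q ^ (d + r) := by rw [← pow_add]; congr 1; omega
  have e2 : q ^ (r + d) = q ^ r * q ^ d := pow_add _ _ _
  have hle : q ^ d ≤ q ^ (d + r) := Nat.pow_le_pow_right (by omega) (by omega)
  rw [e1, e2] at hlow ⊢
  have h3 : q ^ (d + r) < c + q ^ d := by
    apply Nat.lt_of_mul_lt_mul_left (a := q ^ r)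
    rw [mul_add]; omega
  rw [← Nat.mul_sub, ← Nat.mul_succ]
  exact Nat.mul_le_mul_left _ (by omega)
end

section
/- Let P be a vector space partition of F_q^v of type d_l^{u_l}⋯d_2^{u_2}d_1^{u_1}, where u_1, u_2 > 0 and d_l > ⋯ > d_2 > d_1 ≥ 1. If q^{d_2−d_1} does not divide u_1 and d_2 < 2d_1, then u_1 ≥ q^{d_1} + 1. -/
open Classical in
lemma heden_fiber {F W : Type} [Field F] [Fintype F] [AddCommGroup W] [Module F W] [Fintype W]
    (ψ : W →ₗ[F] F) (h : ψ ≠ 0) :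
    Fintype.card F * (Finset.univ.filter (fun x : W => ψ x = 1)).card
      = Fintype.card F ^ Module.finrank F W := by
  have hs : Function.Surjective ψ := LinearMap.surjective h
  rw [← Module.card_eq_pow_finrank (K := F) (V := W), ← Finset.card_univ (α := W),
    Finset.card_eq_sum_card_fiberwise (s := (Finset.univ : Finset W)) (f := ψ) (t := Finset.univ) (by simp)]
  have : ∀ b ∈ (Finset.univ : Finset F), (Finset.univ.filter (fun x : W => ψ x = b)).card
      = (Finset.univ.filter (fun x : W => ψ x = 1)).card := by
    intro b _
    obtain ⟨y, hy⟩ := hs (b - 1)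
    symm
    refine Finset.card_bij (fun x _ => x + y) ?_ ?_ ?_
    · intro x hx
      simp at hx ⊢
      rw [hx, hy]; ring
    · intro a _ c _ hac
      exact add_right_cancel hac
    · intro z hz
      refine ⟨z - y, ?_, by simp⟩
      simp at hz ⊢
      rw [hz, hy]; ring
  rw [Finset.sum_congr rfl this]
  simp

open Classical in
lemma heden_sum {F : Type} [Field F] [Fintype F] (v : ℕ)
    (P : Finset (Submodule F (Fin v → F)))
    (hpart : ∀ x : Fin v → F, x ≠ 0 →
      ∃! U : Submodule F (Fin v → F), U ∈ P ∧ x ∈ U)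
    (φ : (Fin v → F) →ₗ[F] F) (h : φ ≠ 0) :
    ∑ U ∈ P, (if U ≤ LinearMap.ker φ then 0 else Fintype.card F ^ Module.finrank F U)
      = Fintype.card F ^ v := by
  have h1 := heden_fiber φ h
  rw [Module.finrank_fin_fun] at h1
  rw [← h1]
  have h2 : (Finset.univ.filter (fun x : Fin v → F => φ x = 1))
      = P.biUnion (fun U => Finset.univ.filter (fun x : Fin v → F => x ∈ U ∧ φ x = 1)) := by
    ext x
    simp only [Finset.mem_filter, Finset.mem_univ, true_and, Finset.mem_biUnion]
    constructor
    · intro hx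
      have hx0 : x ≠ 0 := by rintro rfl; simp at hx
      obtain ⟨U, hU, -⟩ := hpart x hx0
      exact ⟨U, hU.1, hU.2, hx⟩
    · rintro ⟨U, _, _, hx⟩; exact hx
  rw [h2, Finset.card_biUnion, Finset.mul_sum]
  · refine Finset.sum_congr rfl fun U _ => ?_
    split_ifs with hU
    · symm
      rw [mul_eq_zero]; right
      rw [Finset.card_eq_zero, Finset.filter_eq_empty_iff]
      rintro x - ⟨hx, hx1⟩
      have := hU hx
      rw [LinearMap.mem_ker, hx1] at this
      exact one_ne_zero this
    · have hne : φ.comp U.subtype ≠ 0 := by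
        intro h0
        apply hU
        intro x hx
        exact LinearMap.congr_fun h0 ⟨x, hx⟩
      rw [← heden_fiber _ hne]
      congr 1
      refine Finset.card_bij (fun x _ => (x : Fin v → F)) ?_ ?_ ?_
      · intro a ha
        exact Finset.mem_filter.2 ⟨Finset.mem_univ _, a.2, (Finset.mem_filter.1 ha).2⟩
      · intro a _ b _ hab
        exact Subtype.ext hab
      · intro b hb
        simp only [Finset.mem_filter, Finset.mem_univ, true_and] at hb
        exact ⟨⟨b, hb.1⟩, Finset.mem_filter.2 ⟨Finset.mem_univ _, hb.2⟩, rfl⟩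
  · intro U hU W hW hUW
    rw [Function.onFun, Finset.disjoint_left]
    intro x hx hx'
    simp only [Finset.mem_filter, Finset.mem_univ, true_and] at hx hx'
    have hx0 : x ≠ 0 := by rintro rfl; simp at hx
    exact hUW ((hpart x hx0).unique ⟨hU, hx.1⟩ ⟨hW, hx'.1⟩)

open Classical in
lemma heden_core {F : Type} [Field F] [Fintype F] (v k e : ℕ) (hk : 1 ≤ k) (hke : k < e)
    (hev : e ≤ v) (P T : Finset (Submodule F (Fin v → F))) (hTP : T ⊆ P)
    (hpart : ∀ x : Fin v → F, x ≠ 0 →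
      ∃! U : Submodule F (Fin v → F), U ∈ P ∧ x ∈ U)
    (hT : ∀ U ∈ T, Module.finrank F U = k)
    (hT' : ∀ U ∈ P, U ∉ T → e ≤ Module.finrank F U)
    (hnd : ¬ Fintype.card F ^ (e - k) ∣ T.card) :
    Fintype.card F ^ k + 1 ≤ T.card := by
  have hq : 1 < Fintype.card F := Fintype.one_lt_card
  have key : ∀ φ : Module.Dual F (Fin v → F), φ ≠ 0 → ∃ U ∈ T, U ≤ LinearMap.ker φ := by
    intro φ hφ
    by_contra! hcon
    have hs := heden_sum v P hpart φ hφ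
    rw [← Finset.sum_sdiff hTP] at hs
    have hsT : ∑ U ∈ T, (if U ≤ LinearMap.ker φ then 0 else Fintype.card F ^ Module.finrank F U)
        = T.card * Fintype.card F ^ k := by
      rw [Finset.sum_congr rfl (g := fun _ => Fintype.card F ^ k)]
      · simp
      · intro U hU
        rw [if_neg (hcon U hU), hT U hU]
    rw [hsT] at hs
    have hd1 : Fintype.card F ^ e ∣ ∑ U ∈ P \ T,
        (if U ≤ LinearMap.ker φ then 0 else Fintype.card F ^ Module.finrank F U) := by
      refine Finset.dvd_sum fun U hU => ?_
      rw [Finset.mem_sdiff] at hU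
      split_ifs
      · exact dvd_zero _
      · exact pow_dvd_pow _ (hT' U hU.1 hU.2)
    have hd2 : Fintype.card F ^ e ∣ T.card * Fintype.card F ^ k := by
      rw [← Nat.dvd_add_right hd1, hs]
      exact pow_dvd_pow _ hev
    apply hnd
    have : Fintype.card F ^ e = Fintype.card F ^ (e - k) * Fintype.card F ^ k := by
      rw [← pow_add]; congr 1; omega
    rw [this] at hd2
    exact Nat.dvd_of_mul_dvd_mul_right (by positivity) hd2
  letI : Fintype (Module.Dual F (Fin v → F)) :=
    @Fintype.ofFinite _ (Module.finite_of_finite F)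
  have hcard : Fintype.card (Module.Dual F (Fin v → F)) = Fintype.card F ^ v := by
    rw [Module.card_eq_pow_finrank (K := F), Subspace.dual_finrank_eq, Module.finrank_fin_fun]
  have hsub : (Finset.univ : Finset (Module.Dual F (Fin v → F))).erase 0 ⊆
      T.biUnion (fun U => (Finset.univ.filter (fun φ => φ ∈ U.dualAnnihilator)).erase 0) := by
    intro φ hφ
    have h0 := Finset.ne_of_mem_erase hφ
    obtain ⟨U, hU, hle⟩ := key φ h0
    rw [Finset.mem_biUnion]
    refine ⟨U, hU, ?_⟩
    rw [Finset.mem_erase, Finset.mem_filter, Submodule.mem_dualAnnihilator]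
    exact ⟨h0, Finset.mem_univ _, fun w hw => hle hw⟩
  have hle := (Finset.card_le_card hsub).trans (Finset.card_biUnion_le_card_mul _ _
    (Fintype.card F ^ (v - k) - 1) ?_)
  · rw [Finset.card_erase_of_mem (Finset.mem_univ _), Finset.card_univ, hcard] at hle
    by_contra! hlt
    have h3 : T.card ≤ Fintype.card F ^ k := by omega
    have h4 := hle.trans (Nat.mul_le_mul_right _ h3)
    rw [Nat.mul_sub, ← pow_add, Nat.add_sub_cancel' (by omega : k ≤ v), mul_one] at h4
    have h5 : 1 < Fintype.card F ^ k := Nat.one_lt_pow (by omega) hq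
    have h6 : Fintype.card F ^ k ≤ Fintype.card F ^ v := Nat.pow_le_pow_right (by omega) (by omega)
    omega
  · intro U hU
    rw [Finset.card_erase_of_mem (by simp)]
    have := Subspace.finrank_add_finrank_dualAnnihilator_eq U
    rw [hT U hU, Module.finrank_fin_fun] at this
    have h7 : Module.finrank F U.dualAnnihilator = v - k := by omega
    have h8 := Module.card_eq_pow_finrank (K := F) (V := U.dualAnnihilator)
    rw [h7, Fintype.card_subtype] at h8
    rw [h8]


/-- Heden Theorem 1(i): if `q^{d_2-d_1} ∤ u_1` and `d_2 < 2d_1`, then `u_1 ≥ q^{d_1} + 1`.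
Here `d 0 = d_1`, `d 1 = d_2`. -/
theorem heden_tail_i
    {F : Type} [Field F] [Fintype F] (q v l : ℕ)
    (hq : q = Fintype.card F) (hl : 2 ≤ l)
    (d u : Fin l → ℕ) (hd : StrictMono d) (hd1 : 1 ≤ d ⟨0, by omega⟩)
    (hu1 : 0 < u ⟨0, by omega⟩) (hu2 : 0 < u ⟨1, by omega⟩)
    (P : Finset (Submodule F (Fin v → F)))
    (hpart : ∀ x : Fin v → F, x ≠ 0 →
      ∃! U : Submodule F (Fin v → F), U ∈ P ∧ x ∈ U)
    (htype : ∀ U ∈ P, ∃ i : Fin l, Module.finrank F ↥U = d i)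
    (hcount : ∀ i : Fin l, u i = Set.ncard
      {U : Submodule F (Fin v → F) | U ∈ P ∧ Module.finrank F ↥U = d i})
    (hndvd : ¬ q ^ (d ⟨1, by omega⟩ - d ⟨0, by omega⟩) ∣ u ⟨0, by omega⟩)
    (hcase : d ⟨1, by omega⟩ < 2 * d ⟨0, by omega⟩) :
    q ^ d ⟨0, by omega⟩ + 1 ≤ u ⟨0, by omega⟩ := by

  classical
  subst hq
  have hu0 : u ⟨0, by omega⟩ = (P.filter (fun U : Submodule F (Fin v → F) => Module.finrank F U = d ⟨0, by omega⟩)).card := by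
    rw [hcount, ← Set.ncard_coe_finset]
    congr 1
    ext U
    simp
  have hlt : d ⟨0, by omega⟩ < d ⟨1, by omega⟩ := hd (by simp [Fin.lt_def])
  have hev : d ⟨1, by omega⟩ ≤ v := by
    rw [hcount] at hu2
    obtain ⟨U, _, hU⟩ := Set.nonempty_of_ncard_ne_zero hu2.ne'
    rw [← hU]
    simpa using Submodule.finrank_le U
  rw [hu0] at hndvd ⊢
  refine heden_core v _ (d ⟨1, by omega⟩) hd1 hlt hev P _ (Finset.filter_subset _ _) hpart ?_ ?_ hndvd
  · intro U hU
    exact (Finset.mem_filter.1 hU).2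
  · intro U hU hUT
    obtain ⟨i, hi⟩ := htype U hU
    rw [hi]
    apply hd.monotone
    rw [Fin.le_def]
    by_contra! hc
    apply hUT
    rw [Finset.mem_filter]
    refine ⟨hU, ?_⟩
    rw [hi]
    congr 1
    ext
    simp at hc ⊢
    omega
end

section
/- Let P be a vector space partition of F_q^v of type d_l^{u_l}⋯d_2^{u_2}d_1^{u_1}, where u_1, u_2 > 0 and d_l > ⋯ > d_2 > d_1 ≥ 1. If q^{d_2−d_1} does not divide u_1 and d_2 ≥ 2d_1, then either d_1 divides d_2 and u_1 = (q^{d_2}−1)/(q^{d_1}−1), or u_1 > 2·q^{d_2−d_1}. -/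
open Classical in
lemma aux_fiber {F V : Type} [Field F] [Fintype F] [AddCommGroup V] [Module F V] [Fintype V]
    (g : V →ₗ[F] F) (hg : g ≠ 0) :
    (Finset.univ.filter (fun x => g x = 1)).card = Fintype.card F ^ (Module.finrank F V - 1) := by
  obtain ⟨y, hy⟩ : ∃ y, g y ≠ 0 := by
    by_contra h
    push Not at h
    exact hg (LinearMap.ext h)
  have h1 : g ((g y)⁻¹ • y) = 1 := by simp [hy]
  set x0 := (g y)⁻¹ • y
  have hk : Module.finrank F (LinearMap.ker g) = Module.finrank F V - 1 := by
    have := Module.Dual.finrank_ker_add_one_of_ne_zero (f := g) hg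
    omega
  rw [← hk, ← Module.card_eq_pow_finrank (K := F) (V := LinearMap.ker g), ← Fintype.card_coe]
  refine Fintype.card_congr
    { toFun := fun x => ⟨x.1 - x0, ?_⟩, invFun := fun x => ⟨x.1 + x0, ?_⟩,
      left_inv := ?_, right_inv := ?_ }
  · have := (Finset.mem_filter.1 x.2).2
    simp [this, h1]
  · have := LinearMap.mem_ker.1 x.2
    simp [this, h1]
  · intro x; simp
  · intro x; simp

open Classical in
lemma aux_fiber_sub {F V : Type} [Field F] [Fintype F] [AddCommGroup V] [Module F V] [Fintype V]
    (g : V →ₗ[F] F) (U : Submodule F V) :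
    (Finset.univ.filter (fun x => x ∈ U ∧ g x = 1)).card =
      if U ≤ LinearMap.ker g then 0 else Fintype.card F ^ (Module.finrank F U - 1) := by
  split_ifs with h
  · rw [Finset.card_eq_zero, Finset.filter_eq_empty_iff]
    rintro x - ⟨hx, h1⟩
    have := h hx
    simp [h1] at this
  · have hg : g.comp U.subtype ≠ 0 := by
      intro h0
      apply h
      intro x hx
      have := LinearMap.congr_fun h0 ⟨x, hx⟩
      simpa using this
    rw [← aux_fiber _ hg, ← Fintype.card_coe, ← Fintype.card_coe]
    refine Fintype.card_congr
      { toFun := fun x => ⟨⟨x.1, ?_⟩, ?_⟩, invFun := fun x => ⟨x.1.1, ?_⟩,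
        left_inv := ?_, right_inv := ?_ }
    · exact (Finset.mem_filter.1 x.2).2.1
    · exact Finset.mem_filter.2 ⟨Finset.mem_univ _, (Finset.mem_filter.1 x.2).2.2⟩
    · have := (Finset.mem_filter.1 x.2).2
      simpa using this
    · intro x; rfl
    · intro x; rfl

open Classical in
lemma aux_ann {F V : Type} [Field F] [Fintype F] [AddCommGroup V] [Module F V] [Fintype V]
    [Fintype (Module.Dual F V)] (U : Submodule F V) :
    (Finset.univ.filter (fun f : Module.Dual F V => U ≤ LinearMap.ker f)).card *
      Fintype.card F ^ (Module.finrank F U) = Fintype.card F ^ (Module.finrank F V) := by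
  have h1 := Subspace.finrank_add_finrank_dualAnnihilator_eq (W := U)
  rw [← h1, pow_add, mul_comm, ← Module.card_eq_pow_finrank (K := F) (V := U.dualAnnihilator),
    ← Fintype.card_coe]
  congr 1
  refine Fintype.card_congr (Equiv.subtypeEquivRight ?_)
  intro f
  simp [Submodule.mem_dualAnnihilator, SetLike.le_def]

lemma aux_arith_s14 (q k w r n : ℕ) (hq : 2 ≤ q) (hk : 1 ≤ k) (hkw : k ≤ w)
    (h : n * (q ^ w - q ^ (w - k)) = q ^ r * (q ^ w - 1))
    (hp : n * (q ^ k - 1) ≤ q ^ w - 1) :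
    w = r + k ∧ k ∣ w ∧ n * (q ^ k - 1) = q ^ w - 1 := by
  have hA : q ^ w = q ^ (w - k) * q ^ k := by rw [← pow_add]; congr 1; omega
  have hw1 : 1 < q ^ w := Nat.one_lt_pow (by omega) (by omega)
  have hApos : 0 < q ^ (w - k) := by positivity
  have h2 : q ^ (w - k) * (n * (q ^ k - 1)) = q ^ r * (q ^ w - 1) := by
    rw [← h]; conv_rhs => rw [hA]
    rw [← Nat.mul_sub_one]; ring
  have hc : Nat.Coprime (q ^ (w - k)) (q ^ w - 1) := by
    have : Nat.Coprime (q ^ w) (q ^ w - 1) := by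
      have := (Nat.coprime_self_sub_right (m := 1) (n := q ^ w) (by omega)).2 (by simp)
      exact this
    exact Nat.Coprime.coprime_dvd_left (pow_dvd_pow q (by omega)) this
  have hd : q ^ (w - k) ∣ q ^ r := hc.dvd_of_dvd_mul_right (Dvd.intro _ h2)
  obtain ⟨S, hS⟩ := hd
  rw [hS, mul_assoc] at h2
  have h3 := Nat.eq_of_mul_eq_mul_left hApos h2
  have hS0 : S ≠ 0 := by
    rintro rfl
    have : 0 < q ^ r := by positivity
    omega
  have hS1 : S = 1 := by
    by_contra hne
    have : 2 ≤ S := by omega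
    have : 2 * (q ^ w - 1) ≤ S * (q ^ w - 1) := Nat.mul_le_mul_right _ this
    omega
  subst hS1
  have hr : r = w - k := Nat.pow_right_injective hq (by simpa using hS)
  rw [one_mul] at h3
  refine ⟨by omega, ?_, h3⟩
  have hdv : (q ^ k - 1) ∣ q ^ w - 1 := Dvd.intro_left _ h3
  have hg := Nat.pow_sub_one_gcd_pow_sub_one q k w
  rw [Nat.gcd_eq_left hdv] at hg
  have e1 : 0 < q ^ k := by positivity
  have e2 : 0 < q ^ (Nat.gcd k w) := by positivity
  have : q ^ k = q ^ (Nat.gcd k w) := by omega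
  have := Nat.pow_right_injective hq this
  exact this ▸ Nat.gcd_dvd_right k w

open Classical in
lemma aux_core {F V : Type} [Field F] [Fintype F] [AddCommGroup V] [Module F V] [Fintype V]
    (N : Finset (Submodule F V)) (k r : ℕ) (hk1 : 1 ≤ k) (hne : N.Nonempty)
    (hk : ∀ U ∈ N, Module.finrank F U = k)
    (hdisj : ∀ U ∈ N, ∀ U' ∈ N, ∀ x, x ≠ 0 → x ∈ U → x ∈ U' → U = U')
    (hdvd : ∀ f : Module.Dual F V,
      Fintype.card F ^ r ∣ (N.filter (fun U => ¬ U ≤ LinearMap.ker f)).card)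
    (hlt : N.card < 2 * Fintype.card F ^ r) :
    k ∣ r + k ∧ N.card * (Fintype.card F ^ k - 1) = Fintype.card F ^ (r + k) - 1 := by
  have : Finite (Module.Dual F V) := Finite.of_injective (fun f => (f : V → F)) DFunLike.coe_injective
  have : Fintype (Module.Dual F V) := Fintype.ofFinite _
  set q := Fintype.card F with hqd
  have hq : 2 ≤ q := Fintype.one_lt_card
  set W : Submodule F V := N.sup id with hW
  set w := Module.finrank F W
  set v := Module.finrank F V with hv
  have hUW : ∀ U ∈ N, U ≤ W := fun U hU => Finset.le_sup (f := id) hU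
  have hkw : k ≤ w := by
    obtain ⟨U, hU⟩ := hne
    rw [← hk U hU]
    exact Submodule.finrank_mono (hUW U hU)
  have hwv : w ≤ v := Submodule.finrank_le W
  have hcardD : Fintype.card (Module.Dual F V) = q ^ v := by
    rw [Module.card_eq_pow_finrank (K := F), Subspace.dual_finrank_eq]
  -- complement counts
  have hcomp : ∀ U : Submodule F V,
      (Finset.univ.filter (fun f : Module.Dual F V => ¬ U ≤ LinearMap.ker f)).card
        = q ^ v - q ^ (v - Module.finrank F U) := by
    intro U
    have h1 := aux_ann U
    have h2 := Finset.card_filter_add_card_filter_not (s := Finset.univ)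
      (fun f : Module.Dual F V => U ≤ LinearMap.ker f)
    rw [Finset.card_univ, hcardD] at h2
    have hle : Module.finrank F U ≤ v := Submodule.finrank_le U
    have h3 : q ^ v = q ^ (v - Module.finrank F U) * q ^ Module.finrank F U := by
      rw [← pow_add]; congr 1; omega
    rw [← hqd, ← hv, h3] at h1
    have h4 := Nat.eq_of_mul_eq_mul_right (by positivity) h1
    omega
  have hb : ∀ f : Module.Dual F V, (N.filter (fun U => ¬ U ≤ LinearMap.ker f)).card
      = if ¬ W ≤ LinearMap.ker f then q ^ r else 0 := by
    intro f
    by_cases h : ¬ W ≤ LinearMap.ker f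
    · rw [if_pos h]
      have hpos : 0 < (N.filter (fun U => ¬ U ≤ LinearMap.ker f)).card := by
        rw [Finset.card_pos]
        by_contra hcon
        rw [Finset.not_nonempty_iff_eq_empty, Finset.filter_eq_empty_iff] at hcon
        apply h
        refine Finset.sup_le ?_
        intro U hU
        exact not_not.1 (hcon hU)
      have hle : (N.filter (fun U => ¬ U ≤ LinearMap.ker f)).card ≤ N.card :=
        Finset.card_filter_le _ _
      obtain ⟨c, hc⟩ := hdvd f
      rw [hc] at hpos hle ⊢
      have hc0 : c ≠ 0 := by rintro rfl; simp at hpos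
      have hc2 : c < 2 := by
        by_contra hcc
        have : q ^ r * 2 ≤ q ^ r * c := Nat.mul_le_mul_left _ (by omega)
        omega
      have : c = 1 := by omega
      simp [this]
    · rw [if_neg h, Finset.card_eq_zero, Finset.filter_eq_empty_iff]
      intro U hU
      exact not_not.2 ((hUW U hU).trans (not_not.1 h))
  have hsum : N.card * (q ^ v - q ^ (v - k)) = q ^ r * (q ^ v - q ^ (v - w)) := by
    have hdc := Finset.sum_card_bipartiteAbove_eq_sum_card_bipartiteBelow
      (s := (Finset.univ : Finset (Module.Dual F V))) (t := N)
      (fun f U => ¬ U ≤ LinearMap.ker f)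
    simp only [Finset.bipartiteAbove, Finset.bipartiteBelow] at hdc
    rw [Finset.sum_congr rfl (fun f _ => hb f), ← Finset.sum_filter, Finset.sum_const, hcomp W,
      Finset.sum_congr rfl (fun U hU => (hcomp U).trans (by rw [hk U hU])), Finset.sum_const] at hdc
    simp only [smul_eq_mul] at hdc
    rw [← hdc, mul_comm]
  have hfin : N.card * (q ^ w - q ^ (w - k)) = q ^ r * (q ^ w - 1) := by
    have e1 : q ^ v = q ^ (v - w) * q ^ w := by rw [← pow_add]; congr 1; omega
    have e2 : q ^ (v - k) = q ^ (v - w) * q ^ (w - k) := by rw [← pow_add]; congr 1; omega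
    rw [e1, e2, ← Nat.mul_sub, ← Nat.mul_sub_one] at hsum
    have hp : 0 < q ^ (v - w) := by positivity
    apply Nat.eq_of_mul_eq_mul_left hp
    linarith
  have hpack : N.card * (q ^ k - 1) ≤ q ^ w - 1 := by
    have hc : ∀ U : Submodule F V, (Finset.univ.filter (fun x => x ∈ U ∧ x ≠ 0)).card
        = q ^ Module.finrank F U - 1 := by
      intro U
      rw [← Module.card_eq_pow_finrank (K := F) (V := U)]
      have : (Finset.univ.filter (fun x => x ∈ U ∧ x ≠ 0))
          = (Finset.univ.filter (fun x => x ∈ U)).erase 0 := by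
        ext x; simp [and_comm]
      rw [this, Finset.card_erase_of_mem (by simp), ← Fintype.card_subtype]
    have h1 : (N.biUnion (fun U => Finset.univ.filter (fun x => x ∈ U ∧ x ≠ 0))).card
        = N.card * (q ^ k - 1) := by
      rw [Finset.card_biUnion, Finset.sum_congr rfl (fun U hU => (hc U).trans (by rw [hk U hU])),
        Finset.sum_const, smul_eq_mul]
      intro U hU U' hU' hne'
      rw [Function.onFun, Finset.disjoint_left]
      intro x hx hx'
      simp at hx hx'
      exact hne' (hdisj U hU U' hU' x hx.2 hx.1 hx'.1)
    rw [← h1, ← hc W]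
    apply Finset.card_le_card
    intro x hx
    simp at hx ⊢
    obtain ⟨U, hU, hxU, hx0⟩ := hx
    exact ⟨hUW U hU hxU, hx0⟩
  obtain ⟨h1, h2, h3⟩ := aux_arith_s14 q k w r N.card hq hk1 hkw hfin hpack
  rw [← h1]
  exact ⟨h2, h3⟩


/-- Heden Theorem 1(ii): if `q^{d_2-d_1} ∤ u_1` and `d_2 ≥ 2d_1`, then either `d_1 ∣ d_2`
and `u_1 = (q^{d_2}-1)/(q^{d_1}-1)`, or `u_1 > 2q^{d_2-d_1}`. Here `d 0 = d_1`, `d 1 = d_2`. -/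
theorem heden_tail_ii
    {F : Type} [Field F] [Fintype F] (q v l : ℕ)
    (hq : q = Fintype.card F) (hl : 2 ≤ l)
    (d u : Fin l → ℕ) (hd : StrictMono d) (hd1 : 1 ≤ d ⟨0, by omega⟩)
    (hu1 : 0 < u ⟨0, by omega⟩) (hu2 : 0 < u ⟨1, by omega⟩)
    (P : Finset (Submodule F (Fin v → F)))
    (hpart : ∀ x : Fin v → F, x ≠ 0 →
      ∃! U : Submodule F (Fin v → F), U ∈ P ∧ x ∈ U)
    (htype : ∀ U ∈ P, ∃ i : Fin l, Module.finrank F ↥U = d i)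
    (hcount : ∀ i : Fin l, u i = Set.ncard
      {U : Submodule F (Fin v → F) | U ∈ P ∧ Module.finrank F ↥U = d i})
    (hndvd : ¬ q ^ (d ⟨1, by omega⟩ - d ⟨0, by omega⟩) ∣ u ⟨0, by omega⟩)
    (hcase : 2 * d ⟨0, by omega⟩ ≤ d ⟨1, by omega⟩) :
    (d ⟨0, by omega⟩ ∣ d ⟨1, by omega⟩ ∧
      u ⟨0, by omega⟩ = (q ^ d ⟨1, by omega⟩ - 1) / (q ^ d ⟨0, by omega⟩ - 1)) ∨
    2 * q ^ (d ⟨1, by omega⟩ - d ⟨0, by omega⟩) < u ⟨0, by omega⟩ := by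
  classical
  generalize_proofs p0 p1 at *
  have h01 : d ⟨0, p0⟩ < d ⟨1, p1⟩ := hd (by simp)
  set k := d ⟨0, p0⟩ with hkd
  set e := d ⟨1, p1⟩ with hed
  set n := u ⟨0, p0⟩ with hnd
  have hge : ∀ U ∈ P, Module.finrank F U = k ∨ e ≤ Module.finrank F U := by
    intro U hU
    obtain ⟨i, hi⟩ := htype U hU
    rcases i with ⟨i, hil⟩
    rcases Nat.eq_zero_or_pos i with h0 | h0
    · left; subst h0; exact hi
    · right; rw [hi]; exact hd.monotone (Fin.mk_le_mk.2 h0)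
  set N := P.filter (fun U : Submodule F (Fin v → F) => Module.finrank F U = k) with hN
  have hnN : n = N.card := by
    rw [hnd, hcount, ← Set.ncard_coe_finset]
    congr 1
    ext U; simp [hN, hkd]
  have hev : e ≤ v := by
    rw [hcount] at hu2
    obtain ⟨U, hU⟩ := Set.nonempty_of_ncard_ne_zero hu2.ne'
    have := Submodule.finrank_le U
    rw [hU.2] at this
    simpa using this
  have hq2 : 2 ≤ q := hq ▸ Fintype.one_lt_card
  by_cases hgt : 2 * q ^ (e - k) < n
  · exact Or.inr hgt
  left
  have hlt : n < 2 * q ^ (e - k) := by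
    rcases Nat.lt_or_ge n (2 * q ^ (e - k)) with h | h
    · exact h
    · exact absurd (Dvd.intro_left 2 (by omega)) hndvd
  have hdvd : ∀ f : Module.Dual F (Fin v → F),
      q ^ (e - k) ∣ (N.filter (fun U => ¬ U ≤ LinearMap.ker f)).card := by
    intro f
    by_cases hf : f = 0
    · subst hf; simp
    have htot := aux_fiber f hf
    have hun : (Finset.univ.filter (fun x => f x = 1)) =
        P.biUnion (fun U => Finset.univ.filter (fun x => x ∈ U ∧ f x = 1)) := by
      ext x
      simp only [Finset.mem_filter, Finset.mem_univ, true_and, Finset.mem_biUnion]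
      constructor
      · intro hx
        have hx0 : x ≠ 0 := by rintro rfl; simp at hx
        obtain ⟨U, hU, -⟩ := hpart x hx0
        exact ⟨U, hU.1, hU.2, hx⟩
      · rintro ⟨U, -, -, hx⟩; exact hx
    rw [hun, Finset.card_biUnion] at htot
    · rw [Finset.sum_congr rfl (fun U _ => aux_fiber_sub f U), ← hq,
        ← Finset.sum_filter_add_sum_filter_not P (fun U : Submodule F (Fin v → F) => Module.finrank F U = k),
        Module.finrank_fin_fun] at htot
      have hA : q ^ (e - 1) ∣ q ^ (v - 1) := pow_dvd_pow q (by omega)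
      have hB : q ^ (e - 1) ∣ ∑ U ∈ P.filter (fun U : Submodule F (Fin v → F) => ¬ Module.finrank F U = k),
          (if U ≤ LinearMap.ker f then 0 else q ^ (Module.finrank F U - 1)) := by
        refine Finset.dvd_sum ?_
        intro U hU
        rw [Finset.mem_filter] at hU
        split_ifs
        · exact dvd_zero _
        · have := (hge U hU.1).resolve_left hU.2
          exact pow_dvd_pow q (by omega)
      rw [← htot] at hA
      have hC := (Nat.dvd_add_left hB).1 hA
      have hD : ∑ U ∈ P.filter (fun U : Submodule F (Fin v → F) => Module.finrank F U = k),
          (if U ≤ LinearMap.ker f then 0 else q ^ (Module.finrank F U - 1))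
          = (N.filter (fun U => ¬ U ≤ LinearMap.ker f)).card * q ^ (k - 1) := by
        rw [← smul_eq_mul, ← Finset.sum_const, Finset.sum_filter (s := N)]
        refine Finset.sum_congr rfl ?_
        intro U hU
        rw [Finset.mem_filter] at hU
        rw [hU.2]
        split_ifs <;> simp_all
      rw [hD] at hC
      have hE : q ^ (e - 1) = q ^ (e - k) * q ^ (k - 1) := by rw [← pow_add]; congr 1; omega
      rw [hE] at hC
      exact Nat.dvd_of_mul_dvd_mul_right (by positivity) hC
    · intro U hU U' hU' hne
      rw [Function.onFun, Finset.disjoint_left]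
      intro x hx hx'
      simp only [Finset.mem_filter, Finset.mem_univ, true_and] at hx hx'
      have hx0 : x ≠ 0 := by
        rintro rfl
        simp at hx
      exact hne ((hpart x hx0).unique ⟨hU, hx.1⟩ ⟨hU', hx'.1⟩)
  have hcore := aux_core N k (e - k) hd1 (by rw [← Finset.card_pos]; omega)
    (fun U hU => (Finset.mem_filter.1 hU).2)
    (fun U hU U' hU' x hx0 hx hx' => (hpart x hx0).unique
      ⟨(Finset.mem_filter.1 hU).1, hx⟩ ⟨(Finset.mem_filter.1 hU').1, hx'⟩)
    (by rw [← hq]; exact hdvd) (by rw [← hq]; omega)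
  rw [← hq, ← hnN, Nat.sub_add_cancel h01.le] at hcore
  refine ⟨hcore.1, ?_⟩
  rw [← hcore.2, Nat.mul_div_cancel]
  have : 1 < q ^ k := Nat.one_lt_pow (by omega) (by omega)
  omega
end

section
/- Let P be a vector space partition of F_q^v of type d_l^{u_l}⋯d_2^{u_2}d_1^{u_1}, where u_1, u_2 > 0 and d_l > ⋯ > d_2 > d_1 ≥ 1. If q^{d_2−d_1} divides u_1 and d_2 < 2d_1, then u_1 ≥ q^{d_2} − q^{d_1} + q^{d_2−d_1}. -/
open Classical in
theorem hd_fiber {F : Type} [Field F] [Fintype F] {W : Type*} [AddCommGroup W] [Module F W]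
    [Fintype W] (g : W →ₗ[F] F) (hg : g ≠ 0) :
    Fintype.card F * (Finset.univ.filter (fun x : W => g x = 1)).card = Fintype.card W := by
  have hs : Function.Surjective g := LinearMap.surjective hg
  have h1 := Finset.card_eq_sum_card_fiberwise (s := (Finset.univ : Finset W))
    (t := (Finset.univ : Finset F)) (f := g) (fun _ _ => Finset.mem_coe.2 (Finset.mem_univ _))
  rw [Finset.card_univ] at h1
  rw [h1]
  have : ∀ a ∈ (Finset.univ : Finset F), (Finset.univ.filter (fun x : W => g x = a)).card
      = (Finset.univ.filter (fun x : W => g x = 1)).card := by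
    intro a _
    exact AddMonoidHom.card_fiber_eq_of_mem_range g.toAddMonoidHom (hs a) (hs 1)
  rw [Finset.sum_congr rfl this]
  simp

open Classical in
theorem hd_card_sub {F : Type} [Field F] [Fintype F] {V : Type} [AddCommGroup V] [Module F V]
    [Fintype V] (φ : Module.Dual F V) (U : Submodule F V) :
    Fintype.card F * (Finset.univ.filter (fun x : V => x ∈ U ∧ φ x = 1)).card =
      if U ≤ LinearMap.ker φ then 0 else Fintype.card F ^ Module.finrank F U := by
  split_ifs with h
  · rw [Nat.mul_eq_zero]
    right
    rw [Finset.card_eq_zero, Finset.filter_eq_empty_iff]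
    rintro x - ⟨hx, h1⟩
    have := h hx
    rw [LinearMap.mem_ker] at this
    rw [this] at h1
    exact zero_ne_one h1
  · have hg : φ.comp U.subtype ≠ 0 := by
      intro h0
      apply h
      intro x hx
      have := LinearMap.congr_fun h0 ⟨x, hx⟩
      simpa using this
    have := hd_fiber (φ.comp U.subtype) hg
    rw [← Module.card_eq_pow_finrank (K := F) (V := U), ← this]
    congr 1
    symm
    apply Finset.card_bij (fun (x : U) _ => (x : V))
    · intro a ha
      exact Finset.mem_filter.2 ⟨Finset.mem_univ _, a.2, (Finset.mem_filter.1 ha).2⟩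
    · intro a _ b _ hab; exact Subtype.ext hab
    · intro b hb
      simp only [Finset.mem_filter, Finset.mem_univ, true_and] at hb
      exact ⟨⟨b, hb.1⟩, Finset.mem_filter.2 ⟨Finset.mem_univ _, hb.2⟩, rfl⟩

open Classical in
theorem hd_ann {F : Type} [Field F] [Fintype F] {V : Type} [AddCommGroup V] [Module F V]
    [Fintype V] [Fintype (Module.Dual F V)] (U : Submodule F V) :
    (Finset.univ.filter (fun φ : Module.Dual F V => U ≤ LinearMap.ker φ)).card =
      Fintype.card F ^ (Module.finrank F V - Module.finrank F U) := by
  have h1 : (Finset.univ.filter (fun φ : Module.Dual F V => U ≤ LinearMap.ker φ)).card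
      = Fintype.card U.dualAnnihilator := by
    rw [Fintype.card_subtype]
    congr 1
    ext φ
    simp [Submodule.mem_dualAnnihilator, SetLike.le_def]
  rw [h1, Module.card_eq_pow_finrank (K := F)]
  congr 1
  have := Subspace.finrank_add_finrank_dualAnnihilator_eq U
  omega

open Classical in
theorem hd_mod {F : Type} [Field F] [Fintype F] {V : Type} [AddCommGroup V] [Module F V]
    [Fintype V] (P : Finset (Submodule F V)) (k r : ℕ)
    (hpart : ∀ x : V, x ≠ 0 → ∃! U : Submodule F V, U ∈ P ∧ x ∈ U)
    (hdim : ∀ U ∈ P, Module.finrank F U = k ∨ k + r ≤ Module.finrank F U)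
    (hv : k + r ≤ Module.finrank F V)
    (hn : Fintype.card F ^ r ∣ (P.filter (fun U : Submodule F V => Module.finrank F U = k)).card)
    (φ : Module.Dual F V) :
    Fintype.card F ^ r ∣
      ((P.filter (fun U : Submodule F V => Module.finrank F U = k)).filter (fun U => U ≤ LinearMap.ker φ)).card := by
  set q := Fintype.card F with hq
  have hq0 : 0 < q := Fintype.card_pos
  set T := P.filter (fun U : Submodule F V => Module.finrank F U = k) with hT
  by_cases hφ : φ = 0
  · subst hφ
    simpa using hn
  have htot : ∑ U ∈ P, q * (Finset.univ.filter (fun x : V => x ∈ U ∧ φ x = 1)).card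
      = q ^ Module.finrank F V := by
    rw [← Finset.mul_sum, ← Module.card_eq_pow_finrank (K := F) (V := V), ← hd_fiber φ hφ]
    congr 1
    rw [← Finset.card_biUnion]
    · congr 1
      ext x
      simp only [Finset.mem_biUnion, Finset.mem_filter, Finset.mem_univ, true_and]
      constructor
      · rintro ⟨U, _, _, h⟩; exact h
      · intro h
        have hx : x ≠ 0 := by rintro rfl; simp at h
        obtain ⟨U, hU, _⟩ := hpart x hx
        exact ⟨U, hU.1, hU.2, h⟩
    · intro U hU W hW hne
      change Disjoint _ _
      rw [Finset.disjoint_left]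
      intro x hx hx'
      simp only [Finset.mem_filter, Finset.mem_univ, true_and] at hx hx'
      have h0 : x ≠ 0 := by rintro rfl; simp at hx
      exact hne ((hpart x h0).unique ⟨hU, hx.1⟩ ⟨hW, hx'.1⟩)
  rw [← Finset.sum_filter_add_sum_filter_not P (fun U : Submodule F V => Module.finrank F U = k), ← hT] at htot
  have h2 : q ^ (k + r) ∣ ∑ U ∈ P.filter (fun U : Submodule F V => ¬ Module.finrank F U = k),
      q * (Finset.univ.filter (fun x : V => x ∈ U ∧ φ x = 1)).card := by
    apply Finset.dvd_sum
    intro U hU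
    rw [Finset.mem_filter] at hU
    rw [hd_card_sub]
    split_ifs
    · exact dvd_zero _
    · exact pow_dvd_pow _ ((hdim U hU.1).resolve_left hU.2)
  have h3 : q ^ (k + r) ∣ ∑ U ∈ T,
      q * (Finset.univ.filter (fun x : V => x ∈ U ∧ φ x = 1)).card := by
    rw [Nat.dvd_add_iff_left h2, htot]
    exact pow_dvd_pow _ hv
  have h4 : ∑ U ∈ T, q * (Finset.univ.filter (fun x : V => x ∈ U ∧ φ x = 1)).card
      = q ^ k * (T.filter (fun U => ¬ U ≤ LinearMap.ker φ)).card := by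
    rw [Finset.card_filter, Finset.mul_sum]
    apply Finset.sum_congr rfl
    intro U hU
    rw [hT, Finset.mem_filter] at hU
    rw [hd_card_sub, hU.2]
    split_ifs <;> simp [hq]
  rw [h4, pow_add] at h3
  have h5 := Nat.dvd_of_mul_dvd_mul_left (pow_pos hq0 k) h3
  have h6 := Finset.card_filter_add_card_filter_not (s := T) (fun U => U ≤ LinearMap.ker φ)
  rw [Nat.dvd_add_iff_left h5, h6]
  exact hn

open Classical in
theorem hd_main {F : Type} [Field F] [Fintype F] {V : Type} [AddCommGroup V] [Module F V]
    [Fintype V] (T : Finset (Submodule F V)) (k r : ℕ) (hr : 1 ≤ r) (hrk : r ≤ k)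
    (hk : ∀ U ∈ T, Module.finrank F U = k)
    (hdisj : ∀ U ∈ T, ∀ W ∈ T, U ≠ W → U ⊓ W = ⊥)
    (hpos : 0 < T.card)
    (hn : Fintype.card F ^ r ∣ T.card)
    (hm : ∀ φ : Module.Dual F V, Fintype.card F ^ r ∣
      (T.filter (fun U => U ≤ LinearMap.ker φ)).card) :
    Fintype.card F ^ (k + r) - Fintype.card F ^ k + Fintype.card F ^ r ≤ T.card := by
  have : Finite (Module.Dual F V) := Module.finite_of_finite F
  have := Fintype.ofFinite (Module.Dual F V)
  set q := Fintype.card F with hq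
  have hq2 : 2 ≤ q := Fintype.one_lt_card
  set v := Module.finrank F V with hv
  set n := T.card with hnd
  have hy2 : 2 ≤ q ^ r := le_trans hq2 (Nat.le_self_pow (by omega) q)
  have hny : q ^ r ≤ n := Nat.le_of_dvd hpos hn
  have hsup : ∀ U ∈ T, ∀ W ∈ T, U ≠ W → Module.finrank F (U ⊔ W : Submodule F V) = 2 * k := by
    intro U hU W hW hne
    have := Submodule.finrank_sup_add_finrank_inf_eq U W
    rw [hdisj U hU W hW hne, finrank_bot, hk U hU, hk W hW] at this
    omega
  have hv2 : 2 * k ≤ v := by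
    obtain ⟨U, hU, W, hW, hne⟩ := Finset.one_lt_card.1 (show 1 < T.card by omega)
    rw [← hsup U hU W hW hne]
    exact Submodule.finrank_le _
  obtain ⟨w, hw⟩ := Nat.exists_eq_add_of_le hv2
  set h : Module.Dual F V → ℤ := fun φ =>
    ∑ U ∈ T, if U ≤ LinearMap.ker φ then (1 : ℤ) else 0 with hh
  have hhc : ∀ φ, h φ = ((T.filter (fun U => U ≤ LinearMap.ker φ)).card : ℤ) := by
    intro φ
    simp [hh]
  have hann : ∀ U : Submodule F V, (∑ φ : Module.Dual F V,
      if U ≤ LinearMap.ker φ then (1 : ℤ) else 0) = (q : ℤ) ^ (v - Module.finrank F U) := by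
    intro U
    have := hd_ann U
    rw [Finset.sum_boole, this]
    push_cast
    rfl
  have s1 : ∑ φ, h φ = n * (q : ℤ) ^ (k + w) := by
    simp only [hh]
    rw [Finset.sum_comm]
    rw [Finset.sum_congr rfl (g := fun _ => (q : ℤ) ^ (k + w))]
    · simp [hnd]
    · intro U hU
      rw [hann, hk U hU]
      congr 1
      omega
  have s2 : ∑ φ, h φ * h φ = n * ((q : ℤ) ^ (k + w) + (n - 1) * (q : ℤ) ^ w) := by
    have e : ∀ φ, h φ * h φ = ∑ U ∈ T, ∑ W ∈ T,
        if U ⊔ W ≤ LinearMap.ker φ then (1 : ℤ) else 0 := by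
      intro φ
      simp only [hh]
      rw [Finset.sum_mul_sum]
      refine Finset.sum_congr rfl fun U _ => Finset.sum_congr rfl fun W _ => ?_
      by_cases h1 : U ≤ LinearMap.ker φ <;> by_cases h2 : W ≤ LinearMap.ker φ <;>
        simp [h1, h2]
    simp only [e]
    rw [Finset.sum_comm]
    rw [Finset.sum_congr rfl (g := fun _ => (q : ℤ) ^ (k + w) + (n - 1) * (q : ℤ) ^ w)]
    · simp [hnd]
    · intro U hU
      rw [Finset.sum_comm, ← Finset.add_sum_erase T _ hU]
      congr 1
      · rw [hann, sup_idem, hk U hU]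
        congr 1
        omega
      · rw [Finset.sum_congr rfl (g := fun _ => (q : ℤ) ^ w)]
        · rw [Finset.sum_const, Finset.card_erase_of_mem hU, nsmul_eq_mul,
            Nat.cast_sub (by omega)]
          simp [hnd]
        · intro W hW
          rw [Finset.mem_erase] at hW
          rw [hann, hsup U hU W hW.2 (Ne.symm hW.1)]
          congr 1
          omega
  have hnn : 0 ≤ ∑ φ, (h φ * h φ - (q : ℤ) ^ r * h φ) := by
    apply Finset.sum_nonneg
    intro φ _
    rw [hhc φ]
    obtain ⟨c, hc⟩ := hm φ
    rw [hc]
    push_cast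
    rcases Nat.eq_zero_or_pos c with rfl | hc0
    · simp
    · have : (1 : ℤ) ≤ c := by exact_mod_cast hc0
      have h2 : (0 : ℤ) ≤ (q : ℤ) ^ r := by positivity
      have h3 : (0 : ℤ) ≤ (q : ℤ) ^ r * (q : ℤ) ^ r * c * (c - 1) :=
        mul_nonneg (by positivity) (by linarith)
      linarith
  rw [Finset.sum_sub_distrib, ← Finset.mul_sum, s1, s2] at hnn
  have hn0 : (0 : ℤ) < n * (q : ℤ) ^ w := by
    have : 0 < q := by omega
    positivity
  have key : (0 : ℤ) ≤ (n * (q : ℤ) ^ w) * ((q : ℤ) ^ k + (n - 1) - (q : ℤ) ^ r * (q : ℤ) ^ k) := by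
    rw [pow_add] at hnn
    linarith
  have key2 := nonneg_of_mul_nonneg_right key hn0
  obtain ⟨m, hm⟩ := hn
  obtain ⟨s, rfl⟩ := Nat.exists_eq_add_of_le hrk
  have hle : q ^ (r + s) ≤ q ^ (r + s + r) := Nat.pow_le_pow_right (by omega) (by omega)
  have key3 : q ^ (r + s + r) < n + q ^ (r + s) := by
    zify
    rw [pow_add _ (r + s) r]
    linarith
  have e1 : q ^ (r + s + r) = q ^ r * q ^ (s + r) := by ring
  have e2 : q ^ (r + s) = q ^ r * q ^ s := by ring
  have key4 : q ^ (s + r) < m + q ^ s := by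
    rw [e1, e2, hm, ← mul_add] at key3
    exact Nat.lt_of_mul_lt_mul_left key3
  have key5 : q ^ r * (q ^ (s + r) + 1) ≤ q ^ r * (m + q ^ s) := Nat.mul_le_mul_left _ key4
  rw [mul_add, mul_add, ← e1, ← e2, ← hm] at key5
  omega

/-- Heden Theorem 1(iii): if `q^{d_2-d_1} ∣ u_1` and `d_2 < 2d_1`, then
`u_1 ≥ q^{d_2} - q^{d_1} + q^{d_2-d_1}`. Here `d 0 = d_1`, `d 1 = d_2`. -/
theorem heden_tail_iii
    {F : Type} [Field F] [Fintype F] (q v l : ℕ)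
    (hq : q = Fintype.card F) (hl : 2 ≤ l)
    (d u : Fin l → ℕ) (hd : StrictMono d) (hd1 : 1 ≤ d ⟨0, by omega⟩)
    (hu1 : 0 < u ⟨0, by omega⟩) (hu2 : 0 < u ⟨1, by omega⟩)
    (P : Finset (Submodule F (Fin v → F)))
    (hpart : ∀ x : Fin v → F, x ≠ 0 →
      ∃! U : Submodule F (Fin v → F), U ∈ P ∧ x ∈ U)
    (htype : ∀ U ∈ P, ∃ i : Fin l, Module.finrank F ↥U = d i)
    (hcount : ∀ i : Fin l, u i = Set.ncard
      {U : Submodule F (Fin v → F) | U ∈ P ∧ Module.finrank F ↥U = d i})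
    (hdvd : q ^ (d ⟨1, by omega⟩ - d ⟨0, by omega⟩) ∣ u ⟨0, by omega⟩)
    (hcase : d ⟨1, by omega⟩ < 2 * d ⟨0, by omega⟩) :
    q ^ d ⟨1, by omega⟩ - q ^ d ⟨0, by omega⟩ + q ^ (d ⟨1, by omega⟩ - d ⟨0, by omega⟩)
      ≤ u ⟨0, by omega⟩ := by
  classical
  subst hq
  set i0 : Fin l := ⟨0, by omega⟩ with hi0
  set i1 : Fin l := ⟨1, by omega⟩ with hi1
  have h01 : d i0 < d i1 := hd (by simp [hi0, hi1, Fin.lt_def])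
  obtain ⟨r, hr⟩ := Nat.exists_eq_add_of_lt h01
  have hsub : d i1 - d i0 = r + 1 := by omega
  have hcnt : u i0 = (P.filter (fun U : Submodule F (Fin v → F) => Module.finrank F U = d i0)).card := by
    rw [hcount i0, ← Set.ncard_coe_finset]
    congr 1
    ext U
    simp
  have hv : d i0 + (r + 1) ≤ Module.finrank F (Fin v → F) := by
    rw [hcount i1] at hu2
    obtain ⟨U, hU⟩ := Set.nonempty_of_ncard_ne_zero hu2.ne'
    have := Submodule.finrank_le U
    have := hU.2
    omega
  rw [hsub] at hdvd ⊢
  have hdim : ∀ U ∈ P, Module.finrank F U = d i0 ∨ d i0 + (r + 1) ≤ Module.finrank F U := by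
    intro U hU
    obtain ⟨i, hi⟩ := htype U hU
    by_cases h : i = i0
    · left; rw [hi, h]
    · right
      have : i1 ≤ i := by
        rw [Fin.le_def]
        have : i.val ≠ 0 := fun h' => h (Fin.ext h')
        change 1 ≤ i.val
        omega
      have := hd.monotone this
      omega
  have hdd : d i1 = d i0 + (r + 1) := by omega
  rw [hcnt] at hdvd hu1 ⊢
  rw [hdd]
  refine hd_main _ (d i0) (r + 1) (by omega) (by omega) ?_ ?_ hu1 hdvd
    (hd_mod P (d i0) (r + 1) hpart hdim hv hdvd)
  · intro U hU
    exact (Finset.mem_filter.1 hU).2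
  · intro U hU W hW hne
    rw [Submodule.eq_bot_iff]
    intro x hx
    by_contra h0
    exact hne ((hpart x h0).unique ⟨(Finset.mem_filter.1 hU).1, hx.1⟩
      ⟨(Finset.mem_filter.1 hW).1, hx.2⟩)
end

section
/- Let P be a vector space partition of F_q^v of type d_l^{u_l}⋯d_2^{u_2}d_1^{u_1}, where u_1, u_2 > 0 and d_l > ⋯ > d_2 > d_1 ≥ 1. If q^{d_2−d_1} divides u_1 and d_2 ≥ 2d_1, then u_1 ≥ q^{d_2}. -/
open Module in
lemma htail_fiber {F W : Type*} [Field F] [Fintype F] [AddCommGroup W] [Module F W]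
    [FiniteDimensional F W] (f : Dual F W) (hf : f ≠ 0) :
    Nat.card {x : W // f x = 1} = (Fintype.card F) ^ (finrank F W - 1) := by
  obtain ⟨x0, hx0⟩ : ∃ x, f x = 1 := LinearMap.surjective hf 1
  have e : {x : W // f x = 1} ≃ LinearMap.ker f :=
    { toFun := fun x => ⟨x.1 - x0, by simp [x.2, hx0]⟩
      invFun := fun x => ⟨x.1 + x0, by
        have := x.2
        rw [LinearMap.mem_ker] at this
        simp [this, hx0]⟩
      left_inv := fun x => by simp
      right_inv := fun x => by simp }
  rw [Nat.card_congr e, Module.natCard_eq_pow_finrank (K := F), Nat.card_eq_fintype_card]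
  congr 1
  have h1 := LinearMap.finrank_range_add_finrank_ker f
  have h2 : finrank F (LinearMap.range f) = 1 := by
    rw [LinearMap.range_eq_top.2 (LinearMap.surjective hf)]; simp
  omega

open Module in
lemma htail_ann {F V : Type*} [Field F] [Fintype F] [AddCommGroup V] [Module F V]
    [FiniteDimensional F V] (U : Submodule F V) :
    Nat.card {f : Dual F V // U ≤ LinearMap.ker f} =
      (Fintype.card F) ^ (finrank F V - finrank F U) := by
  have e : {f : Dual F V // U ≤ LinearMap.ker f} ≃ U.dualAnnihilator :=
    Equiv.subtypeEquivRight (fun f => by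
      rw [Submodule.mem_dualAnnihilator]; rfl)
  rw [Nat.card_congr e, Module.natCard_eq_pow_finrank (K := F), Nat.card_eq_fintype_card]
  congr 1
  have := Subspace.finrank_add_finrank_dualAnnihilator_eq U
  omega

open Module in
lemma htail_fiberU {F V : Type*} [Field F] [Fintype F] [AddCommGroup V] [Module F V]
    [FiniteDimensional F V] (U : Submodule F V) (f : Dual F V) (h : ¬ U ≤ LinearMap.ker f) :
    Nat.card {x : V // x ∈ U ∧ f x = 1} = (Fintype.card F) ^ (finrank F U - 1) := by
  rw [← htail_fiber (f.comp U.subtype)]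
  · exact Nat.card_congr (Equiv.subtypeSubtypeEquivSubtypeInter (fun x => x ∈ U) (fun x => f x = 1)).symm
  · intro h0
    apply h
    intro x hx
    exact LinearMap.congr_fun h0 ⟨x, hx⟩

open Module in
lemma htail_dvd {F V : Type*} [Field F] [Fintype F] [AddCommGroup V] [Module F V]
    [FiniteDimensional F V] [DecidableEq (Submodule F V)] (P : Finset (Submodule F V)) (a b : ℕ) (ha : 1 ≤ a) (hab : a ≤ b)
    (hpart : ∀ x : V, x ≠ 0 → ∃! U : Submodule F V, U ∈ P ∧ x ∈ U)
    (hP : ∀ U ∈ P, finrank F U = a ∨ b ≤ finrank F U) (hb : b ≤ finrank F V) 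
    (f : Dual F V) (hf : f ≠ 0) [DecidablePred fun U : Submodule F V => U ≤ LinearMap.ker f] :
    (Fintype.card F) ^ (b - a) ∣
      ((P.filter (fun U : Submodule F V => finrank F U = a)).filter (fun U => ¬ U ≤ LinearMap.ker f)).card := by
  classical
  have : Finite V := Module.finite_of_finite F
  have := Fintype.ofFinite V
  set q := Fintype.card F with hq
  have hq0 : 0 < q := Fintype.card_pos
  let c : Submodule F V → ℕ := fun U => (Finset.univ.filter (fun x : V => x ∈ U ∧ f x = 1)).card
  have hc : ∀ U, c U = if U ≤ LinearMap.ker f then 0 else q ^ (finrank F U - 1) := by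
    intro U
    split_ifs with h
    · simp only [c, Finset.card_eq_zero, Finset.filter_eq_empty_iff]
      rintro x - ⟨hx, hx1⟩
      have : f x = 0 := h hx
      simp [this] at hx1
    · rw [← htail_fiberU U f h, Nat.card_eq_fintype_card, Fintype.card_subtype]
  have hsum : ∑ U ∈ P, c U = q ^ (finrank F V - 1) := by
    rw [← htail_fiber f hf, Nat.card_eq_fintype_card, Fintype.card_subtype, ← Finset.card_biUnion]
    · congr 1
      ext x
      simp only [Finset.mem_biUnion, Finset.mem_filter, Finset.mem_univ, true_and]
      constructor
      · rintro ⟨U, _, _, h⟩; exact h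
      · intro h
        obtain ⟨U, ⟨h1, h2⟩, _⟩ := hpart x (by rintro rfl; simp at h)
        exact ⟨U, h1, h2, h⟩
    · intro U hU W hW hne
      rw [Function.onFun, Finset.disjoint_left]
      intro x hx hx'
      simp only [Finset.mem_filter, Finset.mem_univ, true_and] at hx hx'
      exact hne ((hpart x (by rintro rfl; simp at hx)).unique ⟨hU, hx.1⟩ ⟨hW, hx'.1⟩)
  rw [← Finset.sum_filter_add_sum_filter_not P (fun U : Submodule F V => finrank F U = a)] at hsum
  have h2 : q ^ (b - 1) ∣ ∑ U ∈ P.filter (fun U : Submodule F V => ¬ finrank F U = a), c U := by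
    apply Finset.dvd_sum
    intro U hU
    rw [Finset.mem_filter] at hU
    rw [hc]
    split_ifs
    · simp
    · apply pow_dvd_pow
      have := hP U hU.1
      omega
  have h1 : ∑ U ∈ P.filter (fun U : Submodule F V => finrank F U = a), c U = 
     ((P.filter (fun U : Submodule F V => finrank F U = a)).filter (fun U => ¬ U ≤ LinearMap.ker f)).card * q ^ (a - 1) := by
    rw [← smul_eq_mul, ← Finset.sum_const, Finset.sum_filter _ (s := P.filter _)]
    apply Finset.sum_congr rfl
    intro U hU
    rw [Finset.mem_filter] at hU
    rw [hc, hU.2]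
    split_ifs <;> rfl
  have h3 : q ^ (b - 1) ∣ q ^ (finrank F V - 1) := pow_dvd_pow _ (by omega)
  rw [← hsum, Nat.dvd_add_left h2, h1, show b - 1 = (b - a) + (a - 1) by omega, pow_add] at h3
  exact Nat.dvd_of_mul_dvd_mul_right (pow_pos hq0 _) h3

open Module in
lemma htail_main {F V : Type*} [Field F] [Fintype F] [AddCommGroup V] [Module F V]
    [FiniteDimensional F V] [DecidableEq (Submodule F V)] (P : Finset (Submodule F V)) (a b : ℕ) (ha : 1 ≤ a) (hab : 2 * a ≤ b)
    (hpart : ∀ x : V, x ≠ 0 → ∃! U : Submodule F V, U ∈ P ∧ x ∈ U)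
    (hP : ∀ U ∈ P, finrank F U = a ∨ b ≤ finrank F U) (hb : b ≤ finrank F V)
    (hn : 0 < (P.filter (fun U : Submodule F V => finrank F U = a)).card)
    (hdvd : (Fintype.card F) ^ (b - a) ∣ (P.filter (fun U : Submodule F V => finrank F U = a)).card) :
    (Fintype.card F) ^ b ≤ (P.filter (fun U : Submodule F V => finrank F U = a)).card := by
  classical
  have : Finite V := Module.finite_of_finite F
  have : Finite (Dual F V) := Module.finite_of_finite F
  have := Fintype.ofFinite (Dual F V)
  set q := Fintype.card F with hq
  have hq0 : 0 < q := Fintype.card_pos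
  set Q := P.filter (fun U : Submodule F V => finrank F U = a) with hQ
  set n := Q.card with hnn
  set y := q ^ (b - a) with hy
  let A : Dual F V → ℕ := fun f => (Q.filter (fun U => U ≤ LinearMap.ker f)).card
  have hA : ∀ f, y ∣ A f := by
    intro f
    have h0 := Finset.card_filter_add_card_filter_not (s := Q) (fun U => U ≤ LinearMap.ker f)
    by_cases hf : f = 0
    · subst hf
      have : A 0 = n := by simp [A, n]
      rw [this]; exact hdvd
    · have h1 := htail_dvd P a b ha (by omega) hpart hP hb f hf
      exact (Nat.dvd_add_left h1).1 (h0 ▸ hdvd)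
  have hA2 : ∀ f, y * A f ≤ A f * A f := by
    intro f
    rcases Nat.eq_zero_or_pos (A f) with h | h
    · simp [h]
    · exact Nat.mul_le_mul_right _ (Nat.le_of_dvd h (hA f))
  obtain ⟨m, hm⟩ : ∃ m, finrank F V = m + 2 * a := ⟨finrank F V - 2 * a, by omega⟩
  have key : ∀ U : Submodule F V, ∑ f : Dual F V, (if U ≤ LinearMap.ker f then 1 else 0) = q ^ (finrank F V - finrank F U) := by
    intro U
    rw [← htail_ann U, Nat.card_eq_fintype_card, Fintype.card_subtype, Finset.card_filter]
  have hAf : ∀ f, A f = ∑ U ∈ Q, (if U ≤ LinearMap.ker f then 1 else 0) := by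
    intro f; simp only [A]; rw [Finset.card_filter]
  have hdim : ∀ U ∈ Q, finrank F U = a := fun U hU => (Finset.mem_filter.1 hU).2
  have S1 : ∑ f, A f = n * q ^ (m + a) := by
    simp_rw [hAf]
    rw [Finset.sum_comm, ← smul_eq_mul, hnn, ← Finset.sum_const]
    apply Finset.sum_congr rfl
    intro U hU
    rw [key, hdim U hU, hm]
    congr 1; omega
  have S2 : ∑ f, A f * A f = n * (q ^ (m + a) + (n - 1) * q ^ m) := by
    simp_rw [hAf, Finset.sum_mul_sum]
    rw [Finset.sum_comm, ← smul_eq_mul n, hnn, ← Finset.sum_const]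
    apply Finset.sum_congr rfl
    intro U hU
    rw [Finset.sum_comm, ← Finset.add_sum_erase _ _ hU]
    congr 1
    · simp only [mul_ite, mul_one, mul_zero, ite_self]
      have := key U
      rw [hdim U hU, hm, show m + 2 * a - a = m + a by omega] at this
      rw [← this]
      apply Finset.sum_congr rfl
      intro f _
      split_ifs <;> rfl
    · rw [← Finset.card_erase_of_mem hU, ← smul_eq_mul, ← Finset.sum_const]
      apply Finset.sum_congr rfl
      intro W hW
      rw [Finset.mem_erase] at hW
      have hd : U ⊓ W = ⊥ := by
        rw [eq_bot_iff]
        rintro x ⟨hx, hx'⟩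
        by_contra h
        exact hW.1 ((hpart x h).unique ⟨(Finset.mem_filter.1 hW.2).1, hx'⟩ ⟨(Finset.mem_filter.1 hU).1, hx⟩)
      have h1 := Submodule.finrank_sup_add_finrank_inf_eq U W
      rw [hd, finrank_bot, hdim U hU, hdim W hW.2] at h1
      have := key (U ⊔ W)
      rw [show finrank F V - finrank F ↥(U ⊔ W) = m by omega] at this
      rw [← this]
      apply Finset.sum_congr rfl
      intro f _
      simp only [sup_le_iff]
      split_ifs <;> simp_all
  have S3 : y * (n * q ^ (m + a)) ≤ n * (q ^ (m + a) + (n - 1) * q ^ m) := by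
    rw [← S1, ← S2, Finset.mul_sum]
    exact Finset.sum_le_sum fun f _ => hA2 f
  have S4 : y * q ^ a ≤ q ^ a + (n - 1) := by
    have : (n * q ^ m) * (y * q ^ a) ≤ (n * q ^ m) * (q ^ a + (n - 1)) := by
      rw [pow_add] at S3
      linarith
    exact Nat.le_of_mul_le_mul_left this (Nat.mul_pos hn (pow_pos hq0 _))
  have hya : q ^ a ≤ y := Nat.pow_le_pow_right hq0 (by omega)
  have hb' : q ^ b = y * q ^ a := by rw [hy, ← pow_add]; congr 1; omega
  rw [hb']
  obtain ⟨c, hc⟩ := hdvd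
  rw [hc]
  apply Nat.mul_le_mul_left
  by_contra! hlt
  have : y * (c + 1) ≤ y * q ^ a := Nat.mul_le_mul_left _ hlt
  rw [mul_add, ← hc] at this
  omega


/-- Heden Theorem 1(iv): if `q^{d_2-d_1} ∣ u_1` and `d_2 ≥ 2d_1`, then `u_1 ≥ q^{d_2}`.
Here `d 0 = d_1`, `d 1 = d_2`. -/
theorem heden_tail_iv
    {F : Type} [Field F] [Fintype F] (q v l : ℕ)
    (hq : q = Fintype.card F) (hl : 2 ≤ l)
    (d u : Fin l → ℕ) (hd : StrictMono d) (hd1 : 1 ≤ d ⟨0, by omega⟩)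
    (hu1 : 0 < u ⟨0, by omega⟩) (hu2 : 0 < u ⟨1, by omega⟩)
    (P : Finset (Submodule F (Fin v → F)))
    (hpart : ∀ x : Fin v → F, x ≠ 0 →
      ∃! U : Submodule F (Fin v → F), U ∈ P ∧ x ∈ U)
    (htype : ∀ U ∈ P, ∃ i : Fin l, Module.finrank F ↥U = d i)
    (hcount : ∀ i : Fin l, u i = Set.ncard
      {U : Submodule F (Fin v → F) | U ∈ P ∧ Module.finrank F ↥U = d i})
    (hdvd : q ^ (d ⟨1, by omega⟩ - d ⟨0, by omega⟩) ∣ u ⟨0, by omega⟩)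
    (hcase : 2 * d ⟨0, by omega⟩ ≤ d ⟨1, by omega⟩) :
    q ^ d ⟨1, by omega⟩ ≤ u ⟨0, by omega⟩ := by
  classical
  have hc : ∀ i, u i = (P.filter (fun U : Submodule F (Fin v → F) => Module.finrank F U = d i)).card := by
    intro i
    rw [hcount, ← Set.ncard_coe_finset]
    congr 1
    ext U
    simp
  have hb : d ⟨1, by omega⟩ ≤ Module.finrank F (Fin v → F) := by
    rw [hc, Finset.card_pos] at hu2
    obtain ⟨U, hU⟩ := hu2
    rw [← (Finset.mem_filter.1 hU).2]
    exact Submodule.finrank_le U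
  rw [hc, hq] at hdvd
  rw [hc] at hu1
  rw [hc, hq]
  refine htail_main P _ _ hd1 hcase hpart ?_ hb hu1 hdvd
  intro U hU
  obtain ⟨i, hi⟩ := htype U hU
  rw [hi]
  by_cases h : i = ⟨0, by omega⟩
  · left; rw [h]
  · right
    apply hd.monotone
    rw [Fin.le_def]
    have : i.1 ≠ 0 := fun h' => h (Fin.ext h')
    show 1 ≤ i.1
    omega
end
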